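/- arXiv:2207.08874 — 2 statements merged into one kernel-verified Lean document; each statement's English description precedes it below -/
import Mathlib

section
/- Assume the abc-conjecture. Then there exist absolute constants c > 0 and C > 0 such that for all real x ≥ 1 and all real y with 1 ≤ y ≤ x, the number of squarefull integers in the interval (x, x + y] satisfies Q_2(x + y) − Q_2(x) ≤ C · y / (log(y + 1))^{1+c}. -/
/-- A positive integer `n` is squarefull if every prime dividing `n` does so to at
least the second power. -/
def IsSquarefull (n : ℕ) : Prop := ∀ p : ℕ, p.Prime → p ∣ n → p ^ 2 ∣ n

/-- The radical (kernel) of a natural number: the product of its prime divisors. -/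
def natRadical (n : ℕ) : ℕ := ∏ p ∈ n.primeFactors, p

/-- The abc-conjecture: for every `ε > 0` there is `C_ε > 0` such that for all
coprime positive integers `a`, `b`, `c` with `a + b = c`, one has
`c ≤ C_ε · rad(a·b·c)^(1+ε)`. -/
def ABCConjecture : Prop :=
  ∀ ε : ℝ, 0 < ε → ∃ Cε : ℝ, 0 < Cε ∧ ∀ a b c : ℕ,
    0 < a → 0 < b → 0 < c → Nat.Coprime a b → a + b = c →
    (c : ℝ) ≤ Cε * (natRadical (a * b * c) : ℝ) ^ (1 + ε)

set_option linter.all false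
namespace KM
open Finset
variable {G : Type*} [AddCommGroup G] [Fintype G] [DecidableEq G]

/-- indicator function -/
noncomputable def ind (A : Finset G) (x : G) : ℝ := if x ∈ A then 1 else 0

/-- convolution -/
noncomputable def cv (f : G → ℝ) (w : G) : ℝ := ∑ a, f a * f (w - a)

/-- autocorrelation -/
noncomputable def dc (f : G → ℝ) (w : G) : ℝ := ∑ a, f (a + w) * f a

lemma dc_sub (f : G → ℝ) (x y : G) : dc f (x - y) = ∑ a, f (a + x) * f (a + y) := by
  unfold dc
  rw [← Equiv.sum_comp (Equiv.addRight y)]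
  apply Finset.sum_congr rfl
  intro a _
  simp only [Equiv.coe_addRight]
  congr 2
  abel

lemma cv_sub (f : G → ℝ) (x y t : G) :
    cv f (x - y + t) = ∑ a, f (a + x) * f (t - a - y) := by
  unfold cv
  rw [← Equiv.sum_comp (Equiv.addRight x)]
  apply Finset.sum_congr rfl
  intro a _
  simp only [Equiv.coe_addRight]
  congr 2
  abel

/-- the basic sums of products -/
noncomputable def U (f : G → ℝ) (D : Finset G) {p : ℕ} (s : Fin p → G) : ℝ :=
  ∑ x ∈ D, ∏ i, f (s i + x)

lemma swap3 {α β M : Type*} [AddCommMonoid M] [Fintype β] (D : Finset α) (F : α → α → β → M) :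
    ∑ x ∈ D, ∑ y ∈ D, ∑ s, F x y s = ∑ s, ∑ x ∈ D, ∑ y ∈ D, F x y s := by
  rw [Finset.sum_comm (s := univ)]
  refine Finset.sum_congr rfl fun x _ => ?_
  rw [Finset.sum_comm]

lemma sum_dc_pow (f : G → ℝ) (D : Finset G) (p : ℕ) :
    ∑ x ∈ D, ∑ y ∈ D, (dc f (x - y)) ^ p = ∑ s : Fin p → G, (U f D s) ^ 2 := by
  have h : ∀ x y : G, (dc f (x - y)) ^ p
      = ∑ s : Fin p → G, (∏ i, f (s i + x)) * ∏ i, f (s i + y) := by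
    intro x y
    rw [dc_sub, Fintype.sum_pow]
    simp_rw [Finset.prod_mul_distrib]
  simp_rw [h]
  have : ∀ s : Fin p → G, (U f D s) ^ 2
      = ∑ x ∈ D, ∑ y ∈ D, (∏ i, f (s i + x)) * ∏ i, f (s i + y) := by
    intro s
    rw [sq, U, Finset.sum_mul_sum]
  simp_rw [this]
  exact swap3 D _

lemma sum_cv_pow_le (f : G → ℝ) (D : Finset G) (hD : ∀ x ∈ D, -x ∈ D) (p : ℕ) (t : G) :
    ∑ x ∈ D, ∑ y ∈ D, (cv f (x - y + t)) ^ p ≤ ∑ x ∈ D, ∑ y ∈ D, (dc f (x - y)) ^ p := by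
  have h : ∀ x y : G, (cv f (x - y + t)) ^ p
      = ∑ s : Fin p → G, (∏ i, f (s i + x)) * ∏ i, f (t - s i - y) := by
    intro x y
    rw [cv_sub, Fintype.sum_pow]
    simp_rw [Finset.prod_mul_distrib]
  have hV : ∀ s : Fin p → G, ∑ y ∈ D, ∏ i, f (t - s i - y) = U f D (fun i => t - s i) := by
    intro s
    unfold U
    refine Finset.sum_nbij' (fun y => -y) (fun y => -y) (fun y hy => hD y hy)
      (fun y hy => hD y hy) (by simp) (by simp) ?_
    intro y _
    simp [sub_eq_add_neg]
  have h2 : ∑ x ∈ D, ∑ y ∈ D, (cv f (x - y + t)) ^ p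
      = ∑ s : Fin p → G, U f D s * U f D (fun i => t - s i) := by
    simp_rw [h, ← hV, U, Finset.sum_mul_sum]
    exact swap3 D _
  have h3 : ∑ s : Fin p → G, (U f D (fun i => t - s i)) ^ 2 = ∑ s : Fin p → G, (U f D s) ^ 2 := by
    have := Equiv.sum_comp (Equiv.piCongrRight fun _ : Fin p => Equiv.subLeft t)
      (fun s : Fin p → G => (U f D s) ^ 2)
    rw [← this]
    rfl
  rw [h2, sum_dc_pow]
  have : ∀ s : Fin p → G, U f D s * U f D (fun i => t - s i)
      ≤ ((U f D s) ^ 2 + (U f D (fun i => t - s i)) ^ 2) / 2 := by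
    intro s; nlinarith [sq_nonneg (U f D s - U f D (fun i => t - s i))]
  calc _ ≤ ∑ s : Fin p → G, ((U f D s) ^ 2 + (U f D (fun i => t - s i)) ^ 2) / 2 :=
        Finset.sum_le_sum fun s _ => this s
    _ = _ := by rw [← Finset.sum_div, Finset.sum_add_distrib, h3]; ring

lemma unbalance {Ω : Type*} (S : Finset Ω) (g R : Ω → ℝ) (p : ℕ) (hp : Even p) (hp3 : 3 ≤ p)
    (h8 : 4 * (0.8 : ℝ) ^ p ≤ 0.9 ^ p)
    (hR0 : ∀ w ∈ S, 0 ≤ R w) (hR : ∀ w ∈ S, g w + 0.98 ≤ R w)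
    (h1 : 0 ≤ ∑ w ∈ S, g w ^ (p + 1)) (h2 : (0.9 : ℝ) ^ p * #S ≤ ∑ w ∈ S, g w ^ p) :
    (1.5 : ℝ) ^ (2 * (p + 1)) * #S ≤ ∑ w ∈ S, R w ^ (2 * (p + 1)) := by
  have hodd : Odd (p + 1) := hp.add_one
  have hpt : ∀ w ∈ S, (1.9 : ℝ) ^ (2 * (p + 1)) * ((g w ^ (p + 1) + |g w| ^ (p + 1)) / 2)
      ≤ R w ^ (2 * (p + 1)) := by
    intro w hw
    rcases le_or_gt (g w) 0 with h | h
    · have : g w ^ (p + 1) + |g w| ^ (p + 1) = 0 := by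
        rw [abs_of_nonpos h, hodd.neg_pow]; ring
      rw [this]
      have := pow_nonneg (hR0 w hw) (2 * (p + 1))
      simpa using this
    · rw [abs_of_pos h]
      have hh : (1.9 : ℝ) ^ 2 * g w ≤ (R w) ^ 2 := by
        have := hR w hw
        have h2 : (g w + 0.98) ^ 2 ≤ R w ^ 2 := by
          apply pow_le_pow_left₀ _ this; linarith
        nlinarith [sq_nonneg (g w - 0.98)]
      calc _ = ((1.9 : ℝ) ^ 2 * g w) ^ (p + 1) := by rw [mul_pow, ← pow_mul]; ring
        _ ≤ ((R w) ^ 2) ^ (p + 1) := by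
          apply pow_le_pow_left₀ _ hh; positivity
        _ = _ := by rw [← pow_mul]
  have hab : ∀ w ∈ S, 0.8 * (g w ^ p - 0.8 ^ p) ≤ |g w| ^ (p + 1) := by
    intro w hw
    have e : g w ^ p = |g w| ^ p := (hp.pow_abs _).symm
    rw [e]
    rcases le_or_gt (0.8 : ℝ) |g w| with h | h
    · have : 0 ≤ |g w| ^ p := by positivity
      have : (0:ℝ) ≤ 0.8 ^ p := by positivity
      rw [pow_succ]; nlinarith
    · have : |g w| ^ p ≤ 0.8 ^ p := pow_le_pow_left₀ (abs_nonneg _) h.le _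
      have : 0 ≤ |g w| ^ (p + 1) := by positivity
      linarith
  have s1 := Finset.sum_le_sum hpt
  have s2 := Finset.sum_le_sum hab
  rw [← Finset.mul_sum, ← Finset.sum_div, Finset.sum_add_distrib] at s1
  rw [← Finset.mul_sum, Finset.sum_sub_distrib] at s2
  simp only [sum_const, nsmul_eq_mul] at s2
  refine le_trans ?_ s1
  have hc : (0:ℝ) ≤ #S := by positivity
  have hk : 0.3 * (0.9:ℝ) ^ p * #S ≤
      (∑ w ∈ S, g w ^ (p + 1) + ∑ w ∈ S, |g w| ^ (p + 1)) / 2 := by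
    nlinarith
  calc (1.5 : ℝ) ^ (2 * (p + 1)) * #S ≤ (1.9 : ℝ) ^ (2 * (p + 1)) * (0.3 * (0.9:ℝ) ^ p * #S) := by
        rw [← mul_assoc]
        apply mul_le_mul_of_nonneg_right _ hc
        obtain ⟨k, rfl⟩ := Nat.exists_eq_add_of_le hp3
        have : (1.5:ℝ) ^ (2 * (3 + k + 1)) = (1.5:ℝ) ^ 8 * 2.25 ^ k := by
          rw [show (2.25:ℝ) = 1.5 ^ 2 by norm_num, ← pow_mul, ← pow_add]; congr 1; ring
        rw [this]
        have : (1.9:ℝ) ^ (2 * (3 + k + 1)) * (0.3 * 0.9 ^ (3 + k))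
            = (1.9:ℝ) ^ 8 * 0.3 * 0.9 ^ 3 * 3.249 ^ k := by
          rw [show (3.249:ℝ) = 1.9 ^ 2 * 0.9 by norm_num, mul_pow, ← pow_mul, pow_add 0.9]
          rw [show 2 * (3 + k + 1) = 8 + 2 * k by ring, pow_add]; ring
        rw [this]
        have : (2.25:ℝ) ^ k ≤ 3.249 ^ k := pow_le_pow_left₀ (by norm_num) (by norm_num) _
        have hz : (0:ℝ) ≤ 2.25 ^ k := by positivity
        have hc1 : (1.5:ℝ) ^ 8 ≤ 1.9 ^ 8 * 0.3 * 0.9 ^ 3 := by norm_num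
        have hc2 : (0:ℝ) ≤ 1.5 ^ 8 := by norm_num
        calc (1.5:ℝ) ^ 8 * 2.25 ^ k ≤ (1.9 ^ 8 * 0.3 * 0.9 ^ 3) * 2.25 ^ k :=
              mul_le_mul_of_nonneg_right hc1 hz
          _ ≤ _ := mul_le_mul_of_nonneg_left this (hc2.trans hc1)
    _ ≤ _ := by
        apply mul_le_mul_of_nonneg_left hk; positivity

end KM

namespace KM
open Finset
variable {G : Type*} [AddCommGroup G] [Fintype G] [DecidableEq G]

lemma sum_ind_add (A : Finset G) (x : G) : ∑ a, ind A (a + x) = #A := by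
  have := Equiv.sum_comp (Equiv.addRight x) (ind A)
  simp only [Equiv.coe_addRight] at this
  rw [this]
  simp [ind]

lemma ind_nonneg (A : Finset G) (x : G) : 0 ≤ ind A x := by
  unfold ind; split_ifs <;> norm_num

lemma dc_ind_nonneg (A : Finset G) (x : G) : 0 ≤ dc (ind A) x := by
  unfold dc; exact sum_nonneg fun a _ => mul_nonneg (ind_nonneg _ _) (ind_nonneg _ _)

/-- the sifted set -/
noncomputable def sft (A D : Finset G) {q : ℕ} (s : Fin q → G) : Finset G :=
  D.filter (fun x => ∀ i, s i + x ∈ A)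

lemma prod_ind (A : Finset G) {q : ℕ} (s : Fin q → G) (x : G) :
    ∏ i, ind A (s i + x) = if ∀ i, s i + x ∈ A then 1 else 0 := by
  unfold ind
  rw [Finset.prod_ite_zero]; simp

lemma sum_sft (A D : Finset G) {q : ℕ} (s : Fin q → G) (F : G → ℝ) :
    ∑ x ∈ sft A D s, F x = ∑ x ∈ D, (∏ i, ind A (s i + x)) * F x := by
  simp_rw [prod_ind, sft, Finset.sum_filter, ite_mul, one_mul, zero_mul]

lemma sift (A D : Finset G) (q : ℕ) (m θ : ℝ) (hm : 0 ≤ m) (hθ : 0 ≤ θ) (hD : D.Nonempty)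
    (h15 : (1.5 * m) ^ q * (#D : ℝ) ^ 2 ≤ ∑ x ∈ D, ∑ y ∈ D, (dc (ind A) (x - y)) ^ q)
    (hnum : 100 * (1.3 * m) ^ q + θ * (#A : ℝ) ^ q < (1.5 * m) ^ q) :
    ∃ A' ⊆ D, A'.Nonempty ∧ θ * #D ≤ #A' ∧
      ∑ x ∈ A', ∑ y ∈ A', (if dc (ind A) (x - y) < 1.3 * m then (1:ℝ) else 0)
        ≤ (#A' : ℝ) ^ 2 / 100 := by
  by_contra hcon
  push Not at hcon
  set bd : G → ℝ := fun w => if dc (ind A) w < 1.3 * m then (1:ℝ) else 0 with hbd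
  have hbd0 : ∀ w, 0 ≤ bd w := by intro w; simp only [hbd]; split_ifs <;> norm_num
  have hs : ∀ s : Fin q → G, (U (ind A) D s) ^ 2 ≤ θ * #D * U (ind A) D s
      + 100 * ∑ x ∈ D, ∑ y ∈ D, bd (x - y) * ((∏ i, ind A (s i + x)) * ∏ i, ind A (s i + y)) := by
    intro s
    have hU : U (ind A) D s = #(sft A D s) := by
      have := sum_sft A D s (fun _ => 1)
      simp only [mul_one, sum_const, nsmul_eq_mul] at this
      rw [this, U]
    have hB : ∑ x ∈ D, ∑ y ∈ D, bd (x - y) * ((∏ i, ind A (s i + x)) * ∏ i, ind A (s i + y))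
        = ∑ x ∈ sft A D s, ∑ y ∈ sft A D s, bd (x - y) := by
      rw [sum_sft]
      refine sum_congr rfl fun x _ => ?_
      rw [sum_sft, mul_sum]
      refine sum_congr rfl fun y _ => ?_
      ring
    rw [hB, hU]
    have hB0 : 0 ≤ ∑ x ∈ sft A D s, ∑ y ∈ sft A D s, bd (x - y) :=
      sum_nonneg fun _ _ => sum_nonneg fun _ _ => hbd0 _
    rcases (sft A D s).eq_empty_or_nonempty with h | h
    · rw [h]; simp
    by_cases h2 : θ * #D ≤ #(sft A D s)
    · have : (#(sft A D s) : ℝ) ^ 2 / 100 < ∑ x ∈ sft A D s, ∑ y ∈ sft A D s, bd (x - y) :=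
        hcon (sft A D s) (filter_subset _ _) h h2
      have h3 : 0 ≤ θ * (#D:ℝ) * #(sft A D s) := by positivity
      linarith
    · push Not at h2
      have h4 : (0:ℝ) ≤ #(sft A D s) := by positivity
      nlinarith
  have hsum := Finset.sum_le_sum fun s (_ : s ∈ (univ : Finset (Fin q → G))) => hs s
  rw [← sum_dc_pow, sum_add_distrib, ← mul_sum, ← mul_sum, ← swap3] at hsum
  have e1 : ∑ s : Fin q → G, U (ind A) D s = #D * (#A : ℝ) ^ q := by
    unfold U
    rw [sum_comm]
    have : ∀ x ∈ D, ∑ s : Fin q → G, ∏ i, ind A (s i + x) = (#A : ℝ) ^ q := by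
      intro x _
      rw [← Fintype.sum_pow (fun a => ind A (a + x)), sum_ind_add]
    rw [sum_congr rfl this]; simp
  have e2 : ∑ x ∈ D, ∑ y ∈ D, ∑ s : Fin q → G,
      bd (x - y) * ((∏ i, ind A (s i + x)) * ∏ i, ind A (s i + y))
      ≤ ∑ x ∈ D, ∑ y ∈ D, (1.3 * m) ^ q := by
    refine sum_le_sum fun x _ => sum_le_sum fun y _ => ?_
    rw [← mul_sum]
    have : ∑ s : Fin q → G, (∏ i, ind A (s i + x)) * ∏ i, ind A (s i + y)
        = (dc (ind A) (x - y)) ^ q := by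
      rw [dc_sub, Fintype.sum_pow]
      simp_rw [Finset.prod_mul_distrib]
    rw [this]
    simp only [hbd]
    split_ifs with h
    · rw [one_mul]; exact pow_le_pow_left₀ (dc_ind_nonneg _ _) h.le _
    · rw [zero_mul]; positivity
  simp only [sum_const, nsmul_eq_mul] at e2
  rw [e1] at hsum
  have hDp : (0:ℝ) < #D := by exact_mod_cast hD.card_pos
  have : (#D : ℝ) ^ 2 * (100 * (1.3 * m) ^ q + θ * (#A : ℝ) ^ q) < (#D : ℝ) ^ 2 * (1.5 * m) ^ q :=
    mul_lt_mul_of_pos_left hnum (by positivity)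
  nlinarith

lemma localize (A' D D' : Finset G) (bd : G → ℝ) (hbd : ∀ w, 0 ≤ bd w) (θ : ℝ)
    (hA' : A'.Nonempty) (hD' : D'.Nonempty) (hsub : A' ⊆ D) (hθ : 0 ≤ θ)
    (hc : θ * #D ≤ #A')
    (hbad : ∑ x ∈ A', ∑ y ∈ A', bd (x - y) ≤ (#A' : ℝ) ^ 2 / 100)
    (W : Finset G) (hW : ∀ x ∈ D, ∀ y ∈ D', x - y ∈ W) (hWc : (#W : ℝ) ≤ 2 * #D) :
    ∃ x0, ∃ A2 ⊆ D', (∀ b ∈ A2, x0 + b ∈ A') ∧ θ / 4 * #D' ≤ #A2 ∧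
      ∑ a ∈ A', ∑ b ∈ A2, bd (a - (x0 + b)) ≤ (#A' : ℝ) * #A2 / 40 := by
  by_contra hcon
  push Not at hcon
  have hAp : (0:ℝ) < #A' := by exact_mod_cast hA'.card_pos
  have hDp : (0:ℝ) < #D' := by exact_mod_cast hD'.card_pos
  have key : ∀ x0 ∈ W, (#A' : ℝ) * ∑ b ∈ D', ind A' (x0 + b) ≤ #A' * (θ / 4 * #D')
      + 40 * ∑ b ∈ D', ind A' (x0 + b) * ∑ a ∈ A', bd (a - (x0 + b)) := by
    intro x0 _
    set A2 := D'.filter (fun b => x0 + b ∈ A') with hA2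
    have h1 : ∑ b ∈ D', ind A' (x0 + b) = #A2 := by
      rw [hA2]; simp [ind]
    have h2 : ∑ b ∈ D', ind A' (x0 + b) * ∑ a ∈ A', bd (a - (x0 + b))
        = ∑ a ∈ A', ∑ b ∈ A2, bd (a - (x0 + b)) := by
      rw [sum_comm (s := A'), hA2, sum_filter]
      refine sum_congr rfl fun b _ => ?_
      unfold ind; split_ifs <;> simp
    rw [h1, h2]
    have h0 : 0 ≤ ∑ a ∈ A', ∑ b ∈ A2, bd (a - (x0 + b)) :=
      sum_nonneg fun _ _ => sum_nonneg fun _ _ => hbd _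
    by_cases h3 : θ / 4 * #D' ≤ #A2
    · have := hcon x0 A2 (filter_subset _ _) (by intro b hb; simp [hA2] at hb; exact hb.2) h3
      have : 0 ≤ (#A' : ℝ) * (θ / 4 * #D') := by positivity
      linarith
    · push Not at h3
      nlinarith
  have hsum := sum_le_sum key
  rw [← mul_sum, sum_add_distrib, ← mul_sum (a := (40:ℝ)), sum_const, nsmul_eq_mul] at hsum
  have gen : ∀ F : G → ℝ, ∑ x0 ∈ W, ∑ b ∈ D', ind A' (x0 + b) * F (x0 + b)
      = #D' * ∑ a ∈ A', F a := by
    intro F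
    rw [sum_comm]
    have : ∀ b ∈ D', ∑ x0 ∈ W, ind A' (x0 + b) * F (x0 + b) = ∑ a ∈ A', F a := by
      intro b hb
      have e : ∑ a ∈ A', F a = ∑ a, ind A' a * F a := by
        simp [ind]
      rw [e, ← Equiv.sum_comp (Equiv.addRight b) (fun a => ind A' a * F a)]
      refine sum_subset (subset_univ _) fun x _ hx => ?_
      show ind A' (x + b) * F (x + b) = 0
      have : x + b ∉ A' := fun h => hx (by
        have := hW _ (hsub h) b hb
        simpa using this)
      simp [ind, this]
    rw [sum_congr rfl this]; simp
  have g1 := gen (fun _ => 1)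
  simp only [mul_one, sum_const, nsmul_eq_mul] at g1
  have g2 := gen (fun z => ∑ a ∈ A', bd (a - z))
  rw [g1, g2] at hsum
  rw [sum_comm] at hbad
  have t1 : (#W : ℝ) * (#A' * (θ / 4 * #D')) ≤ #A' * #D' * #A' / 2 := by
    have : (#W : ℝ) * θ ≤ 2 * #A' := by nlinarith
    have h5 : 0 ≤ (#A' : ℝ) * #D' := by positivity
    nlinarith
  have t2 : (#D' : ℝ) * ∑ x ∈ A', ∑ a ∈ A', bd (a - x) ≤ #D' * ((#A' : ℝ) ^ 2 / 100) :=
    mul_le_mul_of_nonneg_left hbad hDp.le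
  have t3 : 0 < (#A' : ℝ) * #D' * #A' := by positivity
  nlinarith

end KM

namespace KM
open Finset
variable {G : Type*} [AddCommGroup G] [Fintype G] [DecidableEq G]

lemma hoeff (A : Finset G) (Z : G → ℝ) (hZ : ∀ a ∈ A, |Z a| ≤ 1) (hs : ∑ a ∈ A, Z a = 0)
    (k : ℕ) (ε : ℝ) (hε : 0 ≤ ε) :
    ∑ v ∈ Fintype.piFinset (fun _ : Fin k => A), (if k * ε < ∑ i, Z (v i) then (1:ℝ) else 0)
      ≤ Real.exp (-(k * ε ^ 2 / 2)) * (#A : ℝ) ^ k := by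
  have h1 : ∀ v : Fin k → G, (if k * ε < ∑ i, Z (v i) then (1:ℝ) else 0)
      ≤ Real.exp (-(k * ε ^ 2)) * ∏ i, Real.exp (Z (v i) * ε) := by
    intro v
    rw [← Real.exp_sum, ← Real.exp_add, ← Finset.sum_mul]
    split_ifs with h
    · apply Real.one_le_exp
      nlinarith
    · positivity
  have h2 : ∑ a ∈ A, Real.exp (Z a * ε) ≤ #A * Real.exp (ε ^ 2 / 2) := by
    calc _ ≤ ∑ a ∈ A, (Real.cosh ε + Z a * Real.sinh ε) :=
          sum_le_sum fun a ha => Real.exp_mul_le_cosh_add_mul_sinh (hZ a ha) ε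
      _ = #A * Real.cosh ε := by
          rw [sum_add_distrib, ← sum_mul, hs]; simp
      _ ≤ _ := mul_le_mul_of_nonneg_left (Real.cosh_le_exp_half_sq ε) (by positivity)
  calc _ ≤ ∑ v ∈ Fintype.piFinset (fun _ : Fin k => A),
        Real.exp (-(k * ε ^ 2)) * ∏ i, Real.exp (Z (v i) * ε) := sum_le_sum fun v _ => h1 v
    _ = Real.exp (-(k * ε ^ 2)) * (∑ a ∈ A, Real.exp (Z a * ε)) ^ k := by
        rw [← mul_sum, Finset.sum_prod_piFinset A (fun (_ : Fin k) a => Real.exp (Z a * ε))]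
        simp
    _ ≤ Real.exp (-(k * ε ^ 2)) * (#A * Real.exp (ε ^ 2 / 2)) ^ k := by
        apply mul_le_mul_of_nonneg_left _ (Real.exp_pos _).le
        apply pow_le_pow_left₀ _ h2
        exact sum_nonneg fun a _ => (Real.exp_pos _).le
    _ = _ := by
        rw [mul_pow, ← Real.exp_nat_mul, mul_left_comm, ← Real.exp_add, mul_comm]
        congr 2; ring

/-- average of a shifted set -/
noncomputable def avg (A S : Finset G) (x : G) : ℝ := (∑ a ∈ A, ind S (a + x)) / #A

lemma ind_le_one (A : Finset G) (x : G) : ind A x ≤ 1 := by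
  unfold ind; split_ifs <;> norm_num

lemma avg_nonneg (A S : Finset G) (x : G) : 0 ≤ avg A S x :=
  div_nonneg (sum_nonneg fun a _ => ind_nonneg _ _) (by positivity)

lemma avg_le_one (A S : Finset G) (x : G) : avg A S x ≤ 1 := by
  unfold avg
  apply div_le_one_of_le₀ _ (by positivity)
  calc _ ≤ ∑ a ∈ A, (1:ℝ) := sum_le_sum fun a _ => ind_le_one _ _
    _ = _ := by simp

/-- sampled average -/
noncomputable def smp (S : Finset G) {k : ℕ} (v : Fin k → G) (x : G) : ℝ :=
  (∑ i, ind S (v i + x)) / k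

open Classical in
/-- exceptional set -/
noncomputable def exc (A S W : Finset G) (ε : ℝ) {k : ℕ} (v : Fin k → G) : Finset G :=
  W.filter (fun x => ε < |smp S v x - avg A S x|)

lemma sum_exc (A S W : Finset G) (hA : A.Nonempty) (ε : ℝ) (hε : 0 ≤ ε) (k : ℕ) (hk : 0 < k) :
    ∑ v ∈ Fintype.piFinset (fun _ : Fin k => A), (#(exc A S W ε v) : ℝ)
      ≤ 2 * Real.exp (-(k * ε ^ 2 / 2)) * (#A : ℝ) ^ k * #W := by
  have hAp : (0:ℝ) < #A := by exact_mod_cast hA.card_pos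
  have hkp : (0:ℝ) < k := by exact_mod_cast hk
  have h1 : ∀ v : Fin k → G, (#(exc A S W ε v) : ℝ)
      = ∑ x ∈ W, if ε < |smp S v x - avg A S x| then (1:ℝ) else 0 := by
    intro v; unfold exc; simp
  simp_rw [h1]
  rw [sum_comm]
  have : ∀ x ∈ W, ∑ v ∈ Fintype.piFinset (fun _ : Fin k => A),
      (if ε < |smp S v x - avg A S x| then (1:ℝ) else 0)
      ≤ 2 * Real.exp (-(k * ε ^ 2 / 2)) * (#A : ℝ) ^ k := by
    intro x _
    have hs : ∑ a ∈ A, (ind S (a + x) - avg A S x) = 0 := by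
      rw [sum_sub_distrib, sum_const, nsmul_eq_mul, avg, mul_div_cancel₀ _ hAp.ne', sub_self]
    have a1 := hoeff A (fun a => ind S (a + x) - avg A S x) (by
      intro a _
      rw [abs_le]
      constructor <;> linarith [ind_nonneg S (a + x), ind_le_one S (a + x), avg_nonneg A S x,
        avg_le_one A S x]) hs k ε hε
    have a2 := hoeff A (fun a => -(ind S (a + x) - avg A S x)) (by
      intro a _
      rw [abs_neg, abs_le]
      constructor <;> linarith [ind_nonneg S (a + x), ind_le_one S (a + x), avg_nonneg A S x,
        avg_le_one A S x]) (by rw [sum_neg_distrib, hs, neg_zero]) k ε hε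
    rw [show 2 * Real.exp (-(k * ε ^ 2 / 2)) * (#A : ℝ) ^ k =
      Real.exp (-(k * ε ^ 2 / 2)) * (#A : ℝ) ^ k + Real.exp (-(k * ε ^ 2 / 2)) * (#A : ℝ) ^ k by ring]
    refine le_trans ?_ (add_le_add a1 a2)
    rw [← sum_add_distrib]
    refine sum_le_sum fun v _ => ?_
    have e : ∑ i, (ind S (v i + x) - avg A S x) = k * (smp S v x - avg A S x) := by
      rw [sum_sub_distrib, sum_const, smp]; simp
      field_simp
    simp only [sum_neg_distrib, e]
    have n1 : (0:ℝ) ≤ if k * ε < k * (smp S v x - avg A S x) then (1:ℝ) else 0 := by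
      split_ifs <;> norm_num
    have n2 : (0:ℝ) ≤ if k * ε < -(k * (smp S v x - avg A S x)) then (1:ℝ) else 0 := by
      split_ifs <;> norm_num
    split_ifs with h h2 h3 h3 h2 <;> try norm_num
    rcases lt_abs.1 h with h' | h'
    · exact absurd (mul_lt_mul_of_pos_left h' hkp) h2
    · apply absurd (mul_lt_mul_of_pos_left h' hkp)
      rw [mul_neg]; exact h3
  calc _ ≤ ∑ x ∈ W, 2 * Real.exp (-(k * ε ^ 2 / 2)) * (#A : ℝ) ^ k := sum_le_sum this
    _ = _ := by rw [sum_const, nsmul_eq_mul]; ring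

open Classical in
lemma croot_sisask (A S A2 W P E : Finset G) (k : ℕ) (hk : 0 < k) (ε : ℝ) (hε : 0 ≤ ε)
    (hA : A.Nonempty) (hW : W.Nonempty) (hP : ∀ a ∈ A, ∀ t ∈ E, a + t ∈ P) :
    ∃ T ⊆ E, (#E : ℝ) * (#A : ℝ) ^ k ≤ 2 * (#P : ℝ) ^ k * #T ∧
      ∀ u, ∀ t ∈ T, ∀ t' ∈ T, (∀ b ∈ A2, u - b ∈ W ∧ u + (t - t') - b ∈ W) →
        |∑ b ∈ A2, avg A S (u + (t - t') - b) - ∑ b ∈ A2, avg A S (u - b)|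
          ≤ 2 * ε * #A2 + 8 * Real.exp (-(k * ε ^ 2 / 2)) * #W := by
  set ξ := 4 * Real.exp (-(k * ε ^ 2 / 2)) with hξ
  have hξ0 : 0 < ξ := by positivity
  have hWp : (0:ℝ) < #W := by exact_mod_cast hW.card_pos
  set L := (Fintype.piFinset (fun _ : Fin k => A)).filter
    (fun v => (#(exc A S W ε v) : ℝ) ≤ ξ * #W) with hL
  have hLc : (#A : ℝ) ^ k ≤ 2 * #L := by
    have h1 := sum_exc A S W hA ε hε k hk
    have h2 : ∀ v ∈ Fintype.piFinset (fun _ : Fin k => A),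
        ξ * #W * (1 - if v ∈ L then (1:ℝ) else 0) ≤ #(exc A S W ε v) := by
      intro v hv
      split_ifs with h
      · simp
      · have : ¬ ((#(exc A S W ε v) : ℝ) ≤ ξ * #W) := fun h' => h (by
          rw [hL, mem_filter]; exact ⟨hv, h'⟩)
        push Not at this
        linarith
    have h3 := (sum_le_sum h2).trans h1
    rw [← mul_sum, sum_sub_distrib] at h3
    have c1 : ∑ v ∈ Fintype.piFinset (fun _ : Fin k => A), (1:ℝ) = (#A : ℝ) ^ k := by
      simp
    have c2 : ∑ v ∈ Fintype.piFinset (fun _ : Fin k => A), (if v ∈ L then (1:ℝ) else 0) = #L := by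
      rw [← sum_filter]
      have : (Fintype.piFinset (fun _ : Fin k => A)).filter (fun v => v ∈ L) = L := by
        ext v; rw [mem_filter]; exact ⟨fun h => h.2, fun h => ⟨(mem_filter.1 h).1, h⟩⟩
      rw [this]; simp
    rw [c1, c2] at h3
    have h4 : ξ * #W * ((#A : ℝ) ^ k - #L) ≤ ξ * #W * ((#A : ℝ) ^ k / 2) := by
      refine h3.trans (le_of_eq ?_); rw [hξ]; ring
    have := le_of_mul_le_mul_left h4 (by positivity)
    linarith
  -- pigeonhole
  have hpg : ∃ v : Fin k → G, (#E : ℝ) * #L ≤ (#P : ℝ) ^ k * #(E.filter (fun t => (fun i => v i - t) ∈ L)) := by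
    by_contra hcon
    push Not at hcon
    have e1 : ∑ v ∈ Fintype.piFinset (fun _ : Fin k => P),
        (#(E.filter (fun t => (fun i => v i - t) ∈ L)) : ℝ) = #E * #L := by
      have : ∀ v : Fin k → G, (#(E.filter (fun t => (fun i => v i - t) ∈ L)) : ℝ)
        = ∑ t ∈ E, if (fun i => v i - t) ∈ L then (1:ℝ) else 0 := by intro v; simp
      simp_rw [this]
      rw [sum_comm]
      have : ∀ t ∈ E, ∑ v ∈ Fintype.piFinset (fun _ : Fin k => P),
          (if (fun i => v i - t) ∈ L then (1:ℝ) else 0) = #L := by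
        intro t ht
        rw [← sum_filter, sum_const, nsmul_eq_mul, mul_one]
        congr 1
        refine card_nbij' (fun v i => v i - t) (fun v i => v i + t) ?_ ?_ ?_ ?_
        · intro v hv; simpa using (mem_filter.1 hv).2
        · intro v hv
          have hv' : v ∈ L := hv
          have := (mem_filter.1 hv').1
          rw [Fintype.mem_piFinset] at this
          simp only [coe_filter, Set.mem_setOf_eq, Fintype.mem_piFinset]
          exact ⟨fun i => hP _ (this i) t ht, by simpa using hv'⟩
        · intro v _; simp
        · intro v _; simp
      rw [sum_congr rfl this]; simp
    obtain ⟨a, ha⟩ := hA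
    rcases E.eq_empty_or_nonempty with hE | ⟨t, ht⟩
    · have := hcon (fun _ => 0); rw [hE] at this; simp at this
    have hPp : (Fintype.piFinset (fun _ : Fin k => P)).Nonempty :=
      ⟨fun _ => a + t, by rw [Fintype.mem_piFinset]; intro i; exact hP a ha t ht⟩
    have h5 := sum_lt_sum_of_nonempty hPp (fun v _ => hcon v)
    rw [← mul_sum, e1, sum_const, nsmul_eq_mul] at h5
    simp at h5
  obtain ⟨v, hv⟩ := hpg
  refine ⟨E.filter (fun t => (fun i => v i - t) ∈ L), filter_subset _ _, ?_, ?_⟩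
  · have : (0:ℝ) ≤ #E := by positivity
    nlinarith
  intro u t ht t' ht' hu
  have key : ∀ s, (fun i => v i - s) ∈ L → ∀ y, y ∈ W → y ∉ exc A S W ε (fun i => v i - s) →
      |smp S v (y - s) - avg A S y| ≤ ε := by
    intro s hs y hy hne
    have : smp S (fun i => v i - s) y = smp S v (y - s) := by
      unfold smp; congr 1; refine sum_congr rfl fun i _ => ?_
      show ind S (v i - s + y) = ind S (v i + (y - s))
      congr 1; abel
    rw [← this]
    by_contra h
    push Not at h
    exact hne (by unfold exc; rw [mem_filter]; exact ⟨hy, h⟩)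
  have hLt := (mem_filter.1 ht).2
  have hLt' := (mem_filter.1 ht').2
  set X := exc A S W ε (fun i => v i - t)
  set X' := exc A S W ε (fun i => v i - t')
  have hX : (#X : ℝ) ≤ ξ * #W := (mem_filter.1 hLt).2
  have hX' : (#X' : ℝ) ≤ ξ * #W := (mem_filter.1 hLt').2
  have pt : ∀ b ∈ A2, |avg A S (u + (t - t') - b) - avg A S (u - b)|
      ≤ 2 * ε + ind X (u + (t - t') - b) + ind X' (u - b) := by
    intro b hb
    have n1 := ind_nonneg X (u + (t - t') - b)
    have n2 := ind_nonneg X' (u - b)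
    have tr : |avg A S (u + (t - t') - b) - avg A S (u - b)| ≤ 1 := by
      rw [abs_le]
      constructor <;> linarith [avg_nonneg A S (u + (t - t') - b), avg_le_one A S (u + (t - t') - b),
        avg_nonneg A S (u - b), avg_le_one A S (u - b)]
    by_cases c1 : u + (t - t') - b ∈ X
    · have : ind X (u + (t - t') - b) = 1 := by simp [ind, c1]
      linarith
    by_cases c2 : u - b ∈ X'
    · have : ind X' (u - b) = 1 := by simp [ind, c2]
      linarith
    have k1 := key t hLt _ (hu b hb).2 c1
    have k2 := key t' hLt' _ (hu b hb).1 c2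
    rw [show u + (t - t') - b - t = u - b - t' by abel] at k1
    rw [abs_le] at k1 k2 ⊢
    constructor <;> linarith [k1.1, k1.2, k2.1, k2.2]
  have si : ∀ (Y : Finset G) (c : G), ∑ b ∈ A2, ind Y (c - b) ≤ #Y := by
    intro Y c
    calc _ ≤ ∑ b, ind Y (c - b) :=
          sum_le_sum_of_subset_of_nonneg (subset_univ _) fun _ _ _ => ind_nonneg _ _
      _ = ∑ b, ind Y b := Equiv.sum_comp (Equiv.subLeft c) (ind Y)
      _ = _ := by simp [ind]
  rw [← sum_sub_distrib]
  calc _ ≤ ∑ b ∈ A2, |avg A S (u + (t - t') - b) - avg A S (u - b)| := abs_sum_le_sum_abs _ _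
    _ ≤ ∑ b ∈ A2, (2 * ε + ind X (u + (t - t') - b) + ind X' (u - b)) := sum_le_sum pt
    _ = 2 * ε * #A2 + ∑ b ∈ A2, ind X (u + (t - t') - b) + ∑ b ∈ A2, ind X' (u - b) := by
        rw [sum_add_distrib, sum_add_distrib, sum_const, nsmul_eq_mul]; ring
    _ ≤ 2 * ε * #A2 + ξ * #W + ξ * #W := by
        linarith [si X (u + (t - t')), si X' u]
    _ = _ := by rw [hξ]; ring

end KM

namespace KM
open Finset
variable {G : Type*} [AddCommGroup G] [Fintype G] [DecidableEq G]

/-- averaging operator -/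
noncomputable def Av (T : Finset G) (g : G → ℝ) (x : G) : ℝ :=
  (∑ t ∈ T, ∑ t' ∈ T, g (x + (t - t'))) / (#T : ℝ) ^ 2

lemma Av_close (T : Finset G) (hT : T.Nonempty) (g : G → ℝ) (x : G) (c δ : ℝ)
    (h : ∀ t ∈ T, ∀ t' ∈ T, |g (x + (t - t')) - c| ≤ δ) : |Av T g x - c| ≤ δ := by
  have hp : (0:ℝ) < #T := by exact_mod_cast hT.card_pos
  have e : Av T g x - c = (∑ t ∈ T, ∑ t' ∈ T, (g (x + (t - t')) - c)) / (#T : ℝ) ^ 2 := by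
    simp only [Av, sum_sub_distrib, sum_const, nsmul_eq_mul]
    field_simp
  rw [e, abs_div, abs_of_pos (by positivity : (0:ℝ) < (#T : ℝ) ^ 2), div_le_iff₀ (by positivity)]
  calc _ ≤ ∑ t ∈ T, |∑ t' ∈ T, (g (x + (t - t')) - c)| := abs_sum_le_sum_abs _ _
    _ ≤ ∑ t ∈ T, ∑ t' ∈ T, δ := by
        refine sum_le_sum fun t ht => (abs_sum_le_sum_abs _ _).trans ?_
        exact sum_le_sum fun t' ht' => h t ht t' ht'
    _ = _ := by simp only [sum_const, nsmul_eq_mul]; ring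

lemma Av_iter_close (T : Finset G) (hT : T.Nonempty) (H : G → ℝ) (K : ℕ) (ε : ℝ)
    (V : ℕ → Set G) (hV : ∀ n, ∀ u ∈ V n, ∀ t ∈ T, ∀ t' ∈ T, u + (t - t') ∈ V (n + 1))
    (hH : ∀ n < K, ∀ u ∈ V n, ∀ t ∈ T, ∀ t' ∈ T, |H (u + (t - t')) - H u| ≤ ε) (j : ℕ) :
    ∀ n, n + j ≤ K → ∀ u ∈ V n, |(Av T)^[j] H u - H u| ≤ j * ε := by
  induction j with
  | zero => intro n _ u _; simp
  | succ j ih =>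
    intro n hn u hu
    rw [Function.iterate_succ_apply']
    apply Av_close T hT
    intro t ht t' ht'
    have h1 := ih (n + 1) (by omega) _ (hV n u hu t ht t' ht')
    have h2 := hH n (by omega) u hu t ht t' ht'
    push_cast
    calc _ = |((Av T)^[j] H (u + (t - t')) - H (u + (t - t'))) + (H (u + (t - t')) - H u)| := by
          congr 1; ring
      _ ≤ _ := abs_add_le _ _
      _ ≤ _ := by linarith

/-- character sum -/
noncomputable def cs (A : Finset G) (γ : AddChar G ℂ) : ℂ := ∑ a ∈ A, γ a

lemma conj_char (γ : AddChar G ℂ) (x : G) : (starRingEnd ℂ) (γ x) = γ (-x) := by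
  rw [AddChar.map_neg_eq_conj]

lemma norm_cs_sq (A : Finset G) (γ : AddChar G ℂ) :
    ((‖cs A γ‖ ^ 2 : ℝ) : ℂ) = ∑ a ∈ A, ∑ b ∈ A, γ (a - b) := by
  have : ((‖cs A γ‖ ^ 2 : ℝ) : ℂ) = cs A γ * (starRingEnd ℂ) (cs A γ) := by
    rw [Complex.mul_conj, Complex.normSq_eq_norm_sq]
  rw [this, cs, map_sum, sum_mul_sum]
  refine sum_congr rfl fun a _ => sum_congr rfl fun b _ => ?_
  rw [conj_char, ← AddChar.map_add_eq_mul, sub_eq_add_neg]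

lemma parseval (A : Finset G) :
    ∑ γ : AddChar G ℂ, ‖cs A γ‖ ^ 2 = Fintype.card G * #A := by
  have : ((∑ γ : AddChar G ℂ, ‖cs A γ‖ ^ 2 : ℝ) : ℂ) = ((Fintype.card G * #A : ℝ) : ℂ) := by
    rw [Complex.ofReal_sum]
    simp_rw [norm_cs_sq]
    rw [← swap3]
    simp_rw [AddChar.sum_apply_eq_ite, sub_eq_zero]
    simp
    ring
  exact_mod_cast this

lemma inversion (S : Finset G) (z : G) :
    (ind S z : ℂ) = ∑ γ : AddChar G ℂ, (cs S γ⁻¹ / Fintype.card G) * γ z := by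
  have hN : (Fintype.card G : ℂ) ≠ 0 := by
    have := Fintype.card_pos_iff.2 (⟨0⟩ : Nonempty G)
    exact_mod_cast this.ne'
  have : ∑ γ : AddChar G ℂ, (cs S γ⁻¹ / Fintype.card G) * γ z
      = (∑ s ∈ S, ∑ γ : AddChar G ℂ, γ (z - s)) / Fintype.card G := by
    rw [sum_comm, sum_div]
    refine sum_congr rfl fun γ _ => ?_
    rw [cs, div_mul_eq_mul_div, sum_mul]
    congr 1
    refine sum_congr rfl fun s _ => ?_
    rw [AddChar.inv_apply, ← AddChar.map_add_eq_mul, neg_add_eq_sub]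
  rw [this]
  simp_rw [AddChar.sum_apply_eq_ite, sub_eq_zero]
  simp only [sum_ite_eq, ind]
  split_ifs <;> simp [hN]

/-- the smoothed function -/
noncomputable def HH (A S A2 : Finset G) (x : G) : ℝ := (∑ b ∈ A2, avg A S (x - b)) / #A2

lemma fourier_HH (A S A2 : Finset G) (hA : A.Nonempty) (hA2 : A2.Nonempty) :
    ∃ c : AddChar G ℂ → ℂ, (∀ x, (HH A S A2 x : ℂ) = ∑ γ, c γ * γ x) ∧
      ∑ γ, ‖c γ‖ ≤ Real.sqrt (#S / #A) := by
  have hN : (0:ℝ) < Fintype.card G := by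
    have := Fintype.card_pos_iff.2 (⟨0⟩ : Nonempty G)
    exact_mod_cast this
  have hAp : (0:ℝ) < #A := by exact_mod_cast hA.card_pos
  have hA2p : (0:ℝ) < #A2 := by exact_mod_cast hA2.card_pos
  refine ⟨fun γ => (cs S γ⁻¹ / Fintype.card G) * (cs A γ / #A) * (cs A2 γ⁻¹ / #A2), ?_, ?_⟩
  · intro x
    have e1 : (HH A S A2 x : ℂ) = (∑ b ∈ A2, ∑ a ∈ A, (ind S (a + (x - b)) : ℂ)) / #A / #A2 := by
      unfold HH avg
      push_cast
      rw [← sum_div]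
    rw [e1]
    simp_rw [inversion]
    have e2 : ∀ γ : AddChar G ℂ, (cs S γ⁻¹ / Fintype.card G) * (cs A γ / #A) * (cs A2 γ⁻¹ / #A2) * γ x
        = (∑ b ∈ A2, ∑ a ∈ A, (cs S γ⁻¹ / Fintype.card G) * γ (a + (x - b))) / #A / #A2 := by
      intro γ
      have : ∑ b ∈ A2, ∑ a ∈ A, (cs S γ⁻¹ / Fintype.card G) * γ (a + (x - b))
          = (cs S γ⁻¹ / Fintype.card G) * cs A γ * cs A2 γ⁻¹ * γ x := by
        rw [cs, cs, cs, mul_assoc _ (∑ a ∈ A, γ a), sum_mul_sum, sum_comm, mul_assoc, sum_mul, mul_sum]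
        refine sum_congr rfl fun a _ => ?_
        rw [sum_mul, mul_sum]
        refine sum_congr rfl fun b _ => ?_
        rw [AddChar.inv_apply γ b, ← AddChar.map_add_eq_mul, ← AddChar.map_add_eq_mul]
        congr 2; abel
      rw [this]; ring
    rw [sum_congr rfl fun γ _ => e2 γ, ← sum_div, ← sum_div]
    congr 2
    rw [sum_comm (s := univ)]
    refine sum_congr rfl fun b _ => ?_
    rw [sum_comm]
  · have hb : ∀ γ : AddChar G ℂ, ‖cs A2 γ⁻¹ / #A2‖ ≤ 1 := by
      intro γ
      rw [norm_div, Complex.norm_natCast]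
      apply div_le_one_of_le₀ _ hA2p.le
      refine (norm_sum_le _ _).trans ?_
      simp
    have h1 : ∀ γ : AddChar G ℂ, ‖(cs S γ⁻¹ / Fintype.card G) * (cs A γ / #A) * (cs A2 γ⁻¹ / #A2)‖
        ≤ (‖cs S γ⁻¹‖ / Fintype.card G) * (‖cs A γ‖ / #A) := by
      intro γ
      rw [norm_mul, norm_mul, norm_div (cs S γ⁻¹), norm_div (cs A γ), Complex.norm_natCast, Complex.norm_natCast]
      exact mul_le_of_le_one_right (by positivity) (hb γ)
    refine (sum_le_sum fun γ _ => h1 γ).trans ?_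
    apply Real.le_sqrt_of_sq_le
    refine (sum_mul_sq_le_sq_mul_sq _ _ _).trans (le_of_eq ?_)
    simp_rw [div_pow]
    rw [← sum_div, ← sum_div, parseval]
    have : ∑ γ : AddChar G ℂ, ‖cs S γ⁻¹‖ ^ 2 = ∑ γ : AddChar G ℂ, ‖cs S γ‖ ^ 2 :=
      Equiv.sum_comp (Equiv.inv _) (fun γ : AddChar G ℂ => ‖cs S γ‖ ^ 2)
    rw [this, parseval]
    field_simp

lemma Av_fourier (T : Finset G) (g : G → ℝ) (c : AddChar G ℂ → ℂ)
    (hc : ∀ x, (g x : ℂ) = ∑ γ, c γ * γ x) (x : G) :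
    (Av T g x : ℂ) = ∑ γ, (c γ * ((‖cs T γ‖ ^ 2 / (#T:ℝ) ^ 2 : ℝ) : ℂ)) * γ x := by
  unfold Av
  push_cast
  simp_rw [hc]
  rw [swap3, sum_div]
  refine sum_congr rfl fun γ _ => ?_
  have := norm_cs_sq T γ
  push_cast at this
  rw [this]
  have : ∑ t ∈ T, ∑ t' ∈ T, c γ * γ (x + (t - t')) = c γ * (∑ t ∈ T, ∑ t' ∈ T, γ (t - t')) * γ x := by
    simp_rw [mul_sum, sum_mul]
    refine sum_congr rfl fun t _ => sum_congr rfl fun t' _ => ?_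
    rw [AddChar.map_add_eq_mul]; ring
  rw [this]; ring

lemma Av_iter_fourier (T : Finset G) (g : G → ℝ) (c : AddChar G ℂ → ℂ)
    (hc : ∀ x, (g x : ℂ) = ∑ γ, c γ * γ x) (K : ℕ) : ∀ x,
    ((Av T)^[K] g x : ℂ) = ∑ γ, (c γ * ((‖cs T γ‖ ^ 2 / (#T:ℝ) ^ 2 : ℝ) : ℂ) ^ K) * γ x := by
  induction K with
  | zero => intro x; simp [hc]
  | succ K ih =>
    intro x
    rw [Function.iterate_succ_apply', Av_fourier T _ _ ih]
    refine sum_congr rfl fun γ _ => ?_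
    rw [pow_succ]; ring

lemma smooth_close (A S A2 T : Finset G) (hA : A.Nonempty) (hA2 : A2.Nonempty) (hT : T.Nonempty)
    (K : ℕ) (δ : ℝ) (hδ : 0 ≤ δ) (x : G)
    (hx : ∀ γ : AddChar G ℂ, (#T : ℝ) / 2 ≤ ‖cs T γ‖ → ‖1 - γ x‖ ≤ δ) :
    |(Av T)^[K] (HH A S A2) x - (Av T)^[K] (HH A S A2) 0|
      ≤ Real.sqrt (#S / #A) * (δ + 2 * (1 / 4) ^ K) := by
  obtain ⟨c, hc, hcs⟩ := fourier_HH A S A2 hA hA2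
  have hTp : (0:ℝ) < #T := by exact_mod_cast hT.card_pos
  have h := Av_iter_fourier T _ c hc K
  have e : (((Av T)^[K] (HH A S A2) x - (Av T)^[K] (HH A S A2) 0 : ℝ) : ℂ)
      = ∑ γ, (c γ * ((‖cs T γ‖ ^ 2 / (#T:ℝ) ^ 2 : ℝ) : ℂ) ^ K) * (γ x - 1) := by
    rw [Complex.ofReal_sub, h, h, ← sum_sub_distrib]
    refine sum_congr rfl fun γ _ => ?_
    rw [AddChar.map_zero_eq_one]; ring
  rw [← Real.norm_eq_abs, ← Complex.norm_real, e]
  refine (norm_sum_le _ _).trans ?_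
  have pt : ∀ γ : AddChar G ℂ, ‖(c γ * ((‖cs T γ‖ ^ 2 / (#T:ℝ) ^ 2 : ℝ) : ℂ) ^ K) * (γ x - 1)‖
      ≤ ‖c γ‖ * (δ + 2 * (1 / 4) ^ K) := by
    intro γ
    rw [norm_mul, norm_mul, norm_pow, Complex.norm_real, Real.norm_of_nonneg (by positivity), mul_assoc]
    apply mul_le_mul_of_nonneg_left _ (norm_nonneg _)
    have hle : ‖cs T γ‖ ≤ #T := by
      refine (norm_sum_le _ _).trans ?_
      simp
    have h4 : (0:ℝ) ≤ 2 * (1 / 4) ^ K := by positivity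
    rw [norm_sub_rev]
    by_cases hs : (#T : ℝ) / 2 ≤ ‖cs T γ‖
    · have h1 : (‖cs T γ‖ ^ 2 / (#T:ℝ) ^ 2) ^ K ≤ 1 := by
        apply pow_le_one₀ (by positivity)
        apply div_le_one_of_le₀ _ (by positivity)
        exact pow_le_pow_left₀ (norm_nonneg _) hle 2
      calc _ ≤ 1 * δ := mul_le_mul h1 (hx γ hs) (norm_nonneg _) zero_le_one
        _ ≤ _ := by linarith
    · push Not at hs
      have h1 : (‖cs T γ‖ ^ 2 / (#T:ℝ) ^ 2) ^ K ≤ (1 / 4) ^ K := by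
        apply pow_le_pow_left₀ (by positivity)
        rw [div_le_iff₀ (by positivity)]
        nlinarith [norm_nonneg (cs T γ)]
      have h2 : ‖1 - γ x‖ ≤ 2 := by
        refine (norm_sub_le _ _).trans ?_
        simp; norm_num
      calc _ ≤ (1 / 4) ^ K * 2 := mul_le_mul h1 h2 (norm_nonneg _) (by positivity)
        _ ≤ _ := by linarith
  refine (sum_le_sum fun γ _ => pt γ).trans ?_
  rw [← sum_mul]
  exact mul_le_mul_of_nonneg_right hcs (by positivity)

end KM

namespace KM
open Finset
variable {G : Type*} [AddCommGroup G] [Fintype G] [DecidableEq G]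

/-- the trivalent exponents -/
def tri : Finset ℤ := {-1, 0, 1}

/-- the product character -/
noncomputable def pc (Λ : Finset (AddChar G ℂ)) (e : AddChar G ℂ → ℤ) : AddChar G ℂ :=
  ∏ l ∈ Λ, l ^ (e l)

/-- dissociativity relative to E -/
def Diss (E : Finset G) (θ : ℝ) (Λ : Finset (AddChar G ℂ)) : Prop :=
  ∀ e : AddChar G ℂ → ℤ, (∀ l, e l ∈ tri) → (∃ l ∈ Λ, e l ≠ 0) → ‖cs E (pc Λ e)‖ ≤ θ * #E

lemma prod_apply' (Λ : Finset (AddChar G ℂ)) (f : AddChar G ℂ → AddChar G ℂ) (x : G) :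
    (∏ l ∈ Λ, f l) x = ∏ l ∈ Λ, f l x := by
  classical
  induction Λ using Finset.induction_on with
  | empty => simp
  | insert a s ha ih => rw [prod_insert ha, prod_insert ha, AddChar.mul_apply, ih]

lemma chang (E T : Finset G) (hTE : T ⊆ E) (hT : T.Nonempty) (Λ : Finset (AddChar G ℂ))
    (hd : Diss E ((1 / 2) ^ #Λ) Λ) (hs : ∀ l ∈ Λ, (#T : ℝ) / 2 ≤ ‖cs T l‖) :
    (#T : ℝ) * Real.exp (#Λ / 4) ≤ 2 * Real.exp (#Λ / 8) * #E := by
  classical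
  have hTp : (0:ℝ) < #T := by exact_mod_cast hT.card_pos
  have hph : ∀ z : ℂ, ∃ c : ℂ, ‖c‖ = 1 ∧ c * z = ‖z‖ := by
    intro z
    by_cases hz : z = 0
    · exact ⟨1, by simp, by simp [hz]⟩
    · refine ⟨‖z‖ / z, ?_, ?_⟩
      · rw [norm_div, Complex.norm_real, norm_norm, div_self (by simpa using hz)]
      · rw [div_mul_cancel₀ _ hz]
  choose ph hph1 hph2 using hph
  set c : AddChar G ℂ → ℂ := fun l => ph (cs T l) with hc
  set X : AddChar G ℂ → G → ℝ := fun l x => (c l * l x).re with hX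
  have hX1 : ∀ l x, |X l x| ≤ 1 := by
    intro l x
    refine (Complex.abs_re_le_norm _).trans ?_
    rw [norm_mul, hph1, AddChar.norm_apply, one_mul]
  have hXT : ∀ l ∈ Λ, (#T : ℝ) / 2 ≤ ∑ x ∈ T, X l x := by
    intro l hl
    have : ∑ x ∈ T, X l x = ‖cs T l‖ := by
      simp only [hX]
      rw [← Complex.re_sum, ← mul_sum]
      have := hph2 (cs T l)
      rw [show (∑ i ∈ T, l i) = cs T l from rfl, hc]
      simp only
      rw [this, Complex.ofReal_re]
    rw [this]; exact hs l hl
  set m : ℕ := #Λ with hm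
  set Ch := Real.cosh (1 / 2) with hCh
  set Sh := Real.sinh (1 / 2) with hSh
  have hSh0 : 0 ≤ Sh := by rw [hSh]; exact Real.sinh_nonneg_iff.2 (by norm_num)
  have hCh0 : 0 ≤ Ch := (Real.cosh_pos _).le
  -- lower bound
  have low : (#T : ℝ) * Real.exp (m / 4) ≤ ∑ x ∈ T, Real.exp (∑ l ∈ Λ, X l x * (1 / 2)) := by
    have pt : ∀ x ∈ T, Real.exp (m / 4) * (1 + (∑ l ∈ Λ, X l x * (1 / 2) - m / 4))
        ≤ Real.exp (∑ l ∈ Λ, X l x * (1 / 2)) := by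
      intro x _
      have h1 := Real.add_one_le_exp (∑ l ∈ Λ, X l x * (1 / 2) - m / 4)
      calc _ ≤ Real.exp (m / 4) * Real.exp (∑ l ∈ Λ, X l x * (1 / 2) - m / 4) :=
            mul_le_mul_of_nonneg_left (by linarith) (Real.exp_pos _).le
        _ = _ := by rw [← Real.exp_add]; congr 1; ring
    refine le_trans ?_ (sum_le_sum pt)
    rw [← mul_sum, mul_comm]
    apply mul_le_mul_of_nonneg_left _ (Real.exp_pos _).le
    rw [sum_add_distrib, sum_sub_distrib, sum_comm]
    have : ∑ l ∈ Λ, ((#T : ℝ) / 2 * (1 / 2)) ≤ ∑ l ∈ Λ, ∑ x ∈ T, X l x * (1 / 2) := by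
      refine sum_le_sum fun l hl => ?_
      rw [← sum_mul]
      have := hXT l hl
      linarith
    simp only [sum_const, nsmul_eq_mul] at this ⊢
    have e : (#Λ : ℝ) = m := by rw [hm]
    rw [e] at this
    linarith
  have mid : ∑ x ∈ T, Real.exp (∑ l ∈ Λ, X l x * (1 / 2)) ≤ ∑ x ∈ E, ∏ l ∈ Λ, (Ch + X l x * Sh) := by
    calc _ ≤ ∑ x ∈ E, Real.exp (∑ l ∈ Λ, X l x * (1 / 2)) :=
          sum_le_sum_of_subset_of_nonneg hTE fun _ _ _ => (Real.exp_pos _).le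
      _ ≤ _ := by
        refine sum_le_sum fun x _ => ?_
        rw [Real.exp_sum]
        exact prod_le_prod (fun _ _ => (Real.exp_pos _).le)
          fun l _ => Real.exp_mul_le_cosh_add_mul_sinh (hX1 l x) _
  -- weights
  set wt : AddChar G ℂ → ℤ → ℂ := fun l j =>
    if j = 0 then (Ch : ℂ) else if j = 1 then (Sh / 2 : ℂ) * c l
      else (Sh / 2 : ℂ) * (starRingEnd ℂ) (c l) with hwt
  have hfac : ∀ l x, ((Ch + X l x * Sh : ℝ) : ℂ) = ∑ j ∈ tri, wt l j * (l ^ j) x := by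
    intro l x
    simp only [tri]
    rw [sum_insert (by decide), sum_insert (by decide), sum_singleton]
    simp only [hwt]
    simp only [zpow_neg, zpow_one, zpow_zero, AddChar.one_apply]
    norm_num
    have : (X l x : ℂ) = (c l * l x + (starRingEnd ℂ) (c l * l x)) / 2 := by
      rw [Complex.re_eq_add_conj]
    rw [this, map_mul, conj_char, AddChar.map_neg_eq_inv]
    ring
  have hwn : ∀ l, ∑ j ∈ tri, ‖wt l j‖ = Real.exp (1 / 2) := by
    intro l
    simp only [tri]
    rw [sum_insert (by decide), sum_insert (by decide), sum_singleton]
    simp only [hwt]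
    norm_num
    rw [show ‖c l‖ = 1 from hph1 _, abs_of_nonneg hCh0, abs_of_nonneg hSh0]
    have := Real.cosh_add_sinh (1 / 2)
    rw [← hCh, ← hSh] at this
    linarith
  have expand : ((∑ x ∈ E, ∏ l ∈ Λ, (Ch + X l x * Sh) : ℝ) : ℂ)
      = ∑ e ∈ Λ.pi (fun _ => tri), (∏ l ∈ Λ.attach, wt l.1 (e l.1 l.2)) *
          cs E (∏ l ∈ Λ.attach, l.1 ^ (e l.1 l.2)) := by
    rw [Complex.ofReal_sum]
    simp_rw [Complex.ofReal_prod, hfac]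
    simp_rw [Finset.prod_sum]
    rw [sum_comm]
    refine sum_congr rfl fun e _ => ?_
    rw [cs, mul_sum]
    refine sum_congr rfl fun x _ => ?_
    rw [prod_mul_distrib]
    congr 1
    have : ∀ (s : Finset {l // l ∈ Λ}), (∏ l ∈ s, l.1 ^ (e l.1 l.2)) x = ∏ l ∈ s, (l.1 ^ (e l.1 l.2)) x := by
      intro s
      induction s using Finset.induction_on with
      | empty => simp
      | insert a s ha ih => rw [prod_insert ha, prod_insert ha, AddChar.mul_apply, ih]
    rw [this]
  have bound : ∑ x ∈ E, ∏ l ∈ Λ, (Ch + X l x * Sh) ≤ (Ch ^ m + Real.exp (1 / 2) ^ m * (1 / 2) ^ m) * #E := by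
    have hn : ∑ x ∈ E, ∏ l ∈ Λ, (Ch + X l x * Sh)
        ≤ ∑ e ∈ Λ.pi (fun _ => tri), (∏ l ∈ Λ.attach, ‖wt l.1 (e l.1 l.2)‖) *
          ‖cs E (∏ l ∈ Λ.attach, l.1 ^ (e l.1 l.2))‖ := by
      refine (le_abs_self _).trans ?_
      rw [← Real.norm_eq_abs, ← Complex.norm_real, expand]
      refine (norm_sum_le _ _).trans (le_of_eq (sum_congr rfl fun e _ => ?_))
      rw [norm_mul, norm_prod]
    refine hn.trans ?_
    set e0 : ∀ l ∈ Λ, ℤ := fun _ _ => 0 with he0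
    have hmem : e0 ∈ Λ.pi (fun _ => tri) := by
      rw [mem_pi]; intro l hl; simp [he0, tri]
    rw [← add_sum_erase _ _ hmem, add_mul]
    apply add_le_add
    · have h1 : ∏ l ∈ Λ.attach, ‖wt l.1 (e0 l.1 l.2)‖ = Ch ^ m := by
        simp [he0, hwt, abs_of_nonneg hCh0, hm]
      rw [h1]
      apply mul_le_mul_of_nonneg_left _ (by positivity)
      simp [he0, cs]
    · have h2 : ∀ e ∈ (Λ.pi (fun _ => tri)).erase e0,
          (∏ l ∈ Λ.attach, ‖wt l.1 (e l.1 l.2)‖) * ‖cs E (∏ l ∈ Λ.attach, l.1 ^ (e l.1 l.2))‖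
          ≤ (∏ l ∈ Λ.attach, ‖wt l.1 (e l.1 l.2)‖) * ((1 / 2) ^ m * #E) := by
        intro e he
        apply mul_le_mul_of_nonneg_left _ (prod_nonneg fun _ _ => norm_nonneg _)
        rw [mem_erase, mem_pi] at he
        set e' : AddChar G ℂ → ℤ := fun l => if h : l ∈ Λ then e l h else 0 with he'
        have hpc : ∏ l ∈ Λ.attach, l.1 ^ (e l.1 l.2) = pc Λ e' := by
          unfold pc
          rw [← prod_attach Λ]
          refine prod_congr rfl fun l _ => ?_
          simp [he']
        rw [hpc]
        apply hd e'
        · intro l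
          by_cases h : l ∈ Λ
          · simp only [he', h, dif_pos]; exact he.2 l h
          · simp [he', h, tri]
        · by_contra hall
          push Not at hall
          apply he.1
          funext l hl
          have := hall l hl
          simpa [he', hl] using this
      refine (sum_le_sum h2).trans ?_
      have h3 : ∑ e ∈ (Λ.pi (fun _ => tri)).erase e0, (∏ l ∈ Λ.attach, ‖wt l.1 (e l.1 l.2)‖) * ((1 / 2) ^ m * (#E:ℝ))
          ≤ ∑ e ∈ Λ.pi (fun _ => tri), (∏ l ∈ Λ.attach, ‖wt l.1 (e l.1 l.2)‖) * ((1 / 2) ^ m * (#E:ℝ)) :=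
        sum_le_sum_of_subset_of_nonneg (erase_subset _ _) fun _ _ _ =>
          mul_nonneg (prod_nonneg fun _ _ => norm_nonneg _) (by positivity)
      refine h3.trans (le_of_eq ?_)
      rw [← sum_mul, ← Finset.prod_sum Λ (fun _ => tri) (fun l j => ‖wt l j‖)]
      simp_rw [hwn]
      rw [prod_const, ← hm]; ring
  have c1 : Ch ^ m ≤ Real.exp (m / 8) := by
    calc Ch ^ m ≤ (Real.exp (1 / 8)) ^ m := by
          apply pow_le_pow_left₀ hCh0
          refine (Real.cosh_le_exp_half_sq _).trans (le_of_eq ?_)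
          congr 1; norm_num
      _ = _ := by rw [← Real.exp_nat_mul]; congr 1; ring
  have c2 : Real.exp (1 / 2) ^ m * (1 / 2) ^ m ≤ Real.exp (m / 8) := by
    rw [← mul_pow]
    refine le_trans (pow_le_one₀ (by positivity) ?_) (Real.one_le_exp (by positivity))
    have h1 := Real.exp_one_lt_d9
    have h2 : Real.exp (1 / 2) ^ 2 = Real.exp 1 := by rw [← Real.exp_nat_mul]; norm_num
    nlinarith [Real.exp_pos (1 / 2)]
  have hE0 : (0:ℝ) ≤ #E := by positivity
  calc _ ≤ _ := low
    _ ≤ _ := mid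
    _ ≤ _ := bound
    _ ≤ _ := by apply mul_le_mul_of_nonneg_right _ hE0; linarith

lemma pc_subset (Λ Λ' : Finset (AddChar G ℂ)) (h : Λ' ⊆ Λ) (e : AddChar G ℂ → ℤ)
    (he : ∀ l ∈ Λ, l ∉ Λ' → e l = 0) : pc Λ' e = pc Λ e := by
  unfold pc
  refine prod_subset h fun l hl hn => ?_
  rw [he l hl hn, zpow_zero]

lemma Diss.subset {E : Finset G} {θ : ℝ} {Λ Λ' : Finset (AddChar G ℂ)} (hd : Diss E θ Λ)
    (h : Λ' ⊆ Λ) : Diss E θ Λ' := by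
  classical
  intro e he hne
  set e' : AddChar G ℂ → ℤ := fun l => if l ∈ Λ' then e l else 0 with he'
  have h1 : pc Λ' e = pc Λ' e' := by
    unfold pc; refine prod_congr rfl fun l hl => ?_; simp [he', hl]
  have h2 : pc Λ' e' = pc Λ e' := pc_subset Λ Λ' h e' (by intro l _ hl; simp [he', hl])
  rw [h1, h2]
  apply hd e'
  · intro l; simp only [he']; split_ifs
    · exact he l
    · simp [tri]
  · obtain ⟨l, hl, hn⟩ := hne
    exact ⟨l, h hl, by simpa [he', hl] using hn⟩

lemma one_sub_mul_le (a b : ℂ) (ha : ‖a‖ ≤ 1) : ‖1 - a * b‖ ≤ ‖1 - a‖ + ‖1 - b‖ := by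
  have : 1 - a * b = (1 - a) + a * (1 - b) := by ring
  rw [this]
  refine (norm_add_le _ _).trans ?_
  rw [norm_mul]
  have := mul_le_mul_of_nonneg_right ha (norm_nonneg (1 - b))
  linarith

lemma one_sub_inv_char (γ : AddChar G ℂ) (x : G) : ‖1 - γ⁻¹ x‖ = ‖1 - γ x‖ := by
  rw [AddChar.inv_apply, ← conj_char, ← Complex.norm_conj (1 - γ x)]
  simp

lemma one_sub_tri (γ : AddChar G ℂ) (j : ℤ) (hj : j ∈ tri) (x : G) : ‖1 - (γ ^ j) x‖ ≤ ‖1 - γ x‖ := by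
  simp only [tri, mem_insert, mem_singleton] at hj
  rcases hj with rfl | rfl | rfl
  · rw [zpow_neg, zpow_one, one_sub_inv_char]
  · simp
  · simp

lemma one_sub_pc (Λ : Finset (AddChar G ℂ)) (e : AddChar G ℂ → ℤ) (he : ∀ l, e l ∈ tri) (x : G) (ρ : ℝ)
    (hρ : ∀ l ∈ Λ, ‖1 - l x‖ ≤ ρ) : ‖1 - pc Λ e x‖ ≤ #Λ * ρ := by
  classical
  unfold pc
  induction Λ using Finset.induction_on with
  | empty => simp
  | insert a s ha ih =>
    rw [prod_insert ha, AddChar.mul_apply, card_insert_of_notMem ha]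
    have h1 := one_sub_mul_le ((a ^ e a) x) ((∏ l ∈ s, l ^ e l) x) (by simp)
    have h2 := ih fun l hl => hρ l (mem_insert_of_mem hl)
    have h3 := (one_sub_tri a (e a) (he a) x).trans (hρ a (mem_insert_self _ _))
    rw [Nat.cast_add, Nat.cast_one]
    linarith

lemma char_shift (E : Finset G) (χ : AddChar G ℂ) (x' : G) (P : Finset G) (η : ℝ) (hEP : E ⊆ P)
    (hP : ∀ x ∈ E, x + x' ∈ P) (hPc : (#P : ℝ) ≤ (1 + η) * #E) :
    ‖1 - χ x'‖ * ‖cs E χ‖ ≤ 2 * η * #E := by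
  set E' := E.image (fun x => x + x') with hE'
  have hinj : Function.Injective (fun x : G => x + x') := add_left_injective x'
  have h1 : χ x' * cs E χ = cs E' χ := by
    rw [hE', cs, cs, sum_image (fun a _ b _ h => hinj h), mul_sum]
    refine sum_congr rfl fun x _ => ?_
    rw [AddChar.map_add_eq_mul, mul_comm]
  have hE'P : E' ⊆ P := by
    intro z hz; rw [hE', mem_image] at hz
    obtain ⟨x, hx, rfl⟩ := hz; exact hP x hx
  have hc : #E' = #E := card_image_of_injective _ hinj
  have bd : ∀ F : Finset G, F ⊆ P → #F = #E → ‖cs P χ - cs F χ‖ ≤ η * #E := by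
    intro F hF hFc
    have : cs P χ - cs F χ = cs (P \ F) χ := by
      unfold cs; rw [← sum_sdiff hF]; ring
    rw [this]
    refine (norm_sum_le _ _).trans ?_
    simp only [AddChar.norm_apply, sum_const, nsmul_eq_mul, mul_one]
    rw [card_sdiff_of_subset hF, Nat.cast_sub (card_le_card hF), hFc]
    linarith
  have b1 := bd E hEP rfl
  have b2 := bd E' hE'P hc
  rw [← norm_mul, sub_mul, one_mul, h1]
  calc _ = ‖(cs P χ - cs E' χ) - (cs P χ - cs E χ)‖ := by congr 1; ring
    _ ≤ _ := norm_sub_le _ _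
    _ ≤ _ := by linarith

lemma spec_cover (E T P : Finset G) (hTE : T ⊆ E) (hT : T.Nonempty) (M : ℕ) (η ρ : ℝ) (hρ : 0 ≤ ρ)
    (hη : 0 ≤ η) (hM : 2 * (#E : ℝ) < #T * Real.exp ((M + 1) / 8)) (hEP : E ⊆ P)
    (hPc : (#P : ℝ) ≤ (1 + η) * #E) :
    ∃ Λ : Finset (AddChar G ℂ), #Λ ≤ M ∧ ∀ γ : AddChar G ℂ, (#T : ℝ) / 2 ≤ ‖cs T γ‖ →
      ∀ x', (∀ x ∈ E, x + x' ∈ P) → (∀ l ∈ Λ, ‖1 - l x'‖ ≤ ρ) →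
        ‖1 - γ x'‖ ≤ M * ρ + ρ + 2 * η * 2 ^ (M + 1) := by
  classical
  set F := (univ : Finset (Finset (AddChar G ℂ))).filter
    (fun Λ => Diss E ((1 / 2) ^ (M + 1)) Λ ∧ ∀ l ∈ Λ, (#T : ℝ) / 2 ≤ ‖cs T l‖) with hF
  have hFne : F.Nonempty := by
    refine ⟨∅, ?_⟩
    rw [hF, mem_filter]
    refine ⟨mem_univ _, ?_, by simp⟩
    intro e _ h; simp at h
  obtain ⟨Λ, hΛF, hmax⟩ := exists_max_image F card hFne
  have hΛ := (mem_filter.1 hΛF).2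
  have hE : (0:ℝ) < #E := by
    have : E.Nonempty := hT.mono hTE
    exact_mod_cast this.card_pos
  refine ⟨Λ, ?_, ?_⟩
  · by_contra hcon
    push Not at hcon
    obtain ⟨Λ', hsub, hcard⟩ := exists_subset_card_eq (show M + 1 ≤ #Λ by omega)
    have := chang E T hTE hT Λ' (by rw [hcard]; exact hΛ.1.subset hsub)
      (fun l hl => hΛ.2 l (hsub hl))
    rw [hcard] at this
    push_cast at this
    have h2 : Real.exp (((M:ℝ) + 1) / 4) = Real.exp (((M:ℝ) + 1) / 8) * Real.exp (((M:ℝ) + 1) / 8) := by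
      rw [← Real.exp_add]; congr 1; ring
    rw [h2] at this
    have hp := Real.exp_pos (((M:ℝ) + 1) / 8)
    nlinarith
  · have hcardM : (#Λ : ℝ) ≤ M := by
      by_contra hcon
      push Not at hcon
      have hcon : M < #Λ := by exact_mod_cast hcon
      obtain ⟨Λ', hsub, hcard⟩ := exists_subset_card_eq (show M + 1 ≤ #Λ by omega)
      have := chang E T hTE hT Λ' (by rw [hcard]; exact hΛ.1.subset hsub)
        (fun l hl => hΛ.2 l (hsub hl))
      rw [hcard] at this
      push_cast at this
      have h2 : Real.exp (((M:ℝ) + 1) / 4) = Real.exp (((M:ℝ) + 1) / 8) * Real.exp (((M:ℝ) + 1) / 8) := by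
        rw [← Real.exp_add]; congr 1; ring
      rw [h2] at this
      have hp := Real.exp_pos (((M:ℝ) + 1) / 8)
      nlinarith
    intro γ hγ x' hx' hl
    have hη2 : 0 ≤ 2 * η * 2 ^ (M + 1) := by positivity
    have hMρ : 0 ≤ M * ρ := by positivity
    by_cases hmem : γ ∈ Λ
    · have := hl γ hmem
      linarith
    have hnd : ¬ Diss E ((1 / 2) ^ (M + 1)) (insert γ Λ) := by
      intro hd
      have : insert γ Λ ∈ F := by
        rw [hF, mem_filter]
        refine ⟨mem_univ _, hd, ?_⟩
        intro l hl
        rcases mem_insert.1 hl with rfl | h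
        · exact hγ
        · exact hΛ.2 l h
      have := hmax _ this
      rw [card_insert_of_notMem hmem] at this
      omega
    unfold Diss at hnd
    push Not at hnd
    obtain ⟨e, he, ⟨l0, hl0, hne⟩, hlt⟩ := hnd
    have hγe : e γ ≠ 0 := by
      intro h0
      have h1 : pc Λ e = pc (insert γ Λ) e := by
        apply pc_subset _ _ (subset_insert _ _)
        intro l hl hn
        rcases mem_insert.1 hl with rfl | h
        · exact h0
        · exact absurd h hn
      rw [← h1] at hlt
      have := hΛ.1 e he (by
        rcases mem_insert.1 hl0 with rfl | h
        · exact absurd h0 hne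
        · exact ⟨l0, h, hne⟩)
      linarith
    have hcs := char_shift E (pc (insert γ Λ) e) x' P η hEP hx' hPc
    have h3 : ‖1 - pc (insert γ Λ) e x'‖ ≤ 2 * η * 2 ^ (M + 1) := by
      have h4 : ‖1 - pc (insert γ Λ) e x'‖ * ((1 / 2) ^ (M + 1) * #E) ≤ 2 * η * #E :=
        (mul_le_mul_of_nonneg_left hlt.le (norm_nonneg _)).trans hcs
      have h5 : (‖1 - pc (insert γ Λ) e x'‖ * (1 / 2) ^ (M + 1)) * #E ≤ (2 * η) * #E := by linarith
      have h6 := le_of_mul_le_mul_right h5 hE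
      have h7 : ((1:ℝ) / 2) ^ (M + 1) * 2 ^ (M + 1) = 1 := by
        rw [← mul_pow]; norm_num
      have h8 := mul_le_mul_of_nonneg_right h6 (show (0:ℝ) ≤ 2 ^ (M + 1) by positivity)
      rw [mul_assoc, h7, mul_one] at h8
      exact h8
    have hsplit : pc (insert γ Λ) e = γ ^ e γ * pc Λ e := by
      unfold pc; rw [prod_insert hmem]
    have h9 : (γ ^ e γ) x' = pc (insert γ Λ) e x' * (pc Λ e)⁻¹ x' := by
      rw [hsplit, ← AddChar.mul_apply, mul_inv_cancel_right]
    have h10 : ‖1 - γ x'‖ = ‖1 - (γ ^ e γ) x'‖ := by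
      have := he γ
      simp only [tri, mem_insert, mem_singleton] at this
      rcases this with h | h | h
      · rw [h, zpow_neg, zpow_one, one_sub_inv_char]
      · exact absurd h hγe
      · rw [h, zpow_one]
    rw [h10, h9]
    have h11 := one_sub_mul_le (pc (insert γ Λ) e x') ((pc Λ e)⁻¹ x') (by simp)
    rw [one_sub_inv_char] at h11
    have h12 := one_sub_pc Λ e he x' ρ hl
    have h13 : (#Λ : ℝ) * ρ ≤ M * ρ := mul_le_mul_of_nonneg_right hcardM hρ
    linarith

end KM

namespace KM
open Finset
variable {G : Type*} [AddCommGroup G] [Fintype G] [DecidableEq G]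

open Classical in
/-- Bohr set -/
noncomputable def bohr (Γ : Finset (AddChar G ℂ)) (ρ : ℝ) : Finset G :=
  univ.filter (fun x => ∀ γ ∈ Γ, ‖1 - γ x‖ ≤ ρ)

lemma mem_bohr {Γ : Finset (AddChar G ℂ)} {ρ : ℝ} {x : G} :
    x ∈ bohr Γ ρ ↔ ∀ γ ∈ Γ, ‖1 - γ x‖ ≤ ρ := by simp [bohr]

lemma zero_mem_bohr (Γ : Finset (AddChar G ℂ)) {ρ : ℝ} (hρ : 0 ≤ ρ) : (0:G) ∈ bohr Γ ρ := by
  rw [mem_bohr]; intro γ _; simpa using hρ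

lemma bohr_nonempty (Γ : Finset (AddChar G ℂ)) {ρ : ℝ} (hρ : 0 ≤ ρ) : (bohr Γ ρ).Nonempty :=
  ⟨0, zero_mem_bohr Γ hρ⟩

lemma neg_mem_bohr {Γ : Finset (AddChar G ℂ)} {ρ : ℝ} {x : G} (h : x ∈ bohr Γ ρ) : -x ∈ bohr Γ ρ := by
  rw [mem_bohr] at h ⊢
  intro γ hγ
  rw [← AddChar.inv_apply, one_sub_inv_char]
  exact h γ hγ

lemma bohr_mono (Γ : Finset (AddChar G ℂ)) {ρ σ : ℝ} (h : ρ ≤ σ) : bohr Γ ρ ⊆ bohr Γ σ := by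
  intro x hx
  rw [mem_bohr] at hx ⊢
  exact fun γ hγ => (hx γ hγ).trans h

lemma add_mem_bohr {Γ : Finset (AddChar G ℂ)} {ρ σ τ : ℝ} {x y : G} (hx : x ∈ bohr Γ ρ)
    (hy : y ∈ bohr Γ σ) (h : ρ + σ ≤ τ) : x + y ∈ bohr Γ τ := by
  rw [mem_bohr] at hx hy ⊢
  intro γ hγ
  rw [AddChar.map_add_eq_mul]
  have := one_sub_mul_le (γ x) (γ y) (by simp)
  linarith [hx γ hγ, hy γ hγ]

lemma sub_mem_bohr {Γ : Finset (AddChar G ℂ)} {ρ σ τ : ℝ} {x y : G} (hx : x ∈ bohr Γ ρ)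
    (hy : y ∈ bohr Γ σ) (h : ρ + σ ≤ τ) : x - y ∈ bohr Γ τ := by
  rw [sub_eq_add_neg]; exact add_mem_bohr hx (neg_mem_bohr hy) h

lemma card_bohr_pos (Γ : Finset (AddChar G ℂ)) {ρ : ℝ} (hρ : 0 ≤ ρ) : (0:ℝ) < #(bohr Γ ρ) := by
  exact_mod_cast (bohr_nonempty Γ hρ).card_pos

/-- regularity -/
lemma regular (Γ : Finset (AddChar G ℂ)) (ρ η : ℝ) (hρ : 0 < ρ) (hη : 0 ≤ η) (J : ℕ)
    (hJ : (Fintype.card G : ℝ) < (1 + η) ^ J) :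
    ∃ r, ρ / 2 ≤ r ∧ r + 1 / (2 * J) * ρ ≤ ρ ∧
      (#(bohr Γ (r + 1 / (2 * J) * ρ)) : ℝ) ≤ (1 + η) * #(bohr Γ r) := by
  by_contra hcon
  push Not at hcon
  have hJ0 : 0 < J := by
    rcases Nat.eq_zero_or_pos J with h | h
    · rw [h, pow_zero] at hJ
      have : 1 ≤ Fintype.card G := Fintype.card_pos_iff.2 ⟨0⟩
      have : (1:ℝ) ≤ Fintype.card G := by exact_mod_cast this
      linarith
    · exact h
  have hJp : (0:ℝ) < J := by exact_mod_cast hJ0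
  have ind : ∀ i : ℕ, i ≤ J → (1 + η) ^ i ≤ (#(bohr Γ (ρ / 2 + i * (1 / (2 * J) * ρ))) : ℝ) := by
    intro i
    induction i with
    | zero =>
      intro _
      simp only [pow_zero, CharP.cast_eq_zero, zero_mul, add_zero]
      have := (bohr_nonempty Γ (by positivity : (0:ℝ) ≤ ρ / 2)).card_pos
      exact_mod_cast this
    | succ i ih =>
      intro hi
      have h1 := ih (by omega)
      have hi' : (i:ℝ) + 1 ≤ J := by exact_mod_cast hi
      have h2 := hcon (ρ / 2 + i * (1 / (2 * J) * ρ)) (by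
        have : 0 ≤ (i:ℝ) * (1 / (2 * J) * ρ) := by positivity
        linarith) (by
        have : ((i:ℝ) + 1) * (1 / (2 * J) * ρ) ≤ J * (1 / (2 * J) * ρ) :=
          mul_le_mul_of_nonneg_right hi' (by positivity)
        have e : (J:ℝ) * (1 / (2 * J) * ρ) = ρ / 2 := by field_simp
        linarith)
      have e : ρ / 2 + i * (1 / (2 * J) * ρ) + 1 / (2 * J) * ρ
          = ρ / 2 + ((i + 1 : ℕ) : ℝ) * (1 / (2 * J) * ρ) := by push_cast; ring
      rw [e] at h2
      rw [pow_succ]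
      have : (1 + η) ^ i * (1 + η) ≤ (#(bohr Γ (ρ / 2 + i * (1 / (2 * J) * ρ))) : ℝ) * (1 + η) :=
        mul_le_mul_of_nonneg_right h1 (by linarith)
      linarith
  have h3 := ind J le_rfl
  have h4 : (#(bohr Γ (ρ / 2 + J * (1 / (2 * J) * ρ))) : ℝ) ≤ Fintype.card G := by
    exact_mod_cast card_le_univ _
  linarith

lemma bohr_size (Γ : Finset (AddChar G ℂ)) (ρ : ℝ) (hρ : 0 < ρ) (M : ℕ) (hM : 2 ≤ M * ρ) :
    (Fintype.card G : ℝ) ≤ #(bohr Γ ρ) * ((2 * M + 1 : ℕ) : ℝ) ^ (2 * #Γ) := by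
  classical
  have hMp : (0:ℝ) < M := by
    rcases Nat.eq_zero_or_pos M with h | h
    · rw [h] at hM; norm_num at hM
    · exact_mod_cast h
  -- map to cells
  set I : Finset ℤ := Icc (-(M:ℤ)) M with hI
  set cell : G → (Γ → ℤ × ℤ) := fun x γ => (⌊M * (γ.1 x).re⌋, ⌊M * (γ.1 x).im⌋) with hcell
  set Y : Finset (Γ → ℤ × ℤ) := Fintype.piFinset (fun _ : Γ => I ×ˢ I) with hY
  have hfl : ∀ r : ℝ, |r| ≤ 1 → ⌊M * r⌋ ∈ I := by
    intro r hr
    rw [abs_le] at hr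
    rw [hI, mem_Icc]
    constructor
    · rw [Int.le_floor]; push_cast; nlinarith
    · have : (⌊M * r⌋ : ℝ) ≤ M := (Int.floor_le _).trans (by nlinarith)
      exact_mod_cast this
  have hmap : ∀ x ∈ (univ : Finset G), cell x ∈ Y := by
    intro x _
    rw [hY, Fintype.mem_piFinset]
    intro γ
    rw [mem_product]
    exact ⟨hfl _ ((Complex.abs_re_le_norm _).trans (by simp)),
      hfl _ ((Complex.abs_im_le_norm _).trans (by simp))⟩
  have hcardY : #Y = (2 * M + 1) ^ (2 * #Γ) := by
    rw [hY, Fintype.card_piFinset]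
    simp only [card_product, prod_const, card_univ, Fintype.card_coe]
    have : #I = 2 * M + 1 := by rw [hI, Int.card_Icc]; omega
    rw [this, ← pow_two, ← pow_mul]
  have hfib : ∀ y ∈ Y, #({x ∈ (univ : Finset G) | cell x = y}) ≤ #(bohr Γ ρ) := by
    intro y _
    rcases ({x ∈ (univ : Finset G) | cell x = y} : Finset G).eq_empty_or_nonempty with h | ⟨x0, h0⟩
    · rw [h]; simp
    apply card_le_card_of_injOn (fun x => x - x0)
    · intro x hx
      have hx' : cell x = y := by simpa using hx
      have h0' : cell x0 = y := by simpa using h0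
      simp only [mem_coe]
      rw [mem_bohr]
      intro γ hγ
      have hc := congrFun (hx'.trans h0'.symm) ⟨γ, hγ⟩
      simp only [hcell, Prod.mk.injEq] at hc
      have hre : |(γ x).re - (γ x0).re| ≤ 1 / M := by
        have h1 := Int.abs_sub_lt_one_of_floor_eq_floor hc.1
        rw [← mul_sub, abs_mul, abs_of_pos hMp] at h1
        rw [le_div_iff₀ hMp]; linarith
      have him : |(γ x).im - (γ x0).im| ≤ 1 / M := by
        have h1 := Int.abs_sub_lt_one_of_floor_eq_floor hc.2
        rw [← mul_sub, abs_mul, abs_of_pos hMp] at h1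
        rw [le_div_iff₀ hMp]; linarith
      have h2 : ‖1 - γ (x - x0)‖ = ‖γ x - γ x0‖ := by
        have : γ x - γ x0 = -(γ x0 * (1 - γ (x - x0))) := by
          rw [mul_sub, mul_one, ← AddChar.map_add_eq_mul]; simp
        rw [this, norm_neg, norm_mul, AddChar.norm_apply, one_mul]
      rw [h2]
      refine (Complex.norm_le_abs_re_add_abs_im _).trans ?_
      rw [Complex.sub_re, Complex.sub_im]
      have : 1 / (M:ℝ) + 1 / M ≤ ρ := by
        rw [← add_div, div_le_iff₀ hMp]; linarith
      linarith
    · intro a _ b _ h; simpa using h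
  have := card_le_mul_card_image_of_maps_to hmap _ hfib
  rw [card_univ, hcardY] at this
  exact_mod_cast this

/-- the twisted frequency set -/
noncomputable def tw (half : G →+ G) (Γ : Finset (AddChar G ℂ)) : Finset (AddChar G ℂ) :=
  Γ.image (fun γ => γ.compAddMonoidHom half)

lemma card_tw (half : G →+ G) (Γ : Finset (AddChar G ℂ)) : #(tw half Γ) ≤ #Γ := card_image_le

lemma mem_bohr_tw (half : G →+ G) (Γ : Finset (AddChar G ℂ)) (ρ : ℝ) (x : G) :
    x ∈ bohr (tw half Γ) ρ ↔ half x ∈ bohr Γ ρ := by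
  simp [mem_bohr, tw]

lemma dbl_mem_bohr_tw (half : G →+ G) (hh : ∀ x, half x + half x = x) (Γ : Finset (AddChar G ℂ))
    (ρ : ℝ) (x : G) : x + x ∈ bohr (tw half Γ) ρ ↔ x ∈ bohr Γ ρ := by
  rw [mem_bohr_tw, map_add, hh]

lemma bohr_tw_subset (half : G →+ G) (hh : ∀ x, half x + half x = x) (Γ : Finset (AddChar G ℂ))
    {ρ σ : ℝ} (h : 2 * ρ ≤ σ) : bohr (tw half Γ) ρ ⊆ bohr Γ σ := by
  intro x hx
  rw [mem_bohr_tw] at hx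
  rw [← hh x]
  exact add_mem_bohr hx hx (by linarith)

lemma card_bohr_tw (half : G →+ G) (hh : ∀ x, half x + half x = x) (Γ : Finset (AddChar G ℂ))
    (ρ : ℝ) : #(bohr (tw half Γ) ρ) = #(bohr Γ ρ) := by
  refine card_nbij' (fun x => half x) (fun x => x + x) ?_ ?_ ?_ ?_
  · intro x hx; exact (mem_bohr_tw half Γ ρ x).1 hx
  · intro x hx; exact (dbl_mem_bohr_tw half hh Γ ρ x).2 hx
  · intro x _; exact hh x
  · intro x _; simp only [map_add]; exact hh x

/-- count -/
noncomputable def cnt (A X : Finset G) (t : G) : ℝ := ∑ x ∈ X, ind A (t + x)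

lemma cnt_sum (A B X P : Finset G) (t : G) (hP : ∀ b ∈ B, ∀ x ∈ X, b - x ∈ P) :
    #X * cnt A B t ≤ ∑ s ∈ P, cnt A X (t + s) := by
  unfold cnt
  rw [sum_comm]
  have : ∀ x ∈ X, ∑ b ∈ B, ind A (t + b) ≤ ∑ s ∈ P, ind A (t + s + x) := by
    intro x hx
    calc ∑ b ∈ B, ind A (t + b) = ∑ s ∈ B.image (fun b => b - x), ind A (t + s + x) := by
          rw [sum_image (fun a _ b _ h => by simpa using h)]
          refine sum_congr rfl fun b _ => ?_
          congr 1; abel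
      _ ≤ _ := by
          apply sum_le_sum_of_subset_of_nonneg
          · intro z hz
            obtain ⟨b, hb, rfl⟩ := mem_image.1 hz
            exact hP b hb x hx
          · intro _ _ _; exact ind_nonneg _ _
  calc _ = ∑ x ∈ X, ∑ b ∈ B, ind A (t + b) := by simp
    _ ≤ _ := sum_le_sum this

/-- the invariant -/
def Inv (A : Finset G) (Γ : Finset (AddChar G ℂ)) (ρ α : ℝ) : Prop :=
  ∀ X ⊆ bohr Γ ρ, X.Nonempty → ∃ t, α * #X ≤ cnt A X t

lemma Inv.mono {A : Finset G} {Γ : Finset (AddChar G ℂ)} {ρ α ρ' α' : ℝ} (h : Inv A Γ ρ α)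
    (hρ : ρ' ≤ ρ) (hα : α' ≤ α) : Inv A Γ ρ' α' := by
  intro X hX hne
  obtain ⟨t, ht⟩ := h X (hX.trans (bohr_mono Γ hρ)) hne
  exact ⟨t, (mul_le_mul_of_nonneg_right hα (by positivity)).trans ht⟩

lemma descent (A B P : Finset G) (Γ : Finset (AddChar G ℂ)) (ρ β η : ℝ) (hβ : 0 ≤ β) (hη : 0 ≤ η)
    (t : G) (ht : β * #B ≤ cnt A B t) (hP : ∀ b ∈ B, ∀ x ∈ bohr Γ ρ, b - x ∈ P) (hPn : P.Nonempty)
    (hPc : (#P : ℝ) ≤ (1 + η) * #B) : Inv A Γ ρ (β / (1 + η)) := by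
  intro X hX hne
  by_contra hcon
  push Not at hcon
  have h1 := cnt_sum A B X P t (fun b hb x hx => hP b hb x (hX hx))
  have h2 : ∑ s ∈ P, cnt A X (t + s) < ∑ s ∈ P, β / (1 + η) * #X :=
    sum_lt_sum_of_nonempty hPn fun s _ => hcon (t + s)
  rw [sum_const, nsmul_eq_mul] at h2
  have hX0 : (0:ℝ) ≤ #X := by positivity
  have h3 : (#P : ℝ) * (β / (1 + η) * #X) ≤ (1 + η) * #B * (β / (1 + η) * #X) :=
    mul_le_mul_of_nonneg_right hPc (by positivity)
  have h4 : (1 + η) * #B * (β / (1 + η) * #X) = #X * (β * #B) := by field_simp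
  have h5 := mul_le_mul_of_nonneg_left ht hX0
  linarith

/-- two sets simultaneously -/
lemma two_sets (A B P X Y : Finset G) (β η : ℝ) (hβ : 0 ≤ β) (hη : 0 ≤ η)
    (t : G) (ht : β * #B ≤ cnt A B t) (hX : ∀ b ∈ B, ∀ x ∈ X, b - x ∈ P)
    (hY : ∀ b ∈ B, ∀ x ∈ Y, b - x ∈ P) (hPn : P.Nonempty)
    (hXn : X.Nonempty) (hYn : Y.Nonempty)
    (hPc : (#P : ℝ) ≤ (1 + η) * #B) :
    ∃ s, 2 * β / (1 + η) ≤ cnt A X s / #X + cnt A Y s / #Y := by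
  by_contra hcon
  push Not at hcon
  have hX0 : (0:ℝ) < #X := by exact_mod_cast hXn.card_pos
  have hY0 : (0:ℝ) < #Y := by exact_mod_cast hYn.card_pos
  have h1 := cnt_sum A B X P t hX
  have h1' := cnt_sum A B Y P t hY
  have h2 : ∑ s ∈ P, (cnt A X (t + s) / #X + cnt A Y (t + s) / #Y) < ∑ s ∈ P, 2 * β / (1 + η) :=
    sum_lt_sum_of_nonempty hPn fun s _ => hcon (t + s)
  rw [sum_const, nsmul_eq_mul, sum_add_distrib, ← sum_div, ← sum_div] at h2
  have h3 : (#P : ℝ) * (2 * β / (1 + η)) ≤ (1 + η) * #B * (2 * β / (1 + η)) :=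
    mul_le_mul_of_nonneg_right hPc (by positivity)
  have h4 : (1 + η) * #B * (2 * β / (1 + η)) = 2 * (β * #B) := by field_simp
  have h5 : cnt A B t ≤ (∑ s ∈ P, cnt A X (t + s)) / #X := by
    rw [le_div_iff₀ hX0]; linarith
  have h6 : cnt A B t ≤ (∑ s ∈ P, cnt A Y (t + s)) / #Y := by
    rw [le_div_iff₀ hY0]; linarith
  linarith

end KM

namespace KM
open Finset
variable {G : Type*} [AddCommGroup G] [Fintype G] [DecidableEq G]

lemma sum_ind_mul (X : Finset G) (g : G → ℝ) : ∑ a, ind X a * g a = ∑ a ∈ X, g a := by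
  simp [ind, ite_mul, sum_ite_mem]

lemma sum_ind (X : Finset G) : ∑ a, ind X a = #X := by
  simp [ind]

lemma dens (X B P : Finset G) (η : ℝ) (σ : G ≃ G) (hX : X ⊆ B) (hBP : B ⊆ P)
    (hP : (#P : ℝ) ≤ (1 + η) * #B) (hσ : ∀ a ∈ B, σ a ∈ P) :
    (#X : ℝ) - η * #B ≤ ∑ a, ind X a * ind B (σ a) ∧ ∑ a, ind X a * ind B (σ a) ≤ #X := by
  rw [sum_ind_mul]
  constructor
  · have h1 : ∑ a ∈ X, ind P (σ a) = #X := by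
      rw [sum_congr rfl (fun a ha => show ind P (σ a) = 1 by simp [ind, hσ a (hX ha)])]; simp
    have h2 : ∑ a ∈ X, (ind P (σ a) - ind B (σ a)) ≤ ∑ a, (ind P (σ a) - ind B (σ a)) := by
      apply sum_le_sum_of_subset_of_nonneg (subset_univ _)
      intro a _ _
      unfold ind
      by_cases h : σ a ∈ B
      · simp [h, hBP h]
      · simp only [h, if_false, sub_zero]; split_ifs <;> norm_num
    rw [Equiv.sum_comp σ (fun a => ind P a - ind B a), sum_sub_distrib, sum_sub_distrib, sum_ind, sum_ind, h1] at h2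
    linarith
  · calc ∑ a ∈ X, ind B (σ a) ≤ ∑ a ∈ X, 1 := sum_le_sum fun a _ => ind_le_one _ _
      _ = #X := by simp

lemma f_err (A B P : Finset G) (α η : ℝ) (σ : G ≃ G) (hA : A ⊆ B) (hBP : B ⊆ P)
    (hP : (#P : ℝ) ≤ (1 + η) * #B) (hσ : ∀ a ∈ B, σ a ∈ P) (hσ' : ∀ a ∈ B, σ.symm a ∈ P)
    (hα : (#A : ℝ) = α * #B) (hα0 : 0 ≤ α) (hα1 : α ≤ 1) (hη : 0 ≤ η) :
    |∑ a, (ind A (σ a) - α * ind B (σ a)) * (ind A a - α * ind B a)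
      - (∑ a, ind A (σ a) * ind A a - α * #A)| ≤ 2 * α * η * #B := by
  obtain ⟨h1, h2⟩ := dens A B P η σ hA hBP hP hσ
  obtain ⟨h3, h4⟩ := dens A B P η σ.symm hA hBP hP hσ'
  obtain ⟨h5, h6⟩ := dens B B P η σ subset_rfl hBP hP hσ
  have e : ∑ a, ind A a * ind B (σ.symm a) = ∑ a, ind A (σ a) * ind B a := by
    rw [← Equiv.sum_comp σ]; simp
  rw [e] at h3 h4
  set s1 := ∑ a, ind A a * ind B (σ a)
  set s2 := ∑ a, ind A (σ a) * ind B a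
  set s3 := ∑ a, ind B a * ind B (σ a)
  have e2 : ∑ a, (ind A (σ a) - α * ind B (σ a)) * (ind A a - α * ind B a)
      = ∑ a, ind A (σ a) * ind A a - α * s2 - α * s1 + α ^ 2 * s3 := by
    simp only [s1, s2, s3, mul_sum, ← sum_sub_distrib, ← sum_add_distrib]
    refine sum_congr rfl fun a _ => ?_
    ring
  rw [e2, abs_le]
  have hn : (0:ℝ) ≤ #B := by positivity
  have b1 := mul_le_mul_of_nonneg_left h1 hα0
  have b2 := mul_le_mul_of_nonneg_left h2 hα0
  have b3 := mul_le_mul_of_nonneg_left h3 hα0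
  have b4 := mul_le_mul_of_nonneg_left h4 hα0
  have b5 := mul_le_mul_of_nonneg_left h5 (sq_nonneg α)
  have b6 := mul_le_mul_of_nonneg_left h6 (sq_nonneg α)
  have b7 : α ^ 2 * (η * #B) ≤ α * (η * #B) := mul_le_mul_of_nonneg_right (by nlinarith) (by positivity)
  have b8 : 0 ≤ α * (η * #B) := by positivity
  rw [hα] at b1 b2 b3 b4 ⊢
  constructor <;> nlinarith

lemma moments (A1 B P A2 Tt D : Finset G) (α η m : ℝ) (p : ℕ)
    (hA : A1 ⊆ B) (hBP : B ⊆ P) (hP : (#P : ℝ) ≤ (1 + η) * #B)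
    (hα : (#A1 : ℝ) = α * #B) (hα0 : 0 < α) (hα1 : α ≤ 1) (hη : 0 ≤ η) (hηα : η ≤ α / 100)
    (hm : m = α * #A1) (hm0 : 0 < m)
    (hBs : ∀ x ∈ B, -x ∈ B) (hDs : ∀ x ∈ D, -x ∈ D) (hD : D.Nonempty)
    (hw1 : ∀ x ∈ D, ∀ y ∈ D, ∀ a ∈ B, a + (x - y) ∈ P)
    (hw2 : ∀ z ∈ A2, ∀ a ∈ B, z + z - a ∈ P)
    (hinj : ∀ x y : G, x + x = y + y → x = y)
    (hT : ∀ x ∈ D, ∀ y ∈ D, ∀ z ∈ A2, z + z - (x - y) ∈ Tt)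
    (hAP : ∀ z ∈ A2, cv (ind A1) (z + z) ≤ m / 50)
    (hcard : 0.9 ^ p * (#Tt : ℝ) ≤ 0.96 ^ p * #A2) (hTt : Tt.Nonempty)
    (hp : Even p) (hp3 : 3 ≤ p) (h8 : 4 * (0.8:ℝ) ^ p ≤ 0.9 ^ p) :
    (1.5 * m) ^ (2 * (p + 1)) * (#D : ℝ) ^ 2 ≤
      ∑ x ∈ D, ∑ y ∈ D, (dc (ind A1) (x - y)) ^ (2 * (p + 1)) := by
  set f : G → ℝ := fun a => ind A1 a - α * ind B a with hf
  have herr : 2 * α * η * #B ≤ m / 50 := by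
    rw [hm, hα]
    have : 0 ≤ 2 * α * #B := by positivity
    nlinarith
  have hdc : ∀ x ∈ D, ∀ y ∈ D, dc f (x - y) + 0.98 * m ≤ dc (ind A1) (x - y) := by
    intro x hx y hy
    have h := f_err A1 B P α η (Equiv.addRight (x - y)) hA hBP hP
      (fun a ha => by simpa using hw1 x hx y hy a ha)
      (fun a ha => by
        have := hw1 y hy x hx a ha
        simp only [Equiv.addRight_symm, Equiv.coe_addRight]
        convert this using 1; abel) hα hα0.le hα1 hη
    simp only [Equiv.coe_addRight] at h
    rw [abs_le] at h
    have := h.2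
    rw [← hm] at this
    unfold dc
    linarith
  have hcv : ∀ z ∈ A2, cv f (z + z) ≤ -(0.96 * m) := by
    intro z hz
    have h := f_err A1 B P α η (Equiv.subLeft (z + z)) hA hBP hP
      (fun a ha => by simpa using hw2 z hz a ha)
      (fun a ha => by
        have := hw2 z hz a ha
        simp only [Equiv.subLeft_symm_apply]
        convert this using 1; abel) hα hα0.le hα1 hη
    simp only [Equiv.subLeft_apply] at h
    rw [abs_le] at h
    have h2 := h.2
    rw [← hm] at h2
    have h3 := hAP z hz
    unfold cv at h3 ⊢
    have e1 : ∑ a, f a * f (z + z - a) = ∑ a, (ind A1 (z + z - a) - α * ind B (z + z - a)) * (ind A1 a - α * ind B a) :=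
      sum_congr rfl fun a _ => by simp only [hf]; ring
    have e2 : ∑ a, ind A1 a * ind A1 (z + z - a) = ∑ a, ind A1 (z + z - a) * ind A1 a :=
      sum_congr rfl fun a _ => by ring
    rw [e1]; rw [e2] at h3
    linarith
  -- lower bound for moments
  have hlow : ∀ x ∈ D, ∀ y ∈ D, (0.96 * m) ^ p * #A2 ≤ ∑ t ∈ Tt, cv f (x - y + t) ^ p := by
    intro x hx y hy
    calc (0.96 * m) ^ p * #A2 = ∑ z ∈ A2, (0.96 * m) ^ p := by rw [sum_const, nsmul_eq_mul]; ring
      _ ≤ ∑ z ∈ A2, cv f (z + z) ^ p := by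
          apply sum_le_sum
          intro z hz
          rw [← hp.neg_pow (cv f (z + z))]
          exact pow_le_pow_left₀ (by positivity) (by linarith [hcv z hz]) p
      _ = ∑ t ∈ A2.image (fun z => z + z - (x - y)), cv f (x - y + t) ^ p := by
          rw [sum_image (fun a _ b _ h => hinj a b (by simpa using h))]
          refine sum_congr rfl fun z _ => ?_
          congr 2; abel
      _ ≤ _ := by
          apply sum_le_sum_of_subset_of_nonneg
          · intro t ht
            obtain ⟨z, hz, rfl⟩ := mem_image.1 ht
            exact hT x hx y hy z hz
          · intro t _ _; exact hp.pow_nonneg _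
  have hmom : (0.9 * m) ^ p * (#D : ℝ) ^ 2 ≤ ∑ x ∈ D, ∑ y ∈ D, (dc f (x - y)) ^ p := by
    have h1 : (#D : ℝ) ^ 2 * ((0.96 * m) ^ p * #A2) ≤ #Tt * ∑ x ∈ D, ∑ y ∈ D, (dc f (x - y)) ^ p := by
      calc (#D : ℝ) ^ 2 * ((0.96 * m) ^ p * #A2) = ∑ x ∈ D, ∑ y ∈ D, ((0.96 * m) ^ p * #A2) := by
            simp only [sum_const, nsmul_eq_mul]; ring
        _ ≤ ∑ x ∈ D, ∑ y ∈ D, ∑ t ∈ Tt, cv f (x - y + t) ^ p :=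
            sum_le_sum fun x hx => sum_le_sum fun y hy => hlow x hx y hy
        _ = ∑ t ∈ Tt, ∑ x ∈ D, ∑ y ∈ D, cv f (x - y + t) ^ p := by
            rw [sum_comm (s := Tt) (t := D)]
            refine sum_congr rfl fun x _ => ?_
            rw [sum_comm]
        _ ≤ ∑ t ∈ Tt, ∑ x ∈ D, ∑ y ∈ D, (dc f (x - y)) ^ p :=
            sum_le_sum fun t _ => sum_cv_pow_le f D hDs p t
        _ = _ := by rw [sum_const, nsmul_eq_mul]
    have hTp : (0:ℝ) < #Tt := by exact_mod_cast hTt.card_pos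
    have h2 : (0.9 * m) ^ p * (#D : ℝ) ^ 2 * #Tt ≤ (#D : ℝ) ^ 2 * ((0.96 * m) ^ p * #A2) := by
      rw [mul_pow, mul_pow]
      have := mul_le_mul_of_nonneg_left hcard (by positivity : 0 ≤ m ^ p * (#D : ℝ) ^ 2)
      nlinarith
    have h3 := h2.trans h1
    rw [mul_comm (#Tt : ℝ)] at h3
    exact le_of_mul_le_mul_right h3 hTp
  have hodd : 0 ≤ ∑ x ∈ D, ∑ y ∈ D, (dc f (x - y)) ^ (p + 1) := by
    rw [sum_dc_pow]; exact sum_nonneg fun _ _ => sq_nonneg _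
  have hu := unbalance (D ×ˢ D) (fun w => dc f (w.1 - w.2) / m) (fun w => dc (ind A1) (w.1 - w.2) / m)
    p hp hp3 h8 (fun w _ => div_nonneg (dc_ind_nonneg _ _) hm0.le)
    (fun w hw => by
      rw [mem_product] at hw
      have := hdc w.1 hw.1 w.2 hw.2
      rw [le_div_iff₀ hm0, add_mul, div_mul_cancel₀ _ hm0.ne']; exact this)
    (by
      simp only [div_pow]
      rw [← sum_div, sum_product]
      exact div_nonneg hodd (by positivity))
    (by
      simp only [div_pow]
      rw [← sum_div, sum_product, le_div_iff₀ (by positivity), card_product]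
      push_cast
      rw [mul_pow] at hmom
      nlinarith)
  simp only [div_pow] at hu
  rw [← sum_div, sum_product, le_div_iff₀ (by positivity), card_product] at hu
  push_cast at hu
  rw [mul_pow]
  nlinarith

/-- averaging back -/
lemma Av_back (T X : Finset G) (hT : T.Nonempty) (g : G → ℝ) (c : ℝ) (h : ∀ u, ∑ x ∈ X, g (x + u) ≤ c) (K : ℕ) :
    ∀ u, ∑ x ∈ X, (Av T)^[K] g (x + u) ≤ c := by
  induction K generalizing g with
  | zero => simpa using h
  | succ K ih =>
    rw [Function.iterate_succ]
    apply ih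
    intro u
    have hp : (0:ℝ) < #T := by exact_mod_cast hT.card_pos
    simp only [Av]
    rw [← sum_div, div_le_iff₀ (by positivity), sum_comm]
    calc _ = ∑ t ∈ T, ∑ t' ∈ T, ∑ x ∈ X, g (x + u + (t - t')) :=
          sum_congr rfl fun t _ => sum_comm
      _ ≤ ∑ t ∈ T, ∑ t' ∈ T, c := by
          refine sum_le_sum fun t _ => sum_le_sum fun t' _ => ?_
          simp only [add_assoc]
          exact h (u + (t - t'))
      _ = _ := by simp only [sum_const, nsmul_eq_mul]; ring

lemma back (A S A2 T X : Finset G) (hA : A.Nonempty) (hA2 : A2.Nonempty) (hT : T.Nonempty) (K : ℕ) (c : ℝ)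
    (h : c ≤ ∑ x ∈ X, (Av T)^[K] (HH A S A2) x) : ∃ u, c ≤ ∑ x ∈ X, ind S (x + u) := by
  obtain ⟨u0, -, hu0⟩ := exists_max_image (univ : Finset G) (fun u => ∑ x ∈ X, ind S (x + u)) ⟨0, mem_univ _⟩
  refine ⟨u0, ?_⟩
  set c' := ∑ x ∈ X, ind S (x + u0)
  have hAp : (0:ℝ) < #A := by exact_mod_cast hA.card_pos
  have hA2p : (0:ℝ) < #A2 := by exact_mod_cast hA2.card_pos
  have h1 : ∀ u, ∑ x ∈ X, avg A S (x + u) ≤ c' := by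
    intro u
    simp only [avg]
    rw [← sum_div, div_le_iff₀ hAp, sum_comm]
    calc _ ≤ ∑ a ∈ A, c' := by
          refine sum_le_sum fun a _ => ?_
          have := hu0 (u + a) (mem_univ _)
          refine le_trans (le_of_eq ?_) this
          exact sum_congr rfl fun x _ => by congr 1; abel
      _ = _ := by simp only [sum_const, nsmul_eq_mul]; ring
  have h2 : ∀ u, ∑ x ∈ X, HH A S A2 (x + u) ≤ c' := by
    intro u
    simp only [HH]
    rw [← sum_div, div_le_iff₀ hA2p, sum_comm]
    calc _ ≤ ∑ a ∈ A2, c' := by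
          refine sum_le_sum fun a _ => ?_
          have := h1 (u - a)
          refine le_trans (le_of_eq ?_) this
          exact sum_congr rfl fun x _ => by congr 1; abel
      _ = _ := by simp only [sum_const, nsmul_eq_mul]; ring
  have h3 := Av_back T X hT (HH A S A2) c' h2 K 0
  simp only [add_zero] at h3
  linarith

lemma final_back (A A1 S X : Finset G) (s x0 u : G) (α m : ℝ) (hm : m = α * #A1) (hm0 : 0 ≤ m) (hA1 : A1.Nonempty)
    (hA : ∀ a ∈ A1, s + a ∈ A)
    (hS : ∀ w ∈ S, 1.3 * m ≤ dc (ind A1) (w - x0)) (hu : 0.93 * #X ≤ ∑ x ∈ X, ind S (x + u)) :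
    ∃ t, 1.2 * α * #X ≤ cnt A X t := by
  have h1 : 1.2 * m * #X ≤ ∑ x ∈ X, dc (ind A1) (x + u - x0) := by
    have : 1.3 * m * ∑ x ∈ X, ind S (x + u) ≤ ∑ x ∈ X, dc (ind A1) (x + u - x0) := by
      rw [mul_sum]
      refine sum_le_sum fun x _ => ?_
      unfold ind
      split_ifs with h
      · rw [mul_one]; exact hS _ h
      · rw [mul_zero]; exact dc_ind_nonneg _ _
    have h2 := mul_le_mul_of_nonneg_left hu (by positivity : 0 ≤ 1.3 * m)
    have h3 : 0 ≤ m * #X := by positivity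
    nlinarith
  have h2 : ∑ x ∈ X, dc (ind A1) (x + u - x0) = ∑ a ∈ A1, ∑ x ∈ X, ind A1 (a + (x + u - x0)) := by
    rw [sum_comm]
    refine sum_congr rfl fun x _ => ?_
    rw [← sum_ind_mul]
    exact sum_congr rfl fun a _ => mul_comm _ _
  have h3 : ∑ a ∈ A1, (1.2 * α * #X) ≤ ∑ a ∈ A1, ∑ x ∈ X, ind A1 (a + (x + u - x0)) := by
    rw [← h2, sum_const, nsmul_eq_mul]
    rw [hm] at h1
    linarith
  obtain ⟨a, ha, h4⟩ := exists_le_of_sum_le hA1 h3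
  refine ⟨s + (a + (u - x0)), h4.trans ?_⟩
  refine sum_le_sum fun x _ => ?_
  have e : s + (a + (u - x0)) + x = s + (a + (x + u - x0)) := by abel
  rw [e]
  by_cases h : a + (x + u - x0) ∈ A1
  · simp [ind, h, hA _ h]
  · simp only [ind, h, if_false]; split_ifs <;> norm_num

lemma cv_ap (A A1 : Finset G) (s z : G) (hfree : ∀ a ∈ A, ∀ b ∈ A, ∀ c ∈ A, a + c = b + b → a = b)
    (hA : ∀ a ∈ A1, s + a ∈ A) (hz : s + z ∈ A) : cv (ind A1) (z + z) ≤ 1 := by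
  unfold cv
  rw [sum_ind_mul]
  calc ∑ a ∈ A1, ind A1 (z + z - a) ≤ ∑ a ∈ A1, (if a = z then (1:ℝ) else 0) := by
        refine sum_le_sum fun a ha => ?_
        by_cases h : z + z - a ∈ A1
        · have := hfree _ (hA a ha) _ hz _ (hA _ h) (by abel)
          simp only [ind, h, if_true]
          rw [if_pos (by simpa using this)]
        · simp only [ind, h, if_false]; split_ifs <;> norm_num
    _ ≤ 1 := by
        rw [sum_ite_eq' A1 z]; split_ifs <;> norm_num

end KM

namespace KM
open Finset
variable {G : Type*} [AddCommGroup G] [Fintype G] [DecidableEq G]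

/-- regularity hypothesis for one frequency set -/
def Reg (Γ : Finset (AddChar G ℂ)) (η κ : ℝ) : Prop :=
  ∀ ρ : ℝ, 0 < ρ → ∃ r, ρ / 2 ≤ r ∧ r + κ * ρ ≤ ρ ∧
      (#(bohr Γ (r + κ * ρ)) : ℝ) ≤ (1 + η) * #(bohr Γ r)

set_option maxHeartbeats 2000000 in
open Classical in
lemma ap_step (Γ : Finset (AddChar G ℂ)) (η κ θ ε ρ4 r4 : ℝ) (K k M : ℕ) (hreg : Reg Γ η κ)
    (hη0 : 0 ≤ η) (hη1 : η ≤ 1) (hκ0 : 0 < κ) (hκK : κ * (2 * K + 2) ≤ 1) (hθ0 : 0 < θ) (hθ1 : θ ≤ 1)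
    (hK : 0 < K) (hk : 0 < k) (hε : 0 ≤ ε)
    (hN2 : K * (2 * ε + 64 * Real.exp (-(k * ε ^ 2 / 2)) / θ) ≤ 1 / 100)
    (hN3 : 4 * (2 / θ) ^ k < Real.exp ((M + 1) / 8))
    (hN4 : 2 / θ * ((M + 1) * κ + 2 * η * 2 ^ (M + 1) + 2 * (1 / 4) ^ K) ≤ 1 / 50)
    (hρ4 : 0 < ρ4) (hρ41 : ρ4 ≤ 1) (hr4 : ρ4 / 2 ≤ r4) (hr4c : (#(bohr Γ (r4 + κ * ρ4)) : ℝ) ≤ (1 + η) * #(bohr Γ r4))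
    (bad : G → Prop) (A' : Finset G) (hA' : A'.Nonempty) (hsub : A' ⊆ bohr Γ r4)
    (hc : θ * #(bohr Γ r4) ≤ #A')
    (hbad : ∑ x ∈ A', ∑ y ∈ A', (if bad (x - y) then (1:ℝ) else 0) ≤ (#A' : ℝ) ^ 2 / 100) :
    ∃ Λ : Finset (AddChar G ℂ), #Λ ≤ M ∧ ∀ X ⊆ bohr (Γ ∪ Λ) (κ ^ 4 * ρ4),
      ∃ u, 0.93 * (#X : ℝ) ≤ ∑ x ∈ X, ind (univ.filter (fun w => ¬ bad w)) (x + u) := by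
  have hKr : (1:ℝ) ≤ K := by exact_mod_cast hK
  have hκ1 : κ ≤ 1 := by
    have : κ * 1 ≤ κ * (2 * K + 2) := mul_le_mul_of_nonneg_left (by linarith) hκ0.le
    linarith
  set ρ5 := κ * ρ4 with hρ5
  have hρpa : 0 < ρ5 := by positivity
  obtain ⟨r5, hr5, hr5', hr5c⟩ := hreg ρ5 hρpa
  set ρ6 := κ * ρ5 / (2 * K + 2) with hρ6
  have hρpb : 0 < ρ6 := by positivity
  have hρKb : ρ6 * (2 * K + 2) = κ * ρ5 := by rw [hρ6]; field_simp
  obtain ⟨r6, hr6, hr6', hr6c⟩ := hreg ρ6 hρpb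
  have hκρ5 : 0 < κ * ρ5 := by positivity
  have hκρ6 : 0 < κ * ρ6 := by positivity
  have hρ51 : ρ5 ≤ 1 := mul_le_one₀ hκ1 hρ4.le hρ41
  have hρ65 : ρ6 ≤ κ * ρ5 := by
    have : ρ6 * 1 ≤ ρ6 * (2 * K + 2) := mul_le_mul_of_nonneg_left (by linarith) hρpb.le
    linarith
  have hρ65' : ρ6 ≤ ρ5 := by
    have : κ * ρ5 ≤ 1 * ρ5 := mul_le_mul_of_nonneg_right hκ1 hρpa.le
    linarith
  have hρ61 : ρ6 ≤ 1 := by linarith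
  set D := bohr Γ r4 with hD
  set PD := bohr Γ (r4 + ρ5) with hPD
  set D' := bohr Γ r5 with hD'
  set P5 := bohr Γ (r5 + κ * ρ5) with hP5
  set E := bohr Γ r6 with hE
  set P6 := bohr Γ (r6 + κ * ρ6) with hP6
  have hDp : (0:ℝ) < #D := card_bohr_pos Γ (by linarith)
  have hD'p : (0:ℝ) < #D' := card_bohr_pos Γ (by linarith)
  have hEp : (0:ℝ) < #E := card_bohr_pos Γ (by linarith)
  have hA'p : (0:ℝ) < #A' := by exact_mod_cast hA'.card_pos
  have hPD2 : (#PD : ℝ) ≤ 2 * #D :=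
    hr4c.trans (mul_le_mul_of_nonneg_right (by linarith) hDp.le)
  have hP52 : (#P5 : ℝ) ≤ 2 * #D' :=
    hr5c.trans (mul_le_mul_of_nonneg_right (by linarith) hD'p.le)
  obtain ⟨x0, A2, hA2s, hA2, hA2c, hA2b⟩ := localize A' D D' (fun w => if bad w then (1:ℝ) else 0)
    (fun w => by positivity) θ hA' (bohr_nonempty Γ (by linarith)) hsub hθ0.le hc hbad PD
    (fun x hx y hy => sub_mem_bohr hx hy (by linarith)) hPD2
  have hA2p : (0:ℝ) < #A2 := lt_of_lt_of_le (by positivity) hA2c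
  have hA2n : A2.Nonempty := by
    rw [← card_pos]; exact_mod_cast hA2p
  set S := PD.filter (fun w => ¬ bad (w - x0)) with hS
  have hH0 : 39 / 40 ≤ HH A' S A2 0 := by
    unfold HH avg
    rw [← sum_div, div_div, le_div_iff₀ (by positivity), sum_comm]
    have : ∀ a ∈ A', ∀ b ∈ A2, ind S (a + (0 - b)) = 1 - (if bad (a - (x0 + b)) then (1:ℝ) else 0) := by
      intro a ha b hb
      have h1 : a + (0 - b) ∈ PD := by
        rw [zero_sub, ← sub_eq_add_neg]
        exact sub_mem_bohr (hsub ha) (hA2s hb) (by linarith)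
      have h2 : a + (0 - b) - x0 = a - (x0 + b) := by abel
      have h3 : a + (0 - b) ∈ S ↔ ¬ bad (a - (x0 + b)) := by
        rw [hS, mem_filter, h2]
        exact ⟨fun h => h.2, fun h => ⟨h1, h⟩⟩
      unfold ind
      by_cases h : bad (a - (x0 + b))
      · rw [if_neg (by rw [h3]; exact not_not.2 h), if_pos h]; norm_num
      · rw [if_pos (h3.2 h), if_neg h]; norm_num
    rw [sum_congr rfl fun a ha => sum_congr rfl fun b hb => this a ha b hb]
    simp only [sum_sub_distrib, sum_const, nsmul_eq_mul, mul_one]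
    linarith
  obtain ⟨T, hTE, hTc, hTu⟩ := croot_sisask A' S A2 P5 PD E k hk ε hε hA'
    (bohr_nonempty Γ (by linarith)) (fun a ha t ht => add_mem_bohr (hsub ha) ht (by linarith))
  have hTp : (0:ℝ) < #T := by
    by_contra h
    have h0 : (#T : ℝ) = 0 := le_antisymm (not_lt.1 h) (by positivity)
    rw [h0, mul_zero] at hTc
    have : (0:ℝ) < #E * (#A':ℝ) ^ k := by positivity
    linarith
  have hTn : T.Nonempty := by rw [← card_pos]; exact_mod_cast hTp
  set e1 := 2 * ε + 64 * Real.exp (-(k * ε ^ 2 / 2)) / θ with he1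
  have hclose : |(Av T)^[K] (HH A' S A2) 0 - HH A' S A2 0| ≤ K * e1 := by
    refine Av_iter_close T hTn (HH A' S A2) K e1 (fun n => (bohr Γ (2 * n * ρ6) : Set G)) ?_ ?_ K 0 (by omega) 0 ?_
    · intro n u hu t ht t' ht'
      have h1 : t - t' ∈ bohr Γ (2 * ρ6) := sub_mem_bohr (hTE ht) (hTE ht') (by linarith)
      exact mem_coe.2 (add_mem_bohr (mem_coe.1 hu) h1 (by push_cast; linarith))
    · intro n hn u hu t ht t' ht'
      have hn' : (n:ℝ) + 1 ≤ K := by exact_mod_cast hn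
      have h1 : t - t' ∈ bohr Γ (2 * ρ6) := sub_mem_bohr (hTE ht) (hTE ht') (by linarith)
      have hn2 : 2 * (n + 1) * ρ6 ≤ κ * ρ5 := by
        rw [← hρKb, mul_comm]
        exact mul_le_mul_of_nonneg_left (by linarith) hρpb.le
      have h2 := hTu u t ht t' ht' (fun b hb => by
        constructor
        · exact sub_mem_bohr (mem_coe.1 hu) (hA2s hb) (by linarith)
        · exact sub_mem_bohr (add_mem_bohr (mem_coe.1 hu) h1 le_rfl) (hA2s hb) (by linarith))
      unfold HH
      rw [← sub_div, abs_div, abs_of_pos hA2p, div_le_iff₀ hA2p]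
      refine h2.trans ?_
      rw [he1, add_mul]
      have h3 : (#P5 : ℝ) ≤ 8 / θ * #A2 := by
        have h4 : θ * #D' ≤ 4 * #A2 := by linarith
        rw [div_mul_eq_mul_div, le_div_iff₀ hθ0]
        have := mul_le_mul_of_nonneg_right hP52 hθ0.le
        linarith
      have h5 := mul_le_mul_of_nonneg_left h3 (by positivity : 0 ≤ 8 * Real.exp (-(k * ε ^ 2 / 2)))
      have h6 : 8 * Real.exp (-(k * ε ^ 2 / 2)) * (8 / θ * #A2) = 64 * Real.exp (-(k * ε ^ 2 / 2)) / θ * #A2 := by ring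
      linarith
    · exact mem_coe.2 (zero_mem_bohr Γ (by positivity))
  have hAPD : (#PD : ℝ) ≤ 2 / θ * #A' := by
    rw [div_mul_eq_mul_div, le_div_iff₀ hθ0]
    have := mul_le_mul_of_nonneg_right hPD2 hθ0.le
    linarith
  have hM : 2 * (#E : ℝ) < #T * Real.exp ((M + 1) / 8) := by
    have h1 : (#PD : ℝ) ^ k ≤ (2 / θ) ^ k * (#A' : ℝ) ^ k := by
      rw [← mul_pow]; exact pow_le_pow_left₀ (by positivity) hAPD k
    have h2 : (#E : ℝ) * (#A' : ℝ) ^ k ≤ 2 * ((2 / θ) ^ k * (#A' : ℝ) ^ k) * #T :=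
      hTc.trans (by gcongr)
    have h3 : (#E : ℝ) ≤ 2 * (2 / θ) ^ k * #T := by
      have : (0:ℝ) < (#A' : ℝ) ^ k := by positivity
      refine le_of_mul_le_mul_right ?_ this
      linarith
    have h4 := mul_lt_mul_of_pos_right hN3 hTp
    linarith
  obtain ⟨Λ, hΛ, hsp⟩ := spec_cover E T P6 hTE hTn M η (κ * ρ6) hκρ6.le hη0 hM
    (bohr_mono Γ (by linarith)) hr6c
  refine ⟨Λ, hΛ, fun X hX => ?_⟩
  have hrad : κ ^ 4 * ρ4 ≤ κ * ρ6 := by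
    have h1 : κ ^ 4 * ρ4 = κ * (κ * (κ * ρ5)) := by rw [hρ5]; ring
    rw [h1]
    apply mul_le_mul_of_nonneg_left _ hκ0.le
    have : κ * (κ * ρ5) = κ * (2 * K + 2) * ρ6 := by rw [← hρKb]; ring
    rw [this]
    have := mul_le_mul_of_nonneg_right hκK hρpb.le
    linarith
  set δ := M * (κ * ρ6) + κ * ρ6 + 2 * η * 2 ^ (M + 1) with hδ
  have hpt : ∀ x ∈ X, 0.93 ≤ (Av T)^[K] (HH A' S A2) x := by
    intro x hx
    have hx' := bohr_mono (Γ ∪ Λ) hrad (hX hx)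
    rw [mem_bohr] at hx'
    have hsm := smooth_close A' S A2 T hA' hA2n hTn K δ (by positivity) x (by
      intro γ hγ
      refine hsp γ hγ x ?_ ?_
      · intro z hz
        refine add_mem_bohr hz (mem_bohr.2 fun γ hγ => hx' γ (mem_union_left _ hγ)) le_rfl
      · intro l hl; exact hx' l (mem_union_right _ hl))
    have hsq : Real.sqrt (#S / #A') ≤ 2 / θ := by
      rw [Real.sqrt_le_left (by positivity)]
      have h1 : (#S : ℝ) ≤ #PD := by exact_mod_cast card_filter_le _ _
      rw [div_le_iff₀ hA'p]
      have h2 : 1 ≤ 2 / θ := by rw [le_div_iff₀ hθ0]; linarith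
      have h3 : 2 / θ * #A' ≤ (2 / θ) ^ 2 * #A' := by
        apply mul_le_mul_of_nonneg_right _ hA'p.le
        rw [sq]
        have := mul_le_mul_of_nonneg_left h2 (by positivity : 0 ≤ 2 / θ)
        linarith
      linarith
    have hδ' : δ + 2 * (1 / 4) ^ K ≤ (M + 1) * κ + 2 * η * 2 ^ (M + 1) + 2 * (1 / 4) ^ K := by
      rw [hδ]
      have : κ * ρ6 ≤ κ := mul_le_of_le_one_right hκ0.le hρ61
      have h2 := mul_le_mul_of_nonneg_left this (by positivity : (0:ℝ) ≤ M + 1)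
      linarith
    have hfin := mul_le_mul hsq hδ' (by positivity) (by positivity)
    rw [abs_le] at hsm hclose
    have := hsm.1
    have := hclose.1
    linarith
  obtain ⟨u, hu⟩ := back A' S A2 T X hA' hA2n hTn K (0.93 * #X) (by
    calc 0.93 * (#X : ℝ) = ∑ x ∈ X, (0.93:ℝ) := by rw [sum_const, nsmul_eq_mul]; ring
      _ ≤ _ := sum_le_sum hpt)
  refine ⟨u - x0, hu.trans (sum_le_sum fun x _ => ?_)⟩
  have e : x + (u - x0) = x + u - x0 := by abel
  rw [e]
  unfold ind
  simp only [hS, mem_filter, mem_univ, true_and]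
  by_cases h : bad (x + u - x0) <;> simp [h]
  split_ifs <;> norm_num
end KM

namespace KM
open Finset
variable {G : Type*} [AddCommGroup G] [Fintype G] [DecidableEq G]

lemma cnt_eq (A B : Finset G) (s : G) : cnt A B s = #(B.filter (fun x => s + x ∈ A)) := by
  simp [cnt, ind, sum_ite]

set_option maxHeartbeats 2000000 in
lemma step (half : G →+ G) (hh : ∀ x, half x + half x = x) (A : Finset G)
    (hfree : ∀ a ∈ A, ∀ b ∈ A, ∀ c ∈ A, a + c = b + b → a = b)
    (Γ : Finset (AddChar G ℂ)) (ρ α η κ θ ε : ℝ) (p K k M : ℕ)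
    (hreg : ∀ Γ' : Finset (AddChar G ℂ), Reg Γ' η κ)
    (hη0 : 0 ≤ η) (hη1 : η ≤ 1 / 1000) (hηα : η ≤ α / 200)
    (hκ0 : 0 < κ) (hκ16 : κ ≤ 1 / 16) (hκK : κ * (2 * K + 2) ≤ 1) (hθ0 : 0 < θ)
    (hα0 : 0 < α) (hα1 : α ≤ 1)
    (hK : 0 < K) (hk : 0 < k) (hε : 0 ≤ ε)
    (hN2 : K * (2 * ε + 64 * Real.exp (-(k * ε ^ 2 / 2)) / θ) ≤ 1 / 100)
    (hN3 : 4 * (2 / θ) ^ k < Real.exp ((M + 1) / 8))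
    (hN4 : 2 / θ * ((M + 1) * κ + 2 * η * 2 ^ (M + 1) + 2 * (1 / 4) ^ K) ≤ 1 / 50)
    (hp : Even p) (hp3 : 3 ≤ p) (h8 : 4 * (0.8:ℝ) ^ p ≤ 0.9 ^ p)
    (hpα : (0.9:ℝ) ^ p * 1.01 ≤ 0.96 ^ p * 0.95 * α)
    (hq : 100 * (1.3:ℝ) ^ (2 * (p + 1)) + 1 < 1.5 ^ (2 * (p + 1)))
    (hθα : θ ≤ (α / 2) ^ (2 * (p + 1)))
    (hρ0 : 0 < ρ) (hρ1 : ρ ≤ 1)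
    (hbig : 100 ≤ α ^ 2 * #(bohr Γ (κ * ρ / 2)))
    (hinv : Inv A Γ ρ α) :
    ∃ Γ' : Finset (AddChar G ℂ), #Γ' ≤ #Γ + M ∧ Inv A Γ' (κ ^ 8 * ρ) (1.01 * α) := by
  classical
  have hκ1 : κ ≤ 1 := by linarith
  set ρ2 := κ * ρ with hρ2
  set ρ3 := κ * ρ2 / 8 with hρ3
  set ρ4 := κ * ρ3 / 2 with hρ4
  have hρ_v2p : 0 < ρ2 := by positivity
  have hρ_v3p : 0 < ρ3 := by positivity
  have hρ_v4p : 0 < ρ4 := by positivity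
  have hκρ2 : κ * ρ2 ≤ ρ2 := mul_le_of_le_one_left hρ_v2p.le hκ1
  have hκρ3 : κ * ρ3 ≤ ρ3 := mul_le_of_le_one_left hρ_v3p.le hκ1
  have hκρ : κ * ρ ≤ ρ := mul_le_of_le_one_left hρ0.le hκ1
  have hκρ3' : 0 < κ * ρ3 := by positivity
  have hκρ2' : 0 < κ * ρ2 := by positivity
  obtain ⟨r1, hr1, hr1', hr1c⟩ := hreg Γ ρ hρ0
  obtain ⟨r2, hr2, hr2', hr2c⟩ := hreg Γ ρ2 hρ_v2p
  obtain ⟨r3, hr3, hr3', hr3c⟩ := hreg Γ ρ3 hρ_v3p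
  obtain ⟨r4, hr4, hr4', hr4c⟩ := hreg (tw half Γ) ρ4 hρ_v4p
  have hκρ4' : 0 < κ * ρ4 := by positivity
  obtain ⟨t, ht⟩ := hinv (bohr Γ r1) (bohr_mono Γ (by linarith)) (bohr_nonempty Γ (by linarith))
  have hB2p : (0:ℝ) < #(bohr Γ r2) := card_bohr_pos Γ (by linarith)
  have hB3p : (0:ℝ) < #(bohr Γ r3) := card_bohr_pos Γ (by linarith)
  obtain ⟨s, hs⟩ := two_sets A (bohr Γ r1) (bohr Γ (r1 + κ * ρ)) (bohr Γ r2) (bohr Γ r3) α η hα0.le hη0 t ht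
    (fun b hb x hx => sub_mem_bohr hb hx (by linarith)) (fun b hb x hx => sub_mem_bohr hb hx (by linarith))
    (bohr_nonempty Γ (by linarith)) (bohr_nonempty Γ (by linarith)) (bohr_nonempty Γ (by linarith)) hr1c
  have h103 : 1.01 * α ≤ 1.03 * α / (1 + η) := by
    rw [le_div_iff₀ (by linarith)]; nlinarith
  have hrad3 : κ ^ 8 * ρ ≤ κ * ρ3 := by
    have e : κ * ρ3 = κ ^ 3 * ρ * (1 / 8) := by rw [hρ3, hρ2]; ring
    have e2 : κ ^ 8 * ρ = κ ^ 3 * ρ * κ ^ 5 := by ring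
    rw [e, e2]
    apply mul_le_mul_of_nonneg_left _ (by positivity)
    have : κ ^ 5 ≤ (1 / 16) ^ 5 := pow_le_pow_left₀ hκ0.le hκ16 5
    linarith
  have hrad2 : κ ^ 8 * ρ ≤ κ * ρ2 := hrad3.trans (by
    apply mul_le_mul_of_nonneg_left _ hκ0.le
    linarith)
  by_cases hc2 : 1.03 * α ≤ cnt A (bohr Γ r2) s / #(bohr Γ r2)
  · rw [le_div_iff₀ hB2p] at hc2
    have := descent A (bohr Γ r2) (bohr Γ (r2 + κ * ρ2)) Γ (κ * ρ2) (1.03 * α) η (by positivity) hη0 s hc2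
      (fun b hb x hx => sub_mem_bohr hb hx le_rfl) (bohr_nonempty Γ (by linarith)) hr2c
    exact ⟨Γ, by omega, this.mono hrad2 h103⟩
  by_cases hc3 : 1.03 * α ≤ cnt A (bohr Γ r3) s / #(bohr Γ r3)
  · rw [le_div_iff₀ hB3p] at hc3
    have := descent A (bohr Γ r3) (bohr Γ (r3 + κ * ρ3)) Γ (κ * ρ3) (1.03 * α) η (by positivity) hη0 s hc3
      (fun b hb x hx => sub_mem_bohr hb hx le_rfl) (bohr_nonempty Γ (by linarith)) hr3c
    exact ⟨Γ, by omega, this.mono hrad3 h103⟩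
  rw [not_le] at hc2 hc3
  have h198 : 1.98 * α ≤ 2 * α / (1 + η) := by
    rw [le_div_iff₀ (by linarith)]; nlinarith
  set A1 := (bohr Γ r2).filter (fun x => s + x ∈ A) with hA1
  set A2 := (bohr Γ r3).filter (fun x => s + x ∈ A) with hA2
  rw [cnt_eq, ← hA1] at hc2 hs
  rw [cnt_eq, ← hA2] at hc3 hs
  set α1 := (#A1 : ℝ) / #(bohr Γ r2) with hα_v1d
  have hα_v1l : 0.95 * α ≤ α1 := by linarith
  have hα_v1p : 0 < α1 := by linarith
  have hα_v2l : 0.95 * α * #(bohr Γ r3) ≤ #A2 := by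
    rw [← le_div_iff₀ hB3p]; linarith
  have hA1c : (#A1 : ℝ) = α1 * #(bohr Γ r2) := by rw [hα_v1d]; field_simp
  have hA1le : (#A1 : ℝ) ≤ #(bohr Γ r2) := by exact_mod_cast card_filter_le _ _
  have hα11 : α1 ≤ 1 := by rw [hα_v1d, div_le_one hB2p]; exact hA1le
  have hA1p : (0:ℝ) < #A1 := by rw [hA1c]; exact mul_pos hα_v1p hB2p
  have hA1n : A1.Nonempty := by rw [← card_pos]; exact_mod_cast hA1p
  set m := α1 * #A1 with hm
  have hm0 : 0 < m := mul_pos hα_v1p hA1p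
  have hA1s : ∀ a ∈ A1, s + a ∈ A := fun a ha => (mem_filter.1 ha).2
  have hA2s : ∀ a ∈ A2, s + a ∈ A := fun a ha => (mem_filter.1 ha).2
  have hA2b : ∀ a ∈ A2, a ∈ bohr Γ r3 := fun a ha => (mem_filter.1 ha).1
  have hm50 : 1 ≤ m / 50 := by
    have h1 : (#(bohr Γ (κ * ρ / 2)) : ℝ) ≤ #(bohr Γ r2) := by
      exact_mod_cast card_le_card (bohr_mono Γ (by linarith))
    have h2 : α ^ 2 * #(bohr Γ (κ * ρ / 2)) ≤ α ^ 2 * #(bohr Γ r2) := mul_le_mul_of_nonneg_left h1 (by positivity)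
    have h3 : (0.95 * α) ^ 2 ≤ α1 ^ 2 := pow_le_pow_left₀ (by positivity) hα_v1l 2
    have h4 := mul_le_mul_of_nonneg_right h3 hB2p.le
    have h5 : m = α1 ^ 2 * #(bohr Γ r2) := by rw [hm, hA1c]; ring
    rw [h5]
    have h6 : (0.95 * α) ^ 2 * (#(bohr Γ r2) : ℝ) = 0.9025 * (α ^ 2 * #(bohr Γ r2)) := by ring
    linarith
  have hsubD : ∀ x ∈ bohr (tw half Γ) r4, ∀ y ∈ bohr (tw half Γ) r4, x - y ∈ bohr (tw half Γ) (κ * ρ3) :=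
    fun x hx y hy => sub_mem_bohr hx hy (by linarith)
  have h4p : 0 ≤ r4 := by linarith
  have hmom := moments A1 (bohr Γ r2) (bohr Γ (r2 + κ * ρ2)) A2 (bohr (tw half Γ) (r3 + κ * ρ3))
    (bohr (tw half Γ) r4) α1 η m p (filter_subset _ _) (bohr_mono Γ (by linarith)) hr2c hA1c hα_v1p hα11 hη0
    (by linarith) hm hm0 (fun x hx => neg_mem_bohr hx) (fun x hx => neg_mem_bohr hx) (bohr_nonempty _ h4p)
    (fun x hx y hy a ha => add_mem_bohr ha (bohr_tw_subset half hh Γ le_rfl (hsubD x hx y hy)) (by linarith))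
    (fun z hz a ha => by
      exact sub_mem_bohr (add_mem_bohr (hA2b z hz) (hA2b z hz) le_rfl) ha (by linarith))
    (fun x y h => by
      have := congrArg half h
      rw [map_add, map_add, hh, hh] at this; exact this)
    (fun x hx y hy z hz => sub_mem_bohr ((dbl_mem_bohr_tw half hh Γ r3 z).2 (hA2b z hz)) (hsubD x hx y hy) le_rfl)
    (fun z hz => (cv_ap A A1 s z hfree hA1s (hA2s z hz)).trans hm50)
    (by
      rw [card_bohr_tw half hh]
      have h1 : (#(bohr Γ (r3 + κ * ρ3)) : ℝ) ≤ 1.01 * #(bohr Γ r3) :=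
        hr3c.trans (mul_le_mul_of_nonneg_right (by linarith) hB3p.le)
      have h2 := mul_le_mul_of_nonneg_left h1 (by positivity : (0:ℝ) ≤ 0.9 ^ p)
      have h3 := mul_le_mul_of_nonneg_right hpα hB3p.le
      have h4 := mul_le_mul_of_nonneg_left hα_v2l (by positivity : (0:ℝ) ≤ 0.96 ^ p)
      linarith)
    (bohr_nonempty _ (by linarith)) hp hp3 h8
  set q := 2 * (p + 1) with hqd
  have hθq : θ ≤ α1 ^ q := hθα.trans (pow_le_pow_left₀ (by positivity) (by linarith) q)
  obtain ⟨A', hA'D, hA'n, hA'c, hA'b⟩ := sift A1 (bohr (tw half Γ) r4) q m θ hm0.le hθ0.le (bohr_nonempty _ h4p)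
    hmom (by
      have h1 : θ * (#A1 : ℝ) ^ q ≤ m ^ q := by
        rw [hm, mul_pow]; exact mul_le_mul_of_nonneg_right hθq (pow_nonneg hA1p.le q)
      have h2 := mul_lt_mul_of_pos_right hq (pow_pos hm0 q)
      rw [mul_pow 1.3 m, mul_pow 1.5 m]
      linarith)
  have hρ41 : ρ4 ≤ 1 := by linarith
  have hθ1 : θ ≤ 1 := hθq.trans (pow_le_one₀ hα_v1p.le hα11)
  obtain ⟨Λ, hΛ, hX⟩ := ap_step (tw half Γ) η κ θ ε ρ4 r4 K k M (hreg _) hη0 (by linarith) hκ0 hκK hθ0 hθ1 hK hk hε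
    hN2 hN3 hN4 hρ_v4p hρ41 hr4 hr4c (fun w => dc (ind A1) w < 1.3 * m) A' hA'n hA'D hA'c (by convert hA'b)
  refine ⟨tw half Γ ∪ Λ, (card_union_le _ _).trans (add_le_add (card_tw half Γ) hΛ), ?_⟩
  intro X hXs hXn
  have hrad4 : κ ^ 8 * ρ ≤ κ ^ 4 * ρ4 := by
    have e : κ ^ 4 * ρ4 = κ ^ 7 * ρ * (1 / 16) := by rw [hρ4, hρ3, hρ2]; ring
    have e2 : κ ^ 8 * ρ = κ ^ 7 * ρ * κ := by ring
    rw [e, e2]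
    exact mul_le_mul_of_nonneg_left hκ16 (by positivity)
  obtain ⟨u, hu⟩ := hX X (hXs.trans (bohr_mono _ hrad4))
  obtain ⟨t', ht'⟩ := final_back A A1 (univ.filter (fun w => ¬ dc (ind A1) w < 1.3 * m)) X s 0 u α1 m hm hm0.le hA1n hA1s
    (fun w hw => by
      have := (mem_filter.1 hw).2
      rw [sub_zero]; linarith)
    (by convert hu)
  refine ⟨t', le_trans ?_ ht'⟩
  apply mul_le_mul_of_nonneg_right _ (Nat.cast_nonneg _)
  linarith
end KM

namespace KM
open Finset
variable {G : Type*} [AddCommGroup G] [Fintype G] [DecidableEq G]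

lemma iterate (half : G →+ G) (hh : ∀ x, half x + half x = x) (A : Finset G)
    (hfree : ∀ a ∈ A, ∀ b ∈ A, ∀ c ∈ A, a + c = b + b → a = b)
    (α η κ θ ε : ℝ) (p K k M N : ℕ)
    (hreg : ∀ Γ' : Finset (AddChar G ℂ), Reg Γ' η κ)
    (hη0 : 0 ≤ η) (hη1 : η ≤ 1 / 1000) (hηα : η ≤ α / 200)
    (hκ0 : 0 < κ) (hκ16 : κ ≤ 1 / 16) (hκK : κ * (2 * K + 2) ≤ 1) (hθ0 : 0 < θ)
    (hα0 : 0 < α)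
    (hK : 0 < K) (hk : 0 < k) (hε : 0 ≤ ε)
    (hN2 : K * (2 * ε + 64 * Real.exp (-(k * ε ^ 2 / 2)) / θ) ≤ 1 / 100)
    (hN3 : 4 * (2 / θ) ^ k < Real.exp ((M + 1) / 8))
    (hN4 : 2 / θ * ((M + 1) * κ + 2 * η * 2 ^ (M + 1) + 2 * (1 / 4) ^ K) ≤ 1 / 50)
    (hp : Even p) (hp3 : 3 ≤ p) (h8 : 4 * (0.8:ℝ) ^ p ≤ 0.9 ^ p)
    (hpα : (0.9:ℝ) ^ p * 1.01 ≤ 0.96 ^ p * 0.95 * α)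
    (hq : 100 * (1.3:ℝ) ^ (2 * (p + 1)) + 1 < 1.5 ^ (2 * (p + 1)))
    (hθα : θ ≤ (α / 2) ^ (2 * (p + 1)))
    (hN : 1 < 1.01 ^ N * α)
    (hbig : ∀ Γ : Finset (AddChar G ℂ), #Γ ≤ N * M → 100 ≤ α ^ 2 * #(bohr Γ (κ ^ (8 * N + 1) / 2)))
    (hA : α * Fintype.card G ≤ #A) : False := by
  have hκ1 : κ ≤ 1 := by linarith
  have key : ∀ j ≤ N, ∃ Γ : Finset (AddChar G ℂ), #Γ ≤ j * M ∧ Inv A Γ (κ ^ (8 * j)) (1.01 ^ j * α) := by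
    intro j
    induction j with
    | zero =>
      intro _
      refine ⟨∅, by simp, ?_⟩
      have := descent A univ univ ∅ (κ ^ (8 * 0)) α 0 hα0.le le_rfl 0 (by
          rw [cnt_eq]; simpa using hA)
        (fun _ _ _ _ => mem_univ _) ⟨0, mem_univ _⟩ (by simp)
      simpa using this
    | succ j ih =>
      intro hj
      obtain ⟨Γ, hΓ, hinv⟩ := ih (by omega)
      have h1 : (1:ℝ) ≤ 1.01 ^ j := one_le_pow₀ (by norm_num)
      have hαj : α ≤ 1.01 ^ j * α := le_mul_of_one_le_left hα0.le h1
      have hj1 : 1.01 ^ j * α ≤ 1 := by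
        obtain ⟨t, ht⟩ := hinv {0} (by
          rw [singleton_subset_iff]; exact zero_mem_bohr Γ (by positivity)) (singleton_nonempty 0)
        simp only [card_singleton, Nat.cast_one, mul_one, cnt, sum_singleton] at ht
        exact ht.trans (ind_le_one _ _)
      obtain ⟨Γ', hΓ', hinv'⟩ := step half hh A hfree Γ (κ ^ (8 * j)) (1.01 ^ j * α) η κ θ ε p K k M hreg hη0 hη1
        (by linarith) hκ0 hκ16 hκK hθ0 (by positivity) hj1 hK hk hε hN2 hN3 hN4 hp hp3 h8
        (hpα.trans (mul_le_mul_of_nonneg_left hαj (by positivity))) hq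
        (hθα.trans (pow_le_pow_left₀ (by positivity) (by linarith) _)) (by positivity) (pow_le_one₀ hκ0.le hκ1)
        (by
          refine (hbig Γ (hΓ.trans (Nat.mul_le_mul_right _ (by omega)))).trans ?_
          have hle : κ ^ (8 * N + 1) / 2 ≤ κ * κ ^ (8 * j) / 2 := by
            have : κ ^ (8 * N + 1) ≤ κ ^ (8 * j + 1) := pow_le_pow_of_le_one hκ0.le hκ1 (by omega)
            rw [pow_succ κ (8 * j)] at this
            linarith
          have h2 : (#(bohr Γ (κ ^ (8 * N + 1) / 2)) : ℝ) ≤ #(bohr Γ (κ * κ ^ (8 * j) / 2)) := by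
            exact_mod_cast card_le_card (bohr_mono Γ hle)
          exact mul_le_mul (pow_le_pow_left₀ hα0.le hαj 2) h2 (by positivity) (by positivity)) hinv
      refine ⟨Γ', by rw [Nat.succ_mul]; omega, ?_⟩
      have e1 : κ ^ (8 * (j + 1)) = κ ^ 8 * κ ^ (8 * j) := by ring
      have e2 : (1.01:ℝ) ^ (j + 1) * α = 1.01 * (1.01 ^ j * α) := by ring
      rw [e1, e2]
      exact hinv'
  obtain ⟨Γ, _, hinv⟩ := key N le_rfl
  obtain ⟨t, ht⟩ := hinv {0} (by
    rw [singleton_subset_iff]; exact zero_mem_bohr Γ (by positivity)) (singleton_nonempty 0)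
  simp only [card_singleton, Nat.cast_one, mul_one, cnt, sum_singleton] at ht
  have := ht.trans (ind_le_one _ _)
  linarith

/-- parameters -/
def pL (l : ℕ) : ℕ := 12 * (l + 4)
/-- parameters -/
def KL (l : ℕ) : ℕ := (l + 1) * (2 * (pL l + 1))
/-- parameters -/
def kL (l : ℕ) : ℕ := 640000 * KL l ^ 3
/-- parameters -/
def ML (l : ℕ) : ℕ := 8 * ((KL l + 1) * kL l + 2)
/-- parameters -/
def LL (l : ℕ) : ℕ := l + ML l + KL l + 13
/-- parameters -/
def NL (l : ℕ) : ℕ := 70 * (l + 1)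
/-- parameters -/
def ZL (l : ℕ) : ℕ := 7 + 2 * l + (LL l * (8 * NL l + 1) + 4) * (2 * (NL l * ML l))

lemma two_pow_big (K : ℕ) (hK : 20 ≤ K) : 12800 * (K:ℝ) ≤ 2 ^ K := by
  induction K, hK using Nat.le_induction with
  | base => norm_num
  | succ n hn ih =>
    rw [pow_succ]; push_cast
    have : (20:ℝ) ≤ n := by exact_mod_cast hn
    linarith

lemma two_pow_ge (n : ℕ) : (n:ℝ) + 1 ≤ 2 ^ n := by
  exact_mod_cast Nat.succ_le_of_lt n.lt_two_pow_self

lemma two_pow_le_exp (n : ℕ) : (2:ℝ) ^ n ≤ Real.exp n := by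
  have h : (2:ℝ) ≤ Real.exp 1 := by linarith [Real.add_one_le_exp (1:ℝ)]
  calc (2:ℝ) ^ n ≤ (Real.exp 1) ^ n := pow_le_pow_left₀ (by norm_num) h n
    _ = Real.exp n := by rw [← Real.exp_nat_mul, mul_one]

theorem km_roth (half : G →+ G) (hh : ∀ x, half x + half x = x) (A : Finset G)
    (hfree : ∀ a ∈ A, ∀ b ∈ A, ∀ c ∈ A, a + c = b + b → a = b) (l : ℕ)
    (h1 : Fintype.card G < 2 ^ 2 ^ l) (h2 : 2 ^ ZL l ≤ Fintype.card G) :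
    (#A : ℝ) < (1 / 2) ^ l * Fintype.card G := by
  by_contra hcon
  rw [not_lt] at hcon
  set p := pL l with hp
  set K := KL l with hK
  set k := kL l with hk
  set M := ML l with hM
  set N := NL l with hN
  set L := LL l with hL
  have hp' : p = 12 * (l + 4) := hp
  have hK' : K = (l + 1) * (2 * (p + 1)) := hK
  have hk' : k = 640000 * K ^ 3 := hk
  have hM' : M = 8 * ((K + 1) * k + 2) := hM
  have hL' : L = l + M + K + 13 := hL
  have hN' : N = 70 * (l + 1) := hN
  clear_value p K k M N L
  have hK20 : 20 ≤ K := by rw [hK', hp']; nlinarith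
  have hKl : l ≤ K := by rw [hK']; nlinarith
  have hKr : (20:ℝ) ≤ K := by exact_mod_cast hK20
  set θ : ℝ := (1 / 2) ^ K with hθ
  set η : ℝ := (1 / 2) ^ (M + K + 12) with hη
  set κ : ℝ := (1 / 2) ^ L with hκ
  have hθi : 2 / θ = 2 * 2 ^ K := by rw [hθ, one_div, inv_pow, div_inv_eq_mul]
  have hK2 := two_pow_ge K
  have hM2 := two_pow_ge M
  have hhalf : ∀ n : ℕ, (1 / 2 : ℝ) ^ n * 2 ^ n = 1 := fun n => by rw [← mul_pow]; norm_num
  have hη0 : 0 < η := by positivity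
  have hle12 : η ≤ (1 / 2) ^ 12 * (1 / 2) ^ l := by
    rw [← pow_add]; exact pow_le_pow_of_le_one (by norm_num) (by norm_num) (by omega)
  have hll : (1 / 2 : ℝ) ^ l ≤ 1 := pow_le_one₀ (by norm_num) (by norm_num)
  have hl0 : (0:ℝ) < (1 / 2) ^ l := by positivity
  refine iterate half hh A hfree ((1 / 2) ^ l) η κ θ (1 / (400 * K)) p K k M N ?_ hη0.le ?_ ?_ (by positivity) ?_ ?_
    (by positivity) (by positivity) (by omega) ?_ (by positivity) ?_ ?_ ?_ ?_ (by omega) ?_ ?_ ?_ ?_ ?_ ?_ hcon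
  · -- regularity
    intro Γ ρ hρ
    have hJ : κ = 1 / (2 * ((2 ^ (l + M + K + 12) : ℕ) : ℝ)) := by
      rw [hκ, hL']; push_cast
      rw [one_div, inv_pow, one_div]; congr 1; ring
    have := regular Γ ρ η hρ hη0.le (2 ^ (l + M + K + 12)) (by
      have hb : (2:ℝ) ≤ (1 + η) ^ (2 ^ (M + K + 12)) := by
        have h3 := one_add_mul_le_pow (by linarith : (-2:ℝ) ≤ η) (2 ^ (M + K + 12))
        push_cast at h3
        rw [hη, mul_comm, hhalf] at h3
        linarith
      have e : 2 ^ (l + M + K + 12) = 2 ^ (M + K + 12) * 2 ^ l := by ring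
      rw [e, pow_mul]
      calc (Fintype.card G : ℝ) < 2 ^ 2 ^ l := by exact_mod_cast h1
        _ ≤ _ := pow_le_pow_left₀ (by norm_num) hb _)
    rw [← hJ] at this
    exact this
  · nlinarith
  · nlinarith
  · calc κ ≤ (1 / 2) ^ 4 := pow_le_pow_of_le_one (by norm_num) (by norm_num) (by omega)
      _ = _ := by norm_num
  · have h3 : κ ≤ (1 / 2) ^ 1 * (1 / 2) ^ K := by
      rw [← pow_add]; exact pow_le_pow_of_le_one (by norm_num) (by norm_num) (by omega)
    have h4 := hhalf K
    have h5 : (0:ℝ) < (1 / 2) ^ K := by positivity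
    calc κ * (2 * K + 2) ≤ (1 / 2) ^ 1 * (1 / 2) ^ K * (2 * 2 ^ K) :=
          mul_le_mul h3 (by linarith) (by positivity) (by positivity)
      _ = (1 / 2) ^ K * 2 ^ K := by ring
      _ ≤ 1 := h4.le
  · rw [hk']; have : 0 < K := by omega
    positivity
  · -- N2
    have e : -((k:ℝ) * (1 / (400 * K)) ^ 2 / 2) = -((2 * K : ℕ) : ℝ) := by
      rw [hk']; push_cast
      have : (K:ℝ) ≠ 0 := by linarith
      field_simp; norm_num
    rw [e, Real.exp_neg]
    have h3 := two_pow_le_exp (2 * K)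
    have h4 : (Real.exp ((2 * K : ℕ) : ℝ))⁻¹ ≤ ((2:ℝ) ^ (2 * K))⁻¹ := inv_anti₀ (by positivity) h3
    have h5 : 64 * (Real.exp ((2 * K : ℕ) : ℝ))⁻¹ / θ ≤ 64 / 2 ^ K := by
      rw [hθ, one_div, inv_pow, div_inv_eq_mul]
      calc _ ≤ 64 * ((2:ℝ) ^ (2 * K))⁻¹ * 2 ^ K := by gcongr
        _ = _ := by rw [two_mul, pow_add]; field_simp
    have h6 := two_pow_big K hK20
    have h7 : (K:ℝ) * (64 / 2 ^ K) ≤ 1 / 200 := by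
      rw [mul_div_assoc', div_le_div_iff₀ (by positivity) (by norm_num)]; linarith
    have h8 : (K:ℝ) * (2 * (1 / (400 * K))) = 1 / 200 := by
      have : (K:ℝ) ≠ 0 := by linarith
      field_simp; norm_num
    have h9 := mul_le_mul_of_nonneg_left h5 (by linarith : (0:ℝ) ≤ K)
    rw [mul_add]
    linarith
  · -- N3
    rw [hθi]
    have e : 4 * (2 * (2:ℝ) ^ K) ^ k = 2 ^ ((K + 1) * k + 2) := by
      rw [pow_add, pow_mul, pow_succ]; ring
    rw [e]
    refine (two_pow_le_exp _).trans_lt (Real.exp_lt_exp.2 ?_)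
    rw [hM']; push_cast
    linarith
  · -- N4
    rw [hθi]
    have a1 : (M + 1) * κ ≤ (1 / 2) ^ 13 * (1 / 2) ^ K := by
      have h3 : κ ≤ (1 / 2) ^ M * ((1 / 2) ^ 13 * (1 / 2) ^ K) := by
        rw [← pow_add, ← pow_add]; exact pow_le_pow_of_le_one (by norm_num) (by norm_num) (by omega)
      calc (M + 1) * κ ≤ 2 ^ M * ((1 / 2) ^ M * ((1 / 2) ^ 13 * (1 / 2) ^ K)) :=
            mul_le_mul hM2 h3 (by positivity) (by positivity)
        _ = ((1 / 2) ^ M * 2 ^ M) * ((1 / 2) ^ 13 * (1 / 2) ^ K) := by ring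
        _ = _ := by rw [hhalf, one_mul]
    have a2 : 2 * η * 2 ^ (M + 1) = (1 / 2) ^ 10 * (1 / 2) ^ K := by
      rw [hη]
      calc _ = ((1 / 2) ^ M * 2 ^ M) * ((1 / 2) ^ 10 * (1 / 2 : ℝ) ^ K) := by ring
        _ = _ := by rw [hhalf, one_mul]
    have a3 : (2:ℝ) * (1 / 4) ^ K ≤ (1 / 2) ^ 10 * (1 / 2) ^ K := by
      have : (1 / 4 : ℝ) ^ K = (1 / 2) ^ K * (1 / 2) ^ K := by rw [← mul_pow]; norm_num
      rw [this]
      have h3 : (1 / 2 : ℝ) ^ K ≤ (1 / 2) ^ 11 := pow_le_pow_of_le_one (by norm_num) (by norm_num) (by omega)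
      have h4 : (0:ℝ) < (1 / 2) ^ K := by positivity
      nlinarith
    have h4 := hhalf K
    calc _ ≤ 2 * (2:ℝ) ^ K * ((1 / 2) ^ 13 * (1 / 2 : ℝ) ^ K + (1 / 2) ^ 10 * (1 / 2) ^ K + (1 / 2) ^ 10 * (1 / 2) ^ K) := by
          apply mul_le_mul_of_nonneg_left _ (by positivity); linarith
      _ = 2 * ((1 / 2 : ℝ) ^ K * 2 ^ K) * ((1 / 2) ^ 13 + (1 / 2) ^ 10 + (1 / 2) ^ 10) := by ring
      _ ≤ 1 / 50 := by rw [h4]; norm_num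
  · exact ⟨6 * (l + 4), by omega⟩
  · rw [hp', pow_mul, pow_mul]
    have h3 : (4:ℝ) * (0.8 ^ 12) ≤ 0.9 ^ 12 := by norm_num
    have h4 := pow_le_pow_left₀ (by positivity) h3 (l + 4)
    rw [mul_pow] at h4
    have h5 : (4:ℝ) ≤ 4 ^ (l + 4) := le_self_pow₀ (by norm_num) (by omega)
    refine le_trans (mul_le_mul_of_nonneg_right h5 (by positivity)) h4
  · rw [hp', pow_mul, pow_mul]
    have h3 : (2:ℝ) * (0.9 ^ 12) ≤ 0.96 ^ 12 := by norm_num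
    have h4 := pow_le_pow_left₀ (by positivity) h3 (l + 4)
    rw [mul_pow] at h4
    have h5 := mul_le_mul_of_nonneg_right h4 hl0.le
    have h6 : (2:ℝ) ^ (l + 4) * (0.9 ^ 12) ^ (l + 4) * (1 / 2) ^ l = 16 * (0.9 ^ 12) ^ (l + 4) := by
      rw [pow_add 2 l 4]
      calc _ = ((1 / 2) ^ l * 2 ^ l) * (2 ^ 4 * ((0.9:ℝ) ^ 12) ^ (l + 4)) := by ring
        _ = _ := by rw [hhalf]; norm_num
    rw [h6] at h5
    have h7 : (0:ℝ) < (0.9 ^ 12) ^ (l + 4) := by positivity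
    linarith
  · obtain ⟨r, hr⟩ : ∃ r, 2 * (p + 1) = 48 + r := ⟨2 * (p + 1) - 48, by omega⟩
    rw [hr, pow_add, pow_add]
    have h3 : 102 * (1.3:ℝ) ^ 48 ≤ 1.5 ^ 48 := by norm_num
    have h4 : (1.3:ℝ) ^ r ≤ 1.5 ^ r := pow_le_pow_left₀ (by norm_num) (by norm_num) r
    have h5 : (1:ℝ) ≤ 1.3 ^ r := one_le_pow₀ (by norm_num)
    have h6 : (1:ℝ) ≤ 1.3 ^ 48 := one_le_pow₀ (by norm_num)
    have h7 := mul_le_mul h3 h4 (by positivity) (by positivity)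
    have h8 : (1:ℝ) ≤ 1.3 ^ 48 * 1.3 ^ r := one_le_mul_of_one_le_of_one_le h6 h5
    linarith
  · rw [hθ, hK']
    apply le_of_eq
    rw [pow_mul, pow_succ]; congr 1; ring
  · rw [hN', pow_mul]
    have h3 : (2:ℝ) ≤ 1.01 ^ 70 := by norm_num
    have h4 := pow_le_pow_left₀ (by norm_num) h3 (l + 1)
    have h5 := mul_le_mul_of_nonneg_right h4 hl0.le
    have h6 : (2:ℝ) ^ (l + 1) * (1 / 2) ^ l = 2 := by
      calc _ = ((1 / 2) ^ l * 2 ^ l) * (2:ℝ) := by ring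
        _ = _ := by rw [hhalf]; norm_num
    linarith
  · intro Γ hΓ
    set R := L * (8 * N + 1) with hR
    have e1 : κ ^ (8 * N + 1) = (1 / 2) ^ R := by rw [hκ, ← pow_mul]
    rw [e1]
    have h3 := bohr_size Γ ((1 / 2) ^ R / 2) (by positivity) (4 * 2 ^ R) (by
      push_cast
      have := hhalf R
      nlinarith)
    have h4 : (((2 * (4 * 2 ^ R) + 1 : ℕ) : ℝ)) ^ (2 * #Γ) ≤ (2:ℝ) ^ ((R + 4) * (2 * (N * M))) := by
      have h5 : ((2 * (4 * 2 ^ R) + 1 : ℕ) : ℝ) ≤ 2 ^ (R + 4) := by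
        push_cast
        rw [pow_add]
        have : (1:ℝ) ≤ 2 ^ R := one_le_pow₀ (by norm_num)
        linarith
      calc _ ≤ ((2:ℝ) ^ (R + 4)) ^ (2 * #Γ) := pow_le_pow_left₀ (by positivity) h5 _
        _ ≤ ((2:ℝ) ^ (R + 4)) ^ (2 * (N * M)) :=
            pow_le_pow_right₀ (one_le_pow₀ (by norm_num)) (by omega)
        _ = _ := by rw [← pow_mul]
    have h6 : (2:ℝ) ^ (7 + 2 * l) * 2 ^ ((R + 4) * (2 * (N * M))) ≤ Fintype.card G := by
      rw [← pow_add]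
      have : ZL l = 7 + 2 * l + (R + 4) * (2 * (N * M)) := by rw [hR, hL, hN, hM]; rfl
      rw [← this]
      exact_mod_cast h2
    have h7 : (2:ℝ) ^ (7 + 2 * l) * 2 ^ ((R + 4) * (2 * (N * M))) ≤
        #(bohr Γ ((1 / 2) ^ R / 2)) * 2 ^ ((R + 4) * (2 * (N * M))) :=
      h6.trans (h3.trans (mul_le_mul_of_nonneg_left h4 (by positivity)))
    have h8 := le_of_mul_le_mul_right h7 (by positivity)
    have h9 := mul_le_mul_of_nonneg_left h8 (by positivity : (0:ℝ) ≤ ((1 / 2) ^ l) ^ 2)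
    refine le_trans ?_ h9
    calc (100:ℝ) ≤ 2 ^ 7 * ((1 / 2) ^ l * 2 ^ l) ^ 2 := by rw [hhalf]; norm_num
      _ = _ := by rw [pow_add, mul_pow]; ring
end KM

namespace KM
open Finset

/-- polynomially bounded -/
def PB (f : ℕ → ℕ) : Prop := ∃ C d : ℕ, ∀ l, f l ≤ C * (l + 1) ^ d

lemma PB.const (c : ℕ) : PB (fun _ => c) := ⟨c, 0, fun l => by simp⟩
lemma PB.id : PB (fun l => l) := ⟨1, 1, fun l => by simp⟩
lemma PB.add {f g : ℕ → ℕ} (hf : PB f) (hg : PB g) : PB (fun l => f l + g l) := by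
  obtain ⟨C, d, h⟩ := hf
  obtain ⟨C', d', h'⟩ := hg
  refine ⟨C + C', d + d', fun l => ?_⟩
  have h1 : (l + 1) ^ d ≤ (l + 1) ^ (d + d') := Nat.pow_le_pow_right (by omega) (by omega)
  have h2 : (l + 1) ^ d' ≤ (l + 1) ^ (d + d') := Nat.pow_le_pow_right (by omega) (by omega)
  calc f l + g l ≤ C * (l + 1) ^ d + C' * (l + 1) ^ d' := Nat.add_le_add (h l) (h' l)
    _ ≤ C * (l + 1) ^ (d + d') + C' * (l + 1) ^ (d + d') := by gcongr
    _ = _ := by ring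
lemma PB.mul {f g : ℕ → ℕ} (hf : PB f) (hg : PB g) : PB (fun l => f l * g l) := by
  obtain ⟨C, d, h⟩ := hf
  obtain ⟨C', d', h'⟩ := hg
  refine ⟨C * C', d + d', fun l => ?_⟩
  calc f l * g l ≤ (C * (l + 1) ^ d) * (C' * (l + 1) ^ d') := Nat.mul_le_mul (h l) (h' l)
    _ = _ := by ring
lemma PB.pow {f : ℕ → ℕ} (hf : PB f) (n : ℕ) : PB (fun l => f l ^ n) := by
  induction n with
  | zero => simpa using PB.const 1
  | succ n ih => simpa [pow_succ] using ih.mul hf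

lemma PB_ZL : PB ZL := by
  have hp : PB pL := (PB.const 12).mul (PB.id.add (PB.const 4))
  have hK : PB KL := (PB.id.add (PB.const 1)).mul ((PB.const 2).mul (hp.add (PB.const 1)))
  have hk : PB kL := (PB.const 640000).mul (hK.pow 3)
  have hM : PB ML := (PB.const 8).mul (((hK.add (PB.const 1)).mul hk).add (PB.const 2))
  have hL : PB LL := ((PB.id.add hM).add hK).add (PB.const 13)
  have hN : PB NL := (PB.const 70).mul (PB.id.add (PB.const 1))
  exact ((PB.const 7).add ((PB.const 2).mul PB.id)).add
    (((hL.mul (((PB.const 8).mul hN).add (PB.const 1))).add (PB.const 4)).mul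
      ((PB.const 2).mul (hN.mul hM)))

lemma ZL_ev : ∃ l0 : ℕ, ∀ l ≥ l0, ZL (2 * (l + 1)) ≤ 2 ^ l := by
  obtain ⟨C, d, h⟩ := PB_ZL
  have ht := tendsto_pow_const_div_const_pow_of_one_lt d (by norm_num : (1:ℝ) < 2)
  have hc : (0:ℝ) < 1 / (C * 5 ^ d + 1) := by positivity
  obtain ⟨n0, hn0⟩ := Filter.eventually_atTop.1 (ht.eventually (gt_mem_nhds hc))
  refine ⟨max n0 1, fun l hl => ?_⟩
  have h1 := hn0 l (le_trans (le_max_left _ _) hl)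
  have hl1 : 1 ≤ l := le_trans (le_max_right _ _) hl
  rw [div_lt_div_iff₀ (by positivity) (by positivity)] at h1
  have h2 : ((l ^ d * (C * 5 ^ d + 1) : ℕ) : ℝ) < ((1 * 2 ^ l : ℕ) : ℝ) := by push_cast; exact h1
  have h3 : l ^ d * (C * 5 ^ d + 1) < 1 * 2 ^ l := by exact_mod_cast h2
  calc ZL (2 * (l + 1)) ≤ C * (2 * (l + 1) + 1) ^ d := h _
    _ ≤ C * (5 * l) ^ d := by gcongr; omega
    _ = l ^ d * (C * 5 ^ d) := by rw [mul_pow]; ring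
    _ ≤ l ^ d * (C * 5 ^ d + 1) := by gcongr; omega
    _ ≤ 2 ^ l := by omega

lemma zmod_roth (m l : ℕ) (A : Finset ℕ) (hA : A ⊆ range m)
    (hfree : ∀ a ∈ A, ∀ b ∈ A, ∀ c ∈ A, a + c = b + b → a = b)
    (h1 : 2 * m + 1 < 2 ^ 2 ^ l) (h2 : 2 ^ ZL l ≤ 2 * m + 1) :
    (#A : ℝ) < (1 / 2) ^ l * (2 * m + 1 : ℕ) := by
  classical
  haveI : NeZero (2 * m + 1) := ⟨by omega⟩
  have inj : ∀ a < 2 * m + 1, ∀ b < 2 * m + 1, ((a : ℕ) : ZMod (2 * m + 1)) = b → a = b := by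
    intro a ha b hb hab
    rw [ZMod.natCast_eq_natCast_iff'] at hab
    rwa [Nat.mod_eq_of_lt ha, Nat.mod_eq_of_lt hb] at hab
  have hlt : ∀ a ∈ A, a < m := fun a ha => mem_range.1 (hA ha)
  have hcard : #(A.image (fun a : ℕ => (a : ZMod (2 * m + 1)))) = #A := by
    apply card_image_of_injOn
    intro a ha b hb hab
    have := hlt a ha
    have := hlt b hb
    exact inj a (by omega) b (by omega) hab
  have := km_roth (G := ZMod (2 * m + 1)) (AddMonoidHom.mulLeft ((m + 1 : ℕ) : ZMod (2 * m + 1)))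
    (fun x => by
      simp only [AddMonoidHom.coe_mulLeft]
      rw [← add_mul]
      have : ((m + 1 : ℕ) : ZMod (2 * m + 1)) + ((m + 1 : ℕ) : ZMod (2 * m + 1)) = 1 := by
        rw [← Nat.cast_add]
        have e : m + 1 + (m + 1) = (2 * m + 1) + 1 := by ring
        rw [e, Nat.cast_add, ZMod.natCast_self]; simp
      rw [this, one_mul]) (A.image (fun a : ℕ => (a : ZMod (2 * m + 1)))) (by
      intro a ha b hb c hc habc
      obtain ⟨a, ha', rfl⟩ := mem_image.1 ha
      obtain ⟨b, hb', rfl⟩ := mem_image.1 hb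
      obtain ⟨c, hc', rfl⟩ := mem_image.1 hc
      have := hlt a ha'
      have := hlt b hb'
      have := hlt c hc'
      have e : a + c = b + b := inj _ (by omega) _ (by omega) (by push_cast; exact habc)
      rw [hfree a ha' b hb' c hc' e]) l (by rw [ZMod.card]; exact h1) (by rw [ZMod.card]; exact h2)
  rw [hcard, ZMod.card] at this
  exact this

theorem roth_int : ∃ C : ℝ, 0 < C ∧ ∀ (m : ℕ) (A : Finset ℕ), 1 ≤ m → A ⊆ range m →
    (∀ a ∈ A, ∀ b ∈ A, ∀ c ∈ A, a + c = b + b → a = b) →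
    (#A : ℝ) * Real.log (m + 1) ^ 2 ≤ C * m := by
  obtain ⟨l0, hl0⟩ := ZL_ev
  refine ⟨3 * 4 ^ (l0 + 1), by positivity, fun m A hm hA hfree => ?_⟩
  have hm' : (1:ℝ) ≤ m := by exact_mod_cast hm
  have hlog0 : 0 ≤ Real.log (m + 1) := Real.log_nonneg (by linarith)
  have hlog : ∀ l : ℕ, 2 * m + 1 < 2 ^ 2 ^ l → Real.log (m + 1) ^ 2 ≤ 4 ^ l := by
    intro l hl
    have h1 : Real.log (m + 1) ≤ 2 ^ l := by
      have h2 : (m:ℝ) + 1 ≤ 2 ^ 2 ^ l := by exact_mod_cast (by omega : m + 1 ≤ 2 ^ 2 ^ l)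
      calc Real.log (m + 1) ≤ Real.log (2 ^ 2 ^ l) := Real.log_le_log (by linarith) h2
        _ = 2 ^ l * Real.log 2 := by rw [Real.log_pow]; push_cast; rfl
        _ ≤ 2 ^ l * 1 := by gcongr; linarith [Real.log_two_lt_d9]
        _ = _ := mul_one _
    calc Real.log (m + 1) ^ 2 ≤ (2 ^ l) ^ 2 := pow_le_pow_left₀ hlog0 h1 2
      _ = 4 ^ l := by rw [← pow_mul, mul_comm, pow_mul]; norm_num
  have hAm : (#A : ℝ) ≤ m := by
    have := card_le_card hA
    rw [card_range] at this
    exact_mod_cast this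
  by_cases hsm : 2 * m + 1 < 2 ^ 2 ^ (l0 + 1)
  · calc (#A : ℝ) * Real.log (m + 1) ^ 2 ≤ m * 4 ^ (l0 + 1) :=
          mul_le_mul hAm (hlog _ hsm) (by positivity) (by positivity)
      _ ≤ _ := by have : (0:ℝ) < 4 ^ (l0 + 1) := by positivity
                  nlinarith
  · have hex : ∃ l : ℕ, 2 * m + 1 < 2 ^ 2 ^ l := by
      refine ⟨2 * m + 1, ?_⟩
      calc 2 * m + 1 < 2 ^ (2 * m + 1) := Nat.lt_two_pow_self
        _ ≤ _ := Nat.pow_le_pow_right (by norm_num) Nat.lt_two_pow_self.le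
    classical
    set q := Nat.find hex with hq
    have hq1 : 2 * m + 1 < 2 ^ 2 ^ q := Nat.find_spec hex
    have hq2 : l0 + 1 < q := by
      by_contra hc
      apply hsm
      refine hq1.trans_le ?_
      exact Nat.pow_le_pow_right (by norm_num) (Nat.pow_le_pow_right (by norm_num) (by omega))
    obtain ⟨r, hr⟩ : ∃ r, q = r + 1 := ⟨q - 1, by omega⟩
    have hr1 : 2 ^ 2 ^ r ≤ 2 * m + 1 := by
      have := Nat.find_min hex (m := r) (by omega)
      omega
    have hz := zmod_roth m (2 * (r + 1)) A hA hfree (hq1.trans_le (by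
      exact Nat.pow_le_pow_right (by norm_num) (Nat.pow_le_pow_right (by norm_num) (by omega))))
      (le_trans (Nat.pow_le_pow_right (by norm_num) (hl0 r (by omega))) hr1)
    have hlq := hlog q hq1
    calc (#A : ℝ) * Real.log (m + 1) ^ 2 ≤ ((1 / 2) ^ (2 * (r + 1)) * (2 * m + 1 : ℕ)) * 4 ^ q :=
          mul_le_mul hz.le hlq (by positivity) (by positivity)
      _ = (2 * m + 1 : ℕ) := by
          rw [hr, pow_mul]
          have : ((1 / 2 : ℝ) ^ 2) ^ (r + 1) * 4 ^ (r + 1) = 1 := by rw [← mul_pow]; norm_num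
          linear_combination ((2 * m + 1 : ℕ) : ℝ) * this
      _ ≤ 3 * m := by push_cast; linarith
      _ ≤ 3 * m * 4 ^ (l0 + 1) := le_mul_of_one_le_right (by positivity) (one_le_pow₀ (by norm_num))
      _ = _ := by ring
end KM

namespace KM
open Finset

lemma rad_pos (n : ℕ) : 0 < natRadical n :=
  prod_pos fun p hp => (Nat.prime_of_mem_primeFactors hp).pos

lemma rad_mul_le (a b : ℕ) (ha : a ≠ 0) (hb : b ≠ 0) :
    natRadical (a * b) ≤ natRadical a * natRadical b := by
  unfold natRadical
  rw [Nat.primeFactors_mul ha hb, ← prod_union_inter]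
  exact Nat.le_mul_of_pos_right _ (prod_pos fun p hp =>
    (Nat.prime_of_mem_primeFactors (mem_inter.1 hp).1).pos)

lemma rad_sq (a : ℕ) : natRadical (a ^ 2) = natRadical a := by
  unfold natRadical
  rw [Nat.primeFactors_pow a (by norm_num)]

lemma rad_le (a : ℕ) (ha : 0 < a) : natRadical a ≤ a :=
  Nat.le_of_dvd ha (Nat.prod_primeFactors_dvd a)

lemma rad_mono (a b : ℕ) (h : a ∣ b) (hb : b ≠ 0) : natRadical a ≤ natRadical b := by
  unfold natRadical
  exact prod_le_prod_of_subset_of_one_le' (Nat.primeFactors_mono h hb)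
    (fun p hp _ => (Nat.prime_of_mem_primeFactors hp).one_le)

lemma rad_squarefull (n : ℕ) (hn : 0 < n) (h : IsSquarefull n) : natRadical n ^ 2 ≤ n := by
  apply Nat.le_of_dvd hn
  unfold natRadical
  rw [← prod_pow]
  apply Finset.prod_dvd_of_isRelPrime
  · intro p hp q hq hpq
    have hp' := Nat.prime_of_mem_primeFactors hp
    have hq' := Nat.prime_of_mem_primeFactors hq
    have : Nat.Coprime (p ^ 2) (q ^ 2) := Nat.Coprime.pow 2 2 ((Nat.coprime_primes hp' hq').2 hpq)
    exact Nat.coprime_iff_isRelPrime.1 this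
  · intro p hp
    exact h p (Nat.prime_of_mem_primeFactors hp) (Nat.dvd_of_mem_primeFactors hp)

lemma abc_ap (habc : ABCConjecture) : ∃ X : ℝ, 1 ≤ X ∧ ∀ N d : ℕ, 0 < N → 0 < d → d ^ 8 ≤ N →
    IsSquarefull N → IsSquarefull (N + d) → IsSquarefull (N + 2 * d) → (N : ℝ) ≤ X := by
  obtain ⟨C, hC, h⟩ := habc (1 / 26) (by norm_num)
  set D : ℝ := C * (3:ℝ) ^ (1 + 1 / 26 : ℝ) with hD
  have hD0 : 0 < D := by positivity
  refine ⟨max 1 (D ^ 16), le_max_left _ _, fun N d hN hd hdN h0 h1 h2 => le_trans ?_ (le_max_right _ _)⟩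
  obtain ⟨N', d', hcop, e1, e2⟩ := Nat.exists_coprime N d
  set e := N.gcd d with he
  have he0 : 0 < e := Nat.gcd_pos_of_pos_left _ hN
  have hN' : 0 < N' := Nat.pos_of_ne_zero (by rintro rfl; omega)
  have hd' : 0 < d' := Nat.pos_of_ne_zero (by rintro rfl; omega)
  have hed : e ≤ d := Nat.gcd_le_right _ hd
  have hd'd : d' ≤ d := by rw [e2]; exact Nat.le_mul_of_pos_right _ he0
  have hc1 : Nat.Coprime (N' * (N' + 2 * d')) (d' ^ 2) := by
    apply Nat.Coprime.pow_right
    apply Nat.Coprime.mul_left hcop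
    rw [Nat.coprime_add_mul_right_left]
    exact hcop
  have key := h (N' * (N' + 2 * d')) (d' ^ 2) ((N' + d') ^ 2) (by positivity) (by positivity)
    (by positivity) hc1 (by ring)
  clear_value e
  have r0 := rad_squarefull N hN h0
  have r1 := rad_squarefull (N + d) (by omega) h1
  have r2 := rad_squarefull (N + 2 * d) (by omega) h2
  have s0 : natRadical N' ≤ natRadical N := rad_mono _ _ ⟨e, e1⟩ (by omega)
  have s1 : natRadical (N' + d') ≤ natRadical (N + d) :=
    rad_mono _ _ ⟨e, by rw [e1, e2]; ring⟩ (by omega)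
  have s2 : natRadical (N' + 2 * d') ≤ natRadical (N + 2 * d) :=
    rad_mono _ _ ⟨e, by rw [e1, e2]; ring⟩ (by omega)
  have hdN1 : d ≤ N := le_trans (Nat.le_self_pow (by norm_num) d) hdN
  have hR : natRadical (N' * (N' + 2 * d') * d' ^ 2 * (N' + d') ^ 2) ≤
      natRadical N * natRadical (N + 2 * d) * d * natRadical (N + d) := by
    calc _ ≤ natRadical (N' * (N' + 2 * d') * d' ^ 2) * natRadical ((N' + d') ^ 2) :=
          rad_mul_le _ _ (by positivity) (by positivity)
      _ ≤ (natRadical (N' * (N' + 2 * d')) * natRadical (d' ^ 2)) * natRadical ((N' + d') ^ 2) := by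
          gcongr; exact rad_mul_le _ _ (by positivity) (by positivity)
      _ ≤ (natRadical N' * natRadical (N' + 2 * d') * natRadical (d' ^ 2)) *
            natRadical ((N' + d') ^ 2) := by
          gcongr; exact rad_mul_le _ _ (by positivity) (by positivity)
      _ ≤ _ := by
          rw [rad_sq, rad_sq]
          have := (rad_le d' hd').trans hd'd
          gcongr
  set R := natRadical (N' * (N' + 2 * d') * d' ^ 2 * (N' + d') ^ 2) with hRdef
  have hR2 : R ^ 2 ≤ 9 * N ^ 3 * d ^ 2 := by
    calc R ^ 2 ≤ (natRadical N * natRadical (N + 2 * d) * d * natRadical (N + d)) ^ 2 :=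
          Nat.pow_le_pow_left hR 2
      _ = natRadical N ^ 2 * natRadical (N + 2 * d) ^ 2 * d ^ 2 * natRadical (N + d) ^ 2 := by ring
      _ ≤ N * (N + 2 * d) * d ^ 2 * (N + d) := by gcongr
      _ ≤ N * (N + 2 * N) * d ^ 2 * (N + N) := by gcongr
      _ = 6 * N ^ 3 * d ^ 2 := by ring
      _ ≤ _ := by gcongr; norm_num
  have hNr : (1:ℝ) ≤ N := by exact_mod_cast hN
  have hN0 : (0:ℝ) < N := by linarith
  set w : ℝ := (N:ℝ) ^ (1 / 16 : ℝ) with hw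
  have hw0 : 0 < w := by positivity
  have hw16 : w ^ 16 = N := by
    rw [hw, ← Real.rpow_natCast, ← Real.rpow_mul hN0.le]; norm_num
  have hdw : (d:ℝ) ≤ w ^ 2 := by
    have h8 : (d:ℝ) ^ 8 ≤ (w ^ 2) ^ 8 := by
      rw [← pow_mul, hw16]; exact_mod_cast hdN
    exact le_of_pow_le_pow_left₀ (by norm_num) (by positivity) h8
  have hRw : (R:ℝ) ≤ 3 * w ^ 26 := by
    have h8 : (R:ℝ) ^ 2 ≤ (3 * w ^ 26) ^ 2 := by
      calc (R:ℝ) ^ 2 ≤ 9 * N ^ 3 * d ^ 2 := by exact_mod_cast hR2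
        _ ≤ 9 * N ^ 3 * (w ^ 2) ^ 2 := by gcongr
        _ = _ := by rw [← hw16]; ring
    exact le_of_pow_le_pow_left₀ (by norm_num) (by positivity) h8
  have hRR : (R:ℝ) ^ (1 + 1 / 26 : ℝ) ≤ (3:ℝ) ^ (1 + 1 / 26 : ℝ) * w ^ 27 := by
    calc (R:ℝ) ^ (1 + 1 / 26 : ℝ) ≤ (3 * w ^ 26) ^ (1 + 1 / 26 : ℝ) :=
          Real.rpow_le_rpow (by positivity) hRw (by norm_num)
      _ = _ := by
          rw [Real.mul_rpow (by norm_num) (by positivity)]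
          congr 1
          rw [← Real.rpow_natCast, ← Real.rpow_natCast, ← Real.rpow_mul hw0.le]
          norm_num
  have hlow : w ^ 28 ≤ ((N' + d' : ℕ) : ℝ) ^ 2 := by
    have hN'e : (N:ℝ) = N' * e := by exact_mod_cast e1
    have hew : (e:ℝ) ≤ w ^ 2 := le_trans (by exact_mod_cast hed) hdw
    have h14 : w ^ 14 ≤ N' := by
      have : w ^ 14 * w ^ 2 ≤ N' * w ^ 2 := by
        calc w ^ 14 * w ^ 2 = N := by rw [← hw16]; ring
          _ = N' * e := hN'e
          _ ≤ _ := by gcongr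
      exact le_of_mul_le_mul_right this (by positivity)
    have h15 : w ^ 14 ≤ ((N' + d' : ℕ) : ℝ) := by push_cast; linarith [(Nat.cast_nonneg d' : (0:ℝ) ≤ d')]
    calc w ^ 28 = (w ^ 14) ^ 2 := by ring
      _ ≤ _ := pow_le_pow_left₀ (by positivity) h15 2
  have hfin : w ^ 27 * w ≤ w ^ 27 * D := by
    calc w ^ 27 * w = w ^ 28 := by ring
      _ ≤ _ := hlow
      _ ≤ C * (R:ℝ) ^ (1 + 1 / 26 : ℝ) := by exact_mod_cast key
      _ ≤ C * ((3:ℝ) ^ (1 + 1 / 26 : ℝ) * w ^ 27) := by gcongr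
      _ = _ := by rw [hD]; ring
  have hwD : w ≤ D := le_of_mul_le_mul_left hfin (by positivity)
  rw [← hw16]
  exact pow_le_pow_left₀ hw0.le hwD 16

lemma log_cmp (y : ℝ) (hy : 1 ≤ y) : ∃ m : ℕ, 1 ≤ m ∧ (m:ℝ) ^ 8 ≤ y ∧ Real.log (y + 1) ≤ 9 * Real.log (m + 1) := by
  set z : ℝ := y ^ (1 / 8 : ℝ) with hz
  have hz8 : z ^ 8 = y := by
    rw [hz, ← Real.rpow_natCast, ← Real.rpow_mul (by linarith)]; norm_num
  have hz1 : 1 ≤ z := Real.one_le_rpow hy (by norm_num)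
  refine ⟨⌊z⌋₊, Nat.le_floor (by exact_mod_cast hz1), ?_, ?_⟩
  · rw [← hz8]; exact pow_le_pow_left₀ (by positivity) (Nat.floor_le (by linarith)) 8
  · have h1 : z ≤ (⌊z⌋₊:ℝ) + 1 := (Nat.lt_floor_add_one z).le
    have h2 : (1:ℝ) ≤ ⌊z⌋₊ := by exact_mod_cast (Nat.le_floor (by exact_mod_cast hz1) : 1 ≤ ⌊z⌋₊)
    have h3 : y + 1 ≤ ((⌊z⌋₊:ℝ) + 1) ^ 9 := by
      have h4 : y ≤ ((⌊z⌋₊:ℝ) + 1) ^ 8 := by rw [← hz8]; exact pow_le_pow_left₀ (by linarith) h1 8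
      rw [pow_succ]
      nlinarith
    calc Real.log (y + 1) ≤ Real.log (((⌊z⌋₊:ℝ) + 1) ^ 9) := Real.log_le_log (by linarith) h3
      _ = _ := by rw [Real.log_pow]; norm_num

theorem main (habc : ABCConjecture) : ∃ C : ℝ, 0 < C ∧ ∀ x y : ℝ, 1 ≤ x → 1 ≤ y → y ≤ x →
      (({n : ℕ | x < (n : ℝ) ∧ (n : ℝ) ≤ x + y ∧ 0 < n ∧ IsSquarefull n}.ncard : ℝ))
        * Real.log (y + 1) ^ 2 ≤ C * y := by
  classical
  obtain ⟨X, hX1, hX⟩ := abc_ap habc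
  obtain ⟨C, hC, hroth⟩ := roth_int
  refine ⟨2 * 81 * C + 2 * X ^ 2, by positivity, fun x y hx hy hyx => ?_⟩
  set n0 := ⌊x⌋₊ with hn0
  have hn0x : (n0:ℝ) ≤ x := Nat.floor_le (by linarith)
  have hxn0 : x < n0 + 1 := Nat.lt_floor_add_one x
  set Y := ⌊y⌋₊ with hY
  have hYy : (Y:ℝ) ≤ y := Nat.floor_le (by linarith)
  set T : Finset ℕ := (range (Y + 1)).filter (fun t => IsSquarefull (n0 + 1 + t)) with hT
  have hsub : {n : ℕ | x < (n : ℝ) ∧ (n : ℝ) ≤ x + y ∧ 0 < n ∧ IsSquarefull n} ⊆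
      ((T.image (fun t => n0 + 1 + t) : Finset ℕ) : Set ℕ) := by
    rintro n ⟨h1, h2, h3, h4⟩
    have h5 : n0 < n := by exact_mod_cast lt_of_le_of_lt hn0x h1
    rw [mem_coe, mem_image]
    refine ⟨n - (n0 + 1), ?_, by omega⟩
    rw [hT, mem_filter, mem_range]
    refine ⟨?_, ?_⟩
    · rw [Nat.lt_succ_iff, hY]
      apply Nat.le_floor
      rw [Nat.cast_sub (by omega)]; push_cast; linarith
    · rw [Nat.add_sub_cancel' (by omega)]; exact h4
  have hcard : {n : ℕ | x < (n : ℝ) ∧ (n : ℝ) ≤ x + y ∧ 0 < n ∧ IsSquarefull n}.ncard ≤ #T := by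
    refine (Set.ncard_le_ncard hsub (finite_toSet _)).trans ?_
    rw [Set.ncard_coe_finset]
    exact card_image_le
  have hcard' : ({n : ℕ | x < (n : ℝ) ∧ (n : ℝ) ≤ x + y ∧ 0 < n ∧ IsSquarefull n}.ncard : ℝ) ≤ #T := by
    exact_mod_cast hcard
  have hl0 : 0 ≤ Real.log (y + 1) := Real.log_nonneg (by linarith)
  refine (mul_le_mul_of_nonneg_right hcard' (by positivity)).trans ?_
  by_cases hxX : x < X
  · have h1 : (#T : ℝ) ≤ 2 * y := by
      have : #T ≤ Y + 1 := (card_filter_le _ _).trans (card_range _).le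
      have : (#T : ℝ) ≤ Y + 1 := by exact_mod_cast this
      linarith
    have h2 : Real.log (y + 1) ≤ X := by
      have := Real.log_le_sub_one_of_pos (by linarith : 0 < y + 1)
      linarith
    calc (#T : ℝ) * Real.log (y + 1) ^ 2 ≤ (2 * y) * X ^ 2 :=
          mul_le_mul h1 (pow_le_pow_left₀ hl0 h2 2) (by positivity) (by linarith)
      _ ≤ _ := by nlinarith [mul_pos hC (by linarith : 0 < y)]
  rw [not_lt] at hxX
  obtain ⟨m, hm1, hm8, hml⟩ := log_cmp y hy
  have hmr : (1:ℝ) ≤ m := by exact_mod_cast hm1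
  have hblock : ∀ j : ℕ, (#(T.filter (fun t => t / m = j)) : ℝ) * Real.log (m + 1) ^ 2 ≤ C * m := by
    intro j
    set Tj := T.filter (fun t => t / m = j) with hTj
    have hdm : ∀ t ∈ Tj, t = j * m + t % m := by
      intro t ht
      have := (mem_filter.1 ht).2
      rw [← this, mul_comm]; exact (Nat.div_add_mod t m).symm
    have hsq : ∀ t ∈ Tj, IsSquarefull (n0 + 1 + t) := fun t ht =>
      (mem_filter.1 (mem_filter.1 ht).1).2
    have himg : #(Tj.image (fun t => t % m)) = #Tj := by
      apply card_image_of_injOn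
      intro s hs t ht hst
      have e1 := hdm s hs
      have e2 := hdm t ht
      simp only at hst
      omega
    have noap : ∀ t d : ℕ, 0 < d → d < m → IsSquarefull (n0 + 1 + t) →
        IsSquarefull (n0 + 1 + t + d) → IsSquarefull (n0 + 1 + t + 2 * d) → False := by
      intro t d hd hdm h0 h1 h2
      have hd8 : d ^ 8 ≤ n0 + 1 + t := by
        have : ((d ^ 8 : ℕ) : ℝ) ≤ ((n0 + 1 + t : ℕ) : ℝ) := by
          push_cast
          calc (d:ℝ) ^ 8 ≤ (m:ℝ) ^ 8 := pow_le_pow_left₀ (by positivity) (by exact_mod_cast hdm.le) 8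
            _ ≤ y := hm8
            _ ≤ _ := by linarith [(Nat.cast_nonneg t : (0:ℝ) ≤ t)]
        exact_mod_cast this
      have := hX (n0 + 1 + t) d (by omega) hd hd8 h0 h1 h2
      push_cast at this
      linarith [(Nat.cast_nonneg t : (0:ℝ) ≤ t)]
    have := hroth m (Tj.image (fun t => t % m)) hm1 (by
      intro s hs
      obtain ⟨t, ht, rfl⟩ := mem_image.1 hs
      exact mem_range.2 (Nat.mod_lt _ hm1)) (by
      intro a ha b hb c hc habc
      obtain ⟨a', ha', rfl⟩ := mem_image.1 ha
      obtain ⟨b', hb', rfl⟩ := mem_image.1 hb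
      obtain ⟨c', hc', rfl⟩ := mem_image.1 hc
      have ea := hdm a' ha'
      have eb := hdm b' hb'
      have ec := hdm c' hc'
      have la := Nat.mod_lt a' hm1
      have lb := Nat.mod_lt b' hm1
      have lc := Nat.mod_lt c' hm1
      have sa := hsq a' ha'
      have sb := hsq b' hb'
      have sc := hsq c' hc'
      rcases lt_trichotomy a' b' with hab | hab | hab
      · exfalso
        obtain ⟨d, hd⟩ : ∃ d, b' = a' + d := ⟨b' - a', by omega⟩
        apply noap a' d (by omega) (by omega) sa
        · convert sb using 1; omega
        · convert sc using 1; omega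
      · rw [hab]
      · exfalso
        obtain ⟨d, hd⟩ : ∃ d, b' = c' + d := ⟨b' - c', by omega⟩
        apply noap c' d (by omega) (by omega) sc
        · convert sb using 1; omega
        · convert sa using 1; omega)
    rw [himg] at this
    exact this
  have hsum : (#T : ℝ) = ∑ j ∈ range (Y / m + 1), (#(T.filter (fun t => t / m = j)) : ℝ) := by
    rw [← Nat.cast_sum]
    congr 1
    apply card_eq_sum_card_fiberwise
    intro t ht
    have := mem_range.1 (mem_filter.1 ht).1
    rw [mem_coe, mem_range]
    exact Nat.lt_succ_of_le (Nat.div_le_div_right (by omega))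
  have hlm : (#T : ℝ) * Real.log (m + 1) ^ 2 ≤ 2 * C * y := by
    rw [hsum, sum_mul]
    calc _ ≤ ∑ j ∈ range (Y / m + 1), C * (m:ℝ) := sum_le_sum fun j _ => hblock j
      _ = C * (((Y / m : ℕ) : ℝ) * m + m) := by
          rw [sum_const, card_range, nsmul_eq_mul]; push_cast; ring
      _ ≤ C * (y + y) := by
          have h1 : ((Y / m : ℕ) : ℝ) * m ≤ Y := by exact_mod_cast Nat.div_mul_le_self Y m
          have h2 : (m:ℝ) ≤ y := le_trans (le_self_pow₀ hmr (by norm_num)) hm8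
          gcongr
          linarith
      _ = _ := by ring
  calc (#T : ℝ) * Real.log (y + 1) ^ 2 ≤ #T * (9 * Real.log (m + 1)) ^ 2 := by gcongr
    _ = 81 * (#T * Real.log (m + 1) ^ 2) := by ring
    _ ≤ 81 * (2 * C * y) := by gcongr
    _ ≤ _ := by nlinarith [mul_nonneg (sq_nonneg X) (by linarith : 0 ≤ y)]
end KM

/-- Assuming the abc-conjecture, there exist absolute constants `c > 0` and `C > 0`
such that for all real `x ≥ 1` and `1 ≤ y ≤ x`, the number of squarefull integers
in `(x, x + y]` is at most `C · y / (log (y + 1))^(1+c)`. -/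
theorem squarefull_short_interval_log_power_saving_of_abc (habc : ABCConjecture) :
    ∃ c C : ℝ, 0 < c ∧ 0 < C ∧ ∀ x y : ℝ, 1 ≤ x → 1 ≤ y → y ≤ x →
      (({n : ℕ | x < (n : ℝ) ∧ (n : ℝ) ≤ x + y ∧ 0 < n ∧ IsSquarefull n}.ncard : ℝ))
        ≤ C * y / Real.log (y + 1) ^ (1 + c) := by
  obtain ⟨C, hC, h⟩ := KM.main habc
  refine ⟨1, C, one_pos, hC, fun x y hx hy hyx => ?_⟩
  have hl : 0 < Real.log (y + 1) := Real.log_pos (by linarith)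
  have e : Real.log (y + 1) ^ ((1:ℝ) + 1) = Real.log (y + 1) ^ 2 := by
    rw [← Real.rpow_natCast]; norm_num
  rw [e, le_div_iff₀ (by positivity)]
  exact h x y hx hy hyx
end

section
/- Assume the abc-conjecture. Then for every integer k ≥ 3 and every real ε > 0 there exist constants c_ε > 0 and C > 0 such that for all real x ≥ C, the interval (x, x + c_ε · x^{1 − (2+ε)/k}] contains at most one k-full integer. -/
/-- A positive integer `n` is `k`-full if every prime dividing `n` does so to at
least the `k`-th power. -/
def IsKFull (k n : ℕ) : Prop := ∀ p : ℕ, p.Prime → p ∣ n → p ^ k ∣ n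

theorem natRadical_mul_le (a b : ℕ) (ha : a ≠ 0) (hb : b ≠ 0) :
    natRadical (a * b) ≤ natRadical a * natRadical b := by
  unfold natRadical
  rw [Nat.primeFactors_mul ha hb, ← Finset.prod_union_inter]
  apply Nat.le_mul_of_pos_right
  apply Finset.prod_pos
  intro p hp
  exact (Nat.prime_of_mem_primeFactors (Finset.mem_inter.mp hp).1).pos

theorem natRadical_le_of_dvd (a b : ℕ) (hb : b ≠ 0) (h : a ∣ b) :
    natRadical a ≤ natRadical b := by
  unfold natRadical
  apply Finset.prod_le_prod_of_subset_of_one_le' (Nat.primeFactors_mono h hb)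
  intro p hp _
  exact (Nat.prime_of_mem_primeFactors hp).one_le

theorem natRadical_le_self (a : ℕ) (ha : a ≠ 0) : natRadical a ≤ a :=
  Nat.le_of_dvd (Nat.pos_of_ne_zero ha) (Nat.prod_primeFactors_dvd a)

theorem natRadical_pow_le (k n : ℕ) (hn : n ≠ 0) (h : IsKFull k n) :
    natRadical n ^ k ≤ n := by
  apply Nat.le_of_dvd (Nat.pos_of_ne_zero hn)
  unfold natRadical
  rw [← Finset.prod_pow]
  apply Finset.prod_dvd_of_isRelPrime
  · intro p hp q hq hpq
    exact Nat.coprime_iff_isRelPrime.mp <| Nat.Coprime.pow _ _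
      ((Nat.coprime_primes (Nat.prime_of_mem_primeFactors hp)
        (Nat.prime_of_mem_primeFactors hq)).mpr hpq)
  · intro p hp
    exact h p (Nat.prime_of_mem_primeFactors hp) (Nat.dvd_of_mem_primeFactors hp)

theorem natRadical_le_rpow (k n : ℕ) (hk : 0 < k) (hn : n ≠ 0) (h : IsKFull k n) :
    (natRadical n : ℝ) ≤ (n : ℝ) ^ (1 / (k : ℝ)) := by
  rw [one_div, Real.le_rpow_inv_iff_of_pos (by positivity) (by positivity) (by positivity),
    Real.rpow_natCast]
  exact_mod_cast natRadical_pow_le k n hn h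

theorem key_bound (k n m : ℕ) (hk : 0 < k) (hn : 0 < n) (hnm : n < m)
    (fn : IsKFull k n) (fm : IsKFull k m) (δ K : ℝ) (hδ : 0 < δ) (hK : 0 < K)
    (habc : ∀ a b c : ℕ,
    0 < a → 0 < b → 0 < c → Nat.Coprime a b → a + b = c →
    (c : ℝ) ≤ K * (natRadical (a * b * c) : ℝ) ^ (1 + δ)) :
    (m : ℝ) ≤ K * (((m : ℝ) - n) * (m : ℝ) ^ (2 / (k : ℝ))) ^ (1 + δ) := by
  obtain ⟨g, b, c, hg, hco, hb, hc⟩ := Nat.exists_coprime' (m := n) (n := m) (Nat.gcd_pos_of_pos_left _ hn)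
  have hb0 : 0 < b := by
    rcases Nat.eq_zero_or_pos b with h | h
    · simp [h] at hb; omega
    · exact h
  have hbc : b < c := by
    by_contra hcon
    have : c * g ≤ b * g := Nat.mul_le_mul_right g (by omega)
    omega
  obtain ⟨a, rfl⟩ := Nat.exists_eq_add_of_lt hbc
  have hab : Nat.Coprime (a + 1) b := by
    have : Nat.Coprime b (b + (a + 1)) := hco
    rw [Nat.coprime_self_add_right] at this
    exact this.symm
  have H := habc (a + 1) b (b + a + 1) (by omega) hb0 (by omega) hab (by omega)
  have hm0 : 0 < m := by omega
  have h1 : natRadical ((a + 1) * b * (b + a + 1)) ≤ (a + 1) * natRadical n * natRadical m := by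
    refine (natRadical_mul_le _ _ (by positivity) (by omega)).trans ?_
    refine Nat.mul_le_mul ((natRadical_mul_le _ _ (by omega) (by omega)).trans ?_) ?_
    · exact Nat.mul_le_mul (natRadical_le_self _ (by omega))
        (natRadical_le_of_dvd _ _ (by omega) ⟨g, hb⟩)
    · exact natRadical_le_of_dvd _ _ (by omega) ⟨g, hc⟩
  have hmR : (0 : ℝ) < m := by exact_mod_cast hm0
  have hgR : (1 : ℝ) ≤ g := by exact_mod_cast hg
  have h2 : (natRadical ((a + 1) * b * (b + a + 1)) : ℝ) ≤
      ((a : ℝ) + 1) * (m : ℝ) ^ (2 / (k : ℝ)) := by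
    have e : (m : ℝ) ^ (2 / (k : ℝ)) = (m : ℝ) ^ (1 / (k : ℝ)) * (m : ℝ) ^ (1 / (k : ℝ)) := by
      rw [← Real.rpow_add hmR]; congr 1; ring
    have r1 := natRadical_le_rpow k n hk (by omega) fn
    have r2 := natRadical_le_rpow k m hk (by omega) fm
    have r3 : (n : ℝ) ^ (1 / (k : ℝ)) ≤ (m : ℝ) ^ (1 / (k : ℝ)) :=
      Real.rpow_le_rpow (by positivity) (by exact_mod_cast hnm.le) (by positivity)
    have h1R : (natRadical ((a + 1) * b * (b + a + 1)) : ℝ) ≤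
      ((a : ℝ) + 1) * natRadical n * natRadical m := by exact_mod_cast h1
    refine h1R.trans ?_
    rw [e, ← mul_assoc]
    have r4 := r1.trans r3
    gcongr
  have hd : (m : ℝ) - n = g * ((a : ℝ) + 1) := by
    rw [hb, hc]; push_cast; ring
  have hmg : (m : ℝ) = g * ((b + a + 1 : ℕ) : ℝ) := by
    rw [hc]; push_cast; ring
  rw [hd, mul_assoc, Real.mul_rpow (by positivity) (by positivity)]
  have hg1 : (g : ℝ) ≤ (g : ℝ) ^ (1 + δ) := by
    simpa using Real.rpow_le_rpow_of_exponent_le hgR (show (1 : ℝ) ≤ 1 + δ by linarith)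
  calc (m : ℝ) = g * ((b + a + 1 : ℕ) : ℝ) := hmg
    _ ≤ (g : ℝ) ^ (1 + δ) * (K * (((a : ℝ) + 1) * (m : ℝ) ^ (2 / (k : ℝ))) ^ (1 + δ)) := by
        refine mul_le_mul hg1 (H.trans ?_) (by positivity) (by positivity)
        gcongr
    _ = _ := by ring

theorem kfull_gap_of_abc (habc : ABCConjecture) (k : ℕ) (hk : 3 ≤ k)
    (ε : ℝ) (hε : 0 < ε) :
    ∃ cε C : ℝ, 0 < cε ∧ 0 < C ∧ ∀ x : ℝ, C ≤ x →
      ({n : ℕ | x < (n : ℝ) ∧ (n : ℝ) ≤ x + cε * x ^ (1 - (2 + ε) / (k : ℝ)) ∧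
        0 < n ∧ IsKFull k n}.ncard ≤ 1) := by
  have hkR : (0 : ℝ) < k := by exact_mod_cast (by omega : 0 < k)
  obtain ⟨K, hK, H⟩ := habc (ε / k) (by positivity)
  set δ := ε / (k : ℝ) with hδ
  have hδ0 : 0 < δ := by positivity
  set θ := 1 - (2 + ε) / (k : ℝ) with hθ
  set c : ℝ := min (1 / 2) (1 / (2 * K)) with hc
  have hc0 : 0 < c := by positivity
  have hc1 : c ≤ 1 / 2 := min_le_left _ _
  have hcK : K * c ≤ 1 / 2 := by
    have : c ≤ 1 / (2 * K) := min_le_right _ _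
    calc K * c ≤ K * (1 / (2 * K)) := by gcongr
      _ = 1 / 2 := by field_simp
  refine ⟨c, 1, hc0, one_pos, fun x hx => ?_⟩
  have main : ∀ n m : ℕ, n < m → x < (n : ℝ) → (m : ℝ) ≤ x + c * x ^ θ → 0 < n →
      IsKFull k n → IsKFull k m → False := by
    intro n m hnm hxn hmx hn fn fm
    have B := key_bound k n m (by omega) hn hnm fn fm δ K hδ0 hK H
    have hnmR : (n : ℝ) + 1 ≤ m := by exact_mod_cast hnm
    have hm1 : (1 : ℝ) ≤ m := by linarith
    have hm0 : (0 : ℝ) < m := by linarith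
    rcases le_or_gt θ 0 with h | h
    · have : x ^ θ ≤ 1 := Real.rpow_le_one_of_one_le_of_nonpos hx h
      nlinarith
    · have h1 : x ^ θ ≤ (m : ℝ) ^ θ := Real.rpow_le_rpow (by linarith) (by linarith) h.le
      have h2 : (m : ℝ) - n ≤ c * (m : ℝ) ^ θ := by nlinarith
      have h3 : ((m : ℝ) - n) * (m : ℝ) ^ (2 / (k : ℝ)) ≤ c * (m : ℝ) ^ (1 - δ) := by
        have e : (m : ℝ) ^ (1 - δ) = (m : ℝ) ^ θ * (m : ℝ) ^ (2 / (k : ℝ)) := by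
          rw [← Real.rpow_add hm0]; congr 1; rw [hθ, hδ]; ring
        rw [e, ← mul_assoc]
        gcongr
      have h4 : (((m : ℝ) - n) * (m : ℝ) ^ (2 / (k : ℝ))) ^ (1 + δ) ≤ c * m := by
        calc _ ≤ (c * (m : ℝ) ^ (1 - δ)) ^ (1 + δ) :=
              Real.rpow_le_rpow (mul_nonneg (by linarith) (by positivity)) h3 (by positivity)
          _ = c ^ (1 + δ) * (m : ℝ) ^ ((1 - δ) * (1 + δ)) := by
              rw [Real.mul_rpow hc0.le (by positivity), ← Real.rpow_mul hm0.le]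
          _ ≤ c * m := by
              refine mul_le_mul ?_ ?_ (by positivity) hc0.le
              · simpa using Real.rpow_le_rpow_of_exponent_ge hc0 (by linarith)
                  (show (1 : ℝ) ≤ 1 + δ by linarith)
              · simpa using Real.rpow_le_rpow_of_exponent_le hm1
                  (show (1 - δ) * (1 + δ) ≤ 1 by nlinarith)
      have h5 : (m : ℝ) ≤ K * (c * m) := B.trans (by gcongr)
      nlinarith
  suffices hs : Set.Subsingleton _ from (Set.ncard_le_one hs.finite).mpr fun a ha b hb => hs ha hb
  rintro n ⟨h1, h2, h3, h4⟩ m ⟨g1, g2, g3, g4⟩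
  rcases lt_trichotomy n m with h | h | h
  · exact (main n m h h1 g2 h3 h4 g4).elim
  · exact h
  · exact (main m n h g1 h2 g3 g4 h4).elim
end
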